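/- arXiv:2208.13890 — 2 statements merged into one kernel-verified Lean document; each statement's English description precedes it below -/
import Mathlib

section
/- Every Peano space (compact, connected, locally connected metric space) is homeomorphic to a compact length space (i.e., a compact metric space in which the distance between any two points equals the infimum of lengths of paths joining them). -/
open Metric Set

/-- Length of a path, as the total variation of the parametrization. -/
noncomputable def pathLength {X : Type} [MetricSpace X] {x y : X} (γ : Path x y) : ENNReal :=
  eVariationOn γ Set.univ

/-- A length space: the distance between two points is the infimum of lengths of
paths joining them. -/
def IsLengthSpace (X : Type) [MetricSpace X] : Prop :=
  ∀ x y : X, edist x y = ⨅ γ : Path x y, pathLength γ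

/-!
The idea, which goes back to Bing, is to measure distances with chains of small weighted cells.

Cut the space into finitely many cells and refine each cell `P` into border cells and core cells,
where the closures of the core cells lie inside `P` and have a connected union. Two points of the
closure of `P` are joined by a chain with at most two border cells. If the border cells weigh a bit
less than half as much as `P` and the core cells next to nothing, chains do not become more
expensive when the cells are refined, while the weights tend to `0`. Hence the infimum of the costs
of chains is a pseudometric, and chains of almost minimal cost are nearly geodesic; in a compact
space a limit of them is a path.

Chains must not become too cheap either. Call a continuous function a probe if it varies less on
each cell than the weight of the cell: it bounds the costs of chains from below. A function which
varies by at most `r` on `P` can be replaced by one which is constant on the core of `P` and varies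
by about `r / 2` on the border cells, so probes survive refinement. Each stage adds a multiple of
the distance from some point as a new probe, and the chain metric separates points.

The cells are grown from disjoint connected seeds by attaching small connected sets. Growing along
the connected monochromatic sets of a coloring keeps this under control if the number of colors
times the size of these sets is small. Such colorings exist once the space is embedded into a box
whose sides shrink geometrically.
-/

lemma exists_pos_forall_le_of_finite {ι : Type*} {s : Set ι} (hs : s.Finite) {f : ι → ℝ}
    (hf : ∀ i ∈ s, 0 < f i) : ∃ r > 0, ∀ i ∈ s, r ≤ f i := by
  have h : ∀ᶠ r in nhdsWithin (0 : ℝ) (Ioi 0), 0 < r ∧ ∀ i ∈ s, r ≤ f i :=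
    Filter.Eventually.and self_mem_nhdsWithin <| (Filter.eventually_all_finite hs).2 fun i hi =>
      Filter.mem_of_superset (Ioc_mem_nhdsGT (hf i hi)) fun _ hr => hr.2
  exact h.exists

section Fingers

open Topology

variable {X : Type*} [TopologicalSpace X]

lemma mem_closure_sUnion_iff {𝒬 : Set (Set X)} (h : 𝒬.Finite) {x : X} :
    x ∈ closure (⋃₀ 𝒬) ↔ ∃ Q ∈ 𝒬, x ∈ closure Q := by
  simp only [sUnion_eq_biUnion, h.closure_biUnion, mem_iUnion, exists_prop]

lemma closure_connectedComponentIn_inter_subset (R : Set X) (x : X) :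
    closure (connectedComponentIn R x) ∩ R ⊆ connectedComponentIn R x := by
  by_cases hx : x ∈ R
  · refine IsPreconnected.subset_connectedComponentIn ?_
      ⟨subset_closure (mem_connectedComponentIn hx), hx⟩ inter_subset_right
    exact isPreconnected_connectedComponentIn.subset_closure
      (subset_inter subset_closure (connectedComponentIn_subset R x)) inter_subset_left
  · simp [connectedComponentIn_eq_empty hx]

lemma exists_isOpen_isConnected_closure_subset [RegularSpace X] [LocallyConnectedSpace X]
    {O : Set X} {y : X} (hO : O ∈ 𝓝 y) :
    ∃ N, IsOpen N ∧ IsConnected N ∧ y ∈ N ∧ closure N ⊆ O := by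
  obtain ⟨K, hK, hKc, hKO⟩ := exists_mem_nhds_isClosed_subset hO
  obtain ⟨N, ⟨hNo, hyN, hNc⟩, hNK⟩ :=
    (LocallyConnectedSpace.open_connected_basis y).mem_iff.1 hK
  exact ⟨N, hNo, hNc, hyN, (closure_minimal hNK hKc).trans hKO⟩

/-- A finger of `y` towards the member `A j` of a family: a connected open set around `y`, well
inside `V`, which reaches `A j` and stays away from the other members. Unions with fingers keep
the closures of the members of a family disjoint. -/
structure IsFinger {J : Type*} (A : J → Set X) (V : Set X) (y : X) (j : J) (Φ : Set X) :
    Prop where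
  isOpen : IsOpen Φ
  isConnected : IsConnected Φ
  closure_subset : closure Φ ⊆ V
  mem : y ∈ Φ
  inter_nonempty : (Φ ∩ A j).Nonempty
  disjoint : ∀ i ≠ j, Disjoint (closure Φ) (closure (A i))

variable [RegularSpace X] [LocallyConnectedSpace X] {J : Type*} [Finite J] {A : J → Set X}
  {V : Set X} {y : X}

lemma exists_isFinger_of_mem_closure
    (hd : Pairwise fun i j => Disjoint (closure (A i)) (closure (A j))) (hV : IsOpen V)
    (hy : y ∈ V) {j : J} (hyj : y ∈ closure (A j)) : ∃ Φ, IsFinger A V y j Φ := by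
  have hO : IsOpen (V ∩ ⋂ i : {i // i ≠ j}, (closure (A i))ᶜ) :=
    hV.inter (isOpen_iInter_of_finite fun i => isClosed_closure.isOpen_compl)
  have hyO : y ∈ V ∩ ⋂ i : {i // i ≠ j}, (closure (A i))ᶜ :=
    ⟨hy, mem_iInter.2 fun i => disjoint_right.1 (hd i.2) hyj⟩
  obtain ⟨N, hNo, hNc, hyN, hNO⟩ := exists_isOpen_isConnected_closure_subset (hO.mem_nhds hyO)
  exact ⟨N, hNo, hNc, hNO.trans inter_subset_left, hyN, mem_closure_iff.1 hyj N hNo hyN,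
    fun i hi => disjoint_left.2 fun z hz => mem_iInter.1 (hNO hz).2 ⟨i, hi⟩⟩

lemma exists_isFinger (hd : Pairwise fun i j => Disjoint (closure (A i)) (closure (A j)))
    (hV : IsOpen V) (hVc : IsPreconnected V) (hVA : (V ∩ ⋃ i, A i).Nonempty) (hy : y ∈ V) :
    ∃ j Φ, IsFinger A V y j Φ := by
  have hYo : IsOpen {y | ∃ j Φ, IsFinger A V y j Φ} := by
    refine isOpen_iff_forall_mem_open.2 ?_
    rintro z ⟨j, Φ, hΦ⟩
    exact ⟨Φ, fun w hw => ⟨j, Φ, { hΦ with mem := hw }⟩, hΦ.isOpen, hΦ.mem⟩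
  refine hVc.subset_of_closure_inter_subset hYo ?_ ?_ hy
  · obtain ⟨z, hzV, hz⟩ := hVA
    obtain ⟨i, hzi⟩ := mem_iUnion.1 hz
    exact ⟨z, hzV, i, exists_isFinger_of_mem_closure hd hV hzV (subset_closure hzi)⟩
  · rintro z ⟨hzY, hzV⟩
    by_cases hz : ∃ i, z ∈ closure (A i)
    · exact hz.imp fun i hzi => exists_isFinger_of_mem_closure hd hV hzV hzi
    · -- A small connected neighborhood of `z` can be joined to the finger of a point nearby.
      push Not at hz
      have hO : IsOpen (V ∩ ⋂ i, (closure (A i))ᶜ) :=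
        hV.inter (isOpen_iInter_of_finite fun i => isClosed_closure.isOpen_compl)
      obtain ⟨N, hNo, hNc, hzN, hNO⟩ := exists_isOpen_isConnected_closure_subset
        (hO.mem_nhds ⟨hzV, mem_iInter.2 hz⟩)
      obtain ⟨w, hwN, j, Φ, hΦ⟩ := mem_closure_iff.1 hzY N hNo hzN
      refine ⟨j, N ∪ Φ, hNo.union hΦ.isOpen, hNc.union ⟨w, hwN, hΦ.mem⟩ hΦ.isConnected, ?_,
        Or.inl hzN, hΦ.inter_nonempty.mono (inter_subset_inter_left _ subset_union_right), ?_⟩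
      · rw [closure_union]
        exact union_subset (hNO.trans inter_subset_left) hΦ.closure_subset
      · intro i hi
        rw [closure_union]
        exact (disjoint_left.2 fun w hw => mem_iInter.1 (hNO hw).2 i).union_left
          (hΦ.disjoint i hi)

end Fingers

section SmallSets

variable {X : Type*} [PseudoMetricSpace X] {s t : Set X} {x : X} {r r' : ℝ}

/-- The diameter of `s` is at most `r`, in a form which does not rely on the junk value `0` of
`Metric.diam` on unbounded sets. -/
def DiamLE (s : Set X) (r : ℝ) : Prop :=
  ∀ x ∈ s, ∀ y ∈ s, dist x y ≤ r

/-- The oscillation of the function `f` on `s` is at most `r`. -/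
def OscLE {X : Type*} (f : X → ℝ) (s : Set X) (r : ℝ) : Prop :=
  ∀ x ∈ s, ∀ y ∈ s, |f x - f y| ≤ r

lemma DiamLE.mono (h : DiamLE t r) (hst : s ⊆ t) : DiamLE s r :=
  fun x hx y hy => h x (hst hx) y (hst hy)

lemma DiamLE.mono_right (h : DiamLE s r) (hr : r ≤ r') : DiamLE s r' :=
  fun x hx y hy => (h x hx y hy).trans hr

lemma OscLE.mono_right {X : Type*} {f : X → ℝ} {s : Set X} (h : OscLE f s r) (hr : r ≤ r') :
    OscLE f s r' :=
  fun x hx y hy => (h x hx y hy).trans hr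

lemma diamLE_singleton (x : X) (hr : 0 ≤ r) : DiamLE {x} r := by
  rintro _ rfl _ rfl
  simpa

lemma DiamLE.union (hs : DiamLE s r) (ht : DiamLE t r') (hxs : x ∈ s) (hxt : x ∈ t) :
    DiamLE (s ∪ t) (r + r') := by
  have hr : 0 ≤ r := dist_nonneg.trans (hs x hxs x hxs)
  have hr' : 0 ≤ r' := dist_nonneg.trans (ht x hxt x hxt)
  rintro p (hp | hp) q (hq | hq)
  · linarith [hs p hp q hq]
  · linarith [hs p hp x hxs, ht x hxt q hq, dist_triangle p x q]
  · linarith [ht p hp x hxt, hs x hxs q hq, dist_triangle p x q]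
  · linarith [ht p hp q hq]

lemma OscLE.closure {X : Type*} [TopologicalSpace X] {s : Set X} {f : X → ℝ}
    (hf : Continuous f) (h : OscLE f s r) : OscLE f (closure s) r :=
  fun x hx y hy => isClosed_Iic.closure_subset <|
    map_mem_closure₂ (f := fun x y => |f x - f y|) (by fun_prop) hx hy h

lemma DiamLE.closure (h : DiamLE s r) : DiamLE (closure s) r :=
  fun x hx y hy => isClosed_Iic.closure_subset <|
    map_mem_closure₂ (f := fun x y => dist x y) (by fun_prop) hx hy h

lemma exists_isOpen_isConnected_diamLE [LocallyConnectedSpace X] (hs : s ∈ nhds x) (hr : 0 < r) :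
    ∃ N, IsOpen N ∧ IsConnected N ∧ x ∈ N ∧ closure N ⊆ s ∧ DiamLE N r := by
  obtain ⟨N, hNo, hNc, hxN, hN⟩ := exists_isOpen_isConnected_closure_subset
    (Filter.inter_mem hs (ball_mem_nhds x (half_pos hr)))
  refine ⟨N, hNo, hNc, hxN, hN.trans inter_subset_left, fun p hp q hq => ?_⟩
  have hpx := mem_ball.1 (hN (subset_closure hp)).2
  have hqx := mem_ball.1 (hN (subset_closure hq)).2
  linarith [dist_triangle_right p q x]

end SmallSets

section Attached

variable {X : Type*} {O O' A A' A'' : Set X} {δ δ' : ℝ}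

/-- `A'` arises from `A` by attaching preconnected subsets of `O`. -/
def AttachedIn [TopologicalSpace X] (O A A' : Set X) : Prop :=
  A ⊆ A' ∧ ∀ x ∈ A', x ∈ A ∨ ∃ H, IsPreconnected H ∧ H ⊆ A' ∧ H ⊆ O ∧ x ∈ H ∧ (H ∩ A).Nonempty

/-- `A'` arises from `A` by attaching preconnected subsets of diameter at most `δ`. -/
def AttachedWithin [PseudoMetricSpace X] (δ : ℝ) (A A' : Set X) : Prop :=
  A ⊆ A' ∧ ∀ x ∈ A', ∃ H, IsPreconnected H ∧ H ⊆ A' ∧ DiamLE H δ ∧ x ∈ H ∧ (H ∩ A).Nonempty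

namespace AttachedIn

variable [TopologicalSpace X]

lemma refl (O A : Set X) : AttachedIn O A A :=
  ⟨Subset.rfl, fun _ hx => Or.inl hx⟩

lemma mono (h : AttachedIn O A A') (hO : O ⊆ O') : AttachedIn O' A A' := by
  refine ⟨h.1, fun x hx => (h.2 x hx).imp_right ?_⟩
  rintro ⟨H, hHc, hHA', hHO, hH⟩
  exact ⟨H, hHc, hHA', hHO.trans hO, hH⟩

lemma union {Φ : Set X} (hΦ : IsPreconnected Φ) (hΦO : Φ ⊆ O) (hm : (Φ ∩ A).Nonempty) :
    AttachedIn O A (A ∪ Φ) :=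
  ⟨subset_union_left, fun _ hx => hx.imp_right fun hxΦ =>
    ⟨Φ, hΦ, subset_union_right, hΦO, hxΦ, hm⟩⟩

lemma trans (h : AttachedIn O A A') (h' : AttachedIn O A' A'') : AttachedIn O A A'' := by
  refine ⟨h.1.trans h'.1, fun x hx => ?_⟩
  have hA' : ∀ z ∈ A', z ∈ A ∨
      ∃ H, IsPreconnected H ∧ H ⊆ A'' ∧ H ⊆ O ∧ z ∈ H ∧ (H ∩ A).Nonempty := by
    refine fun z hz => (h.2 z hz).imp_right ?_
    rintro ⟨H, hHc, hHA', hH⟩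
    exact ⟨H, hHc, hHA'.trans h'.1, hH⟩
  rcases h'.2 x hx with hx | ⟨H, hHc, hHA, hHO, hxH, z, hzH, hz⟩
  · exact hA' x hx
  right
  rcases hA' z hz with hzA | ⟨K, hKc, hKA, hKO, hzK, hm⟩
  · exact ⟨H, hHc, hHA, hHO, hxH, z, hzH, hzA⟩
  · exact ⟨H ∪ K, hHc.union z hzH hzK hKc, union_subset hHA hKA, union_subset hHO hKO, Or.inl hxH,
      hm.mono (inter_subset_inter_left _ subset_union_right)⟩

end AttachedIn

namespace AttachedWithin

variable [PseudoMetricSpace X]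

lemma refl (A : Set X) (hδ : 0 ≤ δ) : AttachedWithin δ A A :=
  ⟨Subset.rfl, fun x hx => ⟨{x}, isPreconnected_singleton, singleton_subset_iff.2 hx,
    diamLE_singleton x hδ, rfl, x, rfl, hx⟩⟩

lemma mono (h : AttachedWithin δ A A') (hδ : δ ≤ δ') : AttachedWithin δ' A A' := by
  refine ⟨h.1, fun x hx => ?_⟩
  obtain ⟨H, hHc, hHA', hHδ, hH⟩ := h.2 x hx
  exact ⟨H, hHc, hHA', hHδ.mono_right hδ, hH⟩

lemma trans (h : AttachedWithin δ A A') (h' : AttachedWithin δ' A' A'') :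
    AttachedWithin (δ + δ') A A'' := by
  refine ⟨h.1.trans h'.1, fun x hx => ?_⟩
  obtain ⟨H, hHc, hHA'', hHδ', hxH, z, hzH, hz⟩ := h'.2 x hx
  obtain ⟨K, hKc, hKA', hKδ, hzK, hm⟩ := h.2 z hz
  exact ⟨K ∪ H, hKc.union z hzK hzH hHc, union_subset (hKA'.trans h'.1) hHA'',
    hKδ.union hHδ' hzK hzH, Or.inr hxH, hm.mono (inter_subset_inter_left _ subset_union_left)⟩

lemma diamLE {r : ℝ} (h : AttachedWithin δ A A') (hA : DiamLE A r) :
    DiamLE A' (r + 2 * δ) := by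
  intro x hx y hy
  obtain ⟨H, -, -, hH, hxH, p, hpH, hp⟩ := h.2 x hx
  obtain ⟨K, -, -, hK, hyK, q, hqK, hq⟩ := h.2 y hy
  have hxp := hH x hxH p hpH
  have hqy := hK q hqK y hyK
  linarith [dist_triangle4 x p q y, hA p hp q hq]

lemma closure_subset_cthickening (h : AttachedWithin δ A A') :
    closure A' ⊆ cthickening δ (closure A) := by
  refine closure_minimal (fun x hx => ?_) isClosed_cthickening
  obtain ⟨H, -, -, hH, hxH, p, hpH, hp⟩ := h.2 x hx
  exact mem_cthickening_of_dist_le x p δ _ (subset_closure hp) (hH x hxH p hpH)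

end AttachedWithin

lemma AttachedIn.attachedWithin [PseudoMetricSpace X] (h : AttachedIn O A A') (hδ : 0 ≤ δ)
    (hO : ∀ H ⊆ O, IsPreconnected H → DiamLE H δ) : AttachedWithin δ A A' := by
  refine ⟨h.1, fun x hx => ?_⟩
  rcases h.2 x hx with hx | ⟨H, hHc, hHA', hHO, hH⟩
  · exact ⟨{x}, isPreconnected_singleton, singleton_subset_iff.2 (h.1 hx), diamLE_singleton x hδ,
      rfl, x, rfl, hx⟩
  · exact ⟨H, hHc, hHA', hO H hHO hHc, hH⟩

lemma exists_isOpen_isConnected_attachedWithin [PseudoMetricSpace X] [LocallyConnectedSpace X]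
    (hA : IsConnected A) (hδ : 0 < δ) :
    ∃ A', IsOpen A' ∧ IsConnected A' ∧ closure A ⊆ A' ∧ AttachedWithin δ A A' := by
  choose N hNo hNc hzN _ hNδ using fun z : X =>
    exists_isOpen_isConnected_diamLE (Filter.univ_mem (f := nhds z)) hδ
  have hNA : ∀ z : closure A, (N z ∩ A).Nonempty := fun z =>
    mem_closure_iff.1 z.2 _ (hNo z) (hzN z)
  have hcl : closure A ⊆ ⋃ z : closure A, N z := fun z hz => mem_iUnion.2 ⟨⟨z, hz⟩, hzN z⟩
  have hsub : A ⊆ ⋃ z : closure A, N z := subset_closure.trans hcl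
  obtain ⟨a, ha⟩ := hA.nonempty
  have : Nonempty (closure A) := ⟨⟨a, subset_closure ha⟩⟩
  refine ⟨⋃ z : closure A, N z, isOpen_iUnion fun z => hNo z, ⟨⟨a, hsub ha⟩, ?_⟩, hcl, hsub,
    fun x hx => ?_⟩
  · rw [← union_eq_self_of_subset_left hsub, union_iUnion]
    exact isPreconnected_iUnion ⟨a, mem_iInter.2 fun z => Or.inl ha⟩ fun z =>
      (hA.union (by simpa only [inter_comm] using hNA z) (hNc z)).isPreconnected
  · obtain ⟨z, hz⟩ := mem_iUnion.1 hx
    exact ⟨N z, (hNc z).isPreconnected, subset_iUnion_of_subset z Subset.rfl, hNδ z, hz, hNA z⟩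

end Attached

section SeedFamily

variable {X J : Type*}

/-- A family of connected open sets with pairwise disjoint closures inside `P`: the seeds from
which the cells decomposing `P` are grown. -/
structure IsSeedFamily [TopologicalSpace X] (P : Set X) (A : J → Set X) : Prop where
  isOpen : ∀ j, IsOpen (A j)
  isConnected : ∀ j, IsConnected (A j)
  closure_subset : ∀ j, closure (A j) ⊆ P
  disjoint : Pairwise fun i j => Disjoint (closure (A i)) (closure (A j))

namespace IsSeedFamily

section Topological

variable [TopologicalSpace X] {P O V Φ : Set X} {A : J → Set X} {y : X}

lemma update_union [DecidableEq J] {j : J} (hA : IsSeedFamily P A) (hVP : V ⊆ P)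
    (hΦ : IsFinger A V y j Φ) : IsSeedFamily P (Function.update A j (A j ∪ Φ)) where
  isOpen := (Function.forall_update_iff A fun _ B => IsOpen B).2
    ⟨(hA.isOpen j).union hΦ.isOpen, fun i _ => hA.isOpen i⟩
  isConnected := (Function.forall_update_iff A fun _ B => IsConnected B).2
    ⟨(hA.isConnected j).union (by simpa only [inter_comm] using hΦ.inter_nonempty) hΦ.isConnected,
      fun i _ => hA.isConnected i⟩
  closure_subset := (Function.forall_update_iff A fun _ B => closure B ⊆ P).2
    ⟨by
      rw [closure_union]
      exact union_subset (hA.closure_subset j) (hΦ.closure_subset.trans hVP),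
    fun i _ => hA.closure_subset i⟩
  disjoint i k hik := by
    have hj : ∀ i ≠ j, Disjoint (closure (A j ∪ Φ)) (closure (A i)) := fun i hi => by
      rw [closure_union]
      exact (hA.disjoint hi.symm).union_left (hΦ.disjoint i hi)
    by_cases hi : i = j
    · subst hi
      simpa [hik.symm] using hj k hik.symm
    by_cases hk : k = j
    · subst hk
      simpa [hik] using (hj i hik).symm
    · simpa [hi, hk] using hA.disjoint hik

variable [RegularSpace X] [LocallyConnectedSpace X] [Finite J]

lemma exists_reach_point (hA : IsSeedFamily P A) (hV : IsOpen V) (hVc : IsPreconnected V)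
    (hVP : V ⊆ P) (hVA : (V ∩ ⋃ i, A i).Nonempty) (hy : y ∈ V) :
    ∃ A' : J → Set X, IsSeedFamily P A' ∧ (∀ j, AttachedIn V (A j) (A' j)) ∧ y ∈ ⋃ j, A' j := by
  classical
  obtain ⟨j, Φ, hΦ⟩ := exists_isFinger hA.disjoint hV hVc hVA hy
  refine ⟨Function.update A j (A j ∪ Φ), hA.update_union hVP hΦ, ?_,
    mem_iUnion.2 ⟨j, by simp [hΦ.mem]⟩⟩
  exact (Function.forall_update_iff A fun i B => AttachedIn V (A i) B).2
    ⟨.union hΦ.isConnected.isPreconnected (subset_closure.trans hΦ.closure_subset)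
      hΦ.inter_nonempty, fun i _ => .refl V (A i)⟩

lemma exists_reach_finite (hA : IsSeedFamily P A) (hP : IsOpen P) (hO : IsOpen O) {F : Set X}
    (hF : F.Finite) :
    ∃ A' : J → Set X, IsSeedFamily P A' ∧ (∀ j, AttachedIn O (A j) (A' j)) ∧
      ∀ y ∈ F, (connectedComponentIn (P ∩ O) y ∩ ⋃ i, A i).Nonempty → y ∈ ⋃ j, A' j := by
  induction F, hF using Set.Finite.induction_on with
  | empty => exact ⟨A, hA, fun j => .refl O (A j), by simp⟩
  | @insert y F _ _ ih =>
    obtain ⟨A', hA', hAA', hFA'⟩ := ih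
    by_cases hm : (connectedComponentIn (P ∩ O) y ∩ ⋃ i, A i).Nonempty
    · have hsub := connectedComponentIn_subset (P ∩ O) y
      have hy : y ∈ P ∩ O := connectedComponentIn_nonempty_iff.1 hm.left
      obtain ⟨A'', hA'', hAA'', hyA''⟩ := hA'.exists_reach_point
        (hP.inter hO).connectedComponentIn isPreconnected_connectedComponentIn
        (hsub.trans inter_subset_left)
        (hm.mono (inter_subset_inter_right _ (iUnion_mono fun j => (hAA' j).1)))
        (mem_connectedComponentIn hy)
      refine ⟨A'', hA'',
        fun j => (hAA' j).trans ((hAA'' j).mono (hsub.trans inter_subset_right)), ?_⟩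
      rintro z (rfl | hz) hzm
      · exact hyA''
      · exact iUnion_mono (fun j => (hAA'' j).1) (hFA' z hz hzm)
    · refine ⟨A', hA', hAA', ?_⟩
      rintro z (rfl | hz) hzm
      · exact absurd hzm hm
      · exact hFA' z hz hzm

end Topological

section Metric

variable [PseudoMetricSpace X] [LocallyConnectedSpace X] [Finite J] {P : Set X} {A : J → Set X}

lemma exists_reach_colors (hA : IsSeedFamily P A) (hP : IsOpen P) {F : Set X} (hF : F.Finite)
    {e : ℝ} (he : 0 ≤ e) (𝒪 : Finset (Set X)) (h𝒪 : ∀ O ∈ 𝒪, IsOpen O)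
    (h𝒪e : ∀ O ∈ 𝒪, ∀ H ⊆ O, IsPreconnected H → DiamLE H e) :
    ∃ A' : J → Set X, IsSeedFamily P A' ∧ (∀ j, AttachedWithin (𝒪.card * e) (A j) (A' j)) ∧
      ∀ O ∈ 𝒪, ∀ y ∈ F, (connectedComponentIn (P ∩ O) y ∩ ⋃ i, A i).Nonempty →
        y ∈ ⋃ j, A' j := by
  classical
  induction 𝒪 using Finset.induction_on with
  | empty => exact ⟨A, hA, fun j => .refl (A j) (by simp), by simp⟩
  | insert O 𝒪 hO𝒪 ih =>
    simp only [Finset.forall_mem_insert] at h𝒪 h𝒪e ⊢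
    obtain ⟨A', hA', hAA', hFA'⟩ := ih h𝒪.2 h𝒪e.2
    have hmono : ⋃ i, A i ⊆ ⋃ i, A' i := iUnion_mono fun j => (hAA' j).1
    obtain ⟨A'', hA'', hAA'', hFA''⟩ := hA'.exists_reach_finite hP h𝒪.1 hF
    refine ⟨A'', hA'', fun j => ?_, ?_, ?_⟩
    · rw [Finset.card_insert_of_notMem hO𝒪, Nat.cast_succ, add_one_mul]
      exact (hAA' j).trans ((hAA'' j).attachedWithin he h𝒪e.1)
    · exact fun y hy hm => hFA'' y hy (hm.mono (inter_subset_inter_right _ hmono))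
    · exact fun U hU y hy hm => iUnion_mono (fun j => (hAA'' j).1) (hFA' U hU y hy hm)

lemma exists_thickening [CompactSpace X] (hA : IsSeedFamily P A) (hP : IsOpen P) {τ : ℝ}
    (hτ : 0 < τ) :
    ∃ A' : J → Set X, IsSeedFamily P A' ∧ (∀ j, AttachedWithin τ (A j) (A' j)) ∧
      ∀ j, closure (A j) ⊆ A' j := by
  have hc : ∀ j, IsCompact (closure (A j)) := fun j => isClosed_closure.isCompact
  choose r hr hrP using fun j => (hc j).exists_cthickening_subset_open hP (hA.closure_subset j)
  choose s hs hsd using fun p : {p : J × J // p.1 ≠ p.2} =>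
    (hA.disjoint p.2).exists_cthickenings (hc _) isClosed_closure
  obtain ⟨a, ha, har⟩ := exists_pos_forall_le_of_finite finite_univ fun j _ => hr j
  obtain ⟨b, hb, hbs⟩ := exists_pos_forall_le_of_finite finite_univ fun p _ => hs p
  have hδ : 0 < min τ (min a b) := lt_min hτ (lt_min ha hb)
  have hδa : min τ (min a b) ≤ a := (min_le_right _ _).trans (min_le_left _ _)
  have hδb : min τ (min a b) ≤ b := (min_le_right _ _).trans (min_le_right _ _)
  choose A' hA'o hA'c hAA' hA' using fun j =>
    exists_isOpen_isConnected_attachedWithin (hA.isConnected j) hδ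
  have hcl : ∀ j, closure (A' j) ⊆ cthickening (min τ (min a b)) (closure (A j)) := fun j =>
    (hA' j).closure_subset_cthickening
  refine ⟨A', ⟨hA'o, hA'c, fun j => ?_, fun i j hij => ?_⟩,
    fun j => (hA' j).mono (min_le_left _ _), hAA'⟩
  · exact (hcl j).trans ((cthickening_mono (hδa.trans (har j trivial)) _).trans (hrP j))
  · have hδs : min τ (min a b) ≤ s ⟨(i, j), hij⟩ := hδb.trans (hbs _ trivial)
    exact (hsd ⟨(i, j), hij⟩).mono ((hcl i).trans (cthickening_mono hδs _))
      ((hcl j).trans (cthickening_mono hδs _))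

end Metric

end IsSeedFamily

end SeedFamily

section PropertyS

variable {X : Type*}

/-- Property S of Sierpiński: for every `δ > 0`, the set `P` is a finite union of preconnected
sets of diameter at most `δ`. -/
def PropertyS [PseudoMetricSpace X] (P : Set X) : Prop :=
  ∀ δ > 0, ∃ 𝓔 : Set (Set X), 𝓔.Finite ∧ P ⊆ ⋃₀ 𝓔 ∧
    ∀ E ∈ 𝓔, IsPreconnected E ∧ E ⊆ P ∧ DiamLE E δ

/-- A finite open cover whose members, the colors, have only small preconnected subsets. -/
structure IsColoring [PseudoMetricSpace X] (𝒪 : Finset (Set X)) (e : ℝ) : Prop where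
  nonneg : 0 ≤ e
  isOpen : ∀ O ∈ 𝒪, IsOpen O
  exists_mem : ∀ x, ∃ O ∈ 𝒪, x ∈ O
  diamLE : ∀ O ∈ 𝒪, ∀ H ⊆ O, IsPreconnected H → DiamLE H e

/-- Spaces with colorings in which even the number of colors times the size of the preconnected
monochromatic sets is small. -/
def ThinlyColored (X : Type*) [PseudoMetricSpace X] : Prop :=
  ∀ η > 0, ∃ (𝒪 : Finset (Set X)) (e : ℝ), IsColoring 𝒪 e ∧ 𝒪.card * e ≤ η

/-- A finite subset `F` of `P` such that every point of `P` is close to a point of `F`, to which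
it can be joined inside `P` in a single color. -/
structure IsLinkedNet [PseudoMetricSpace X] (P : Set X) (𝒪 : Finset (Set X)) (ρ : ℝ)
    (F : Set X) : Prop where
  finite : F.Finite
  subset : F ⊆ P
  exists_link : ∀ x ∈ P, ∃ y ∈ F, dist x y ≤ ρ ∧ ∃ O ∈ 𝒪, y ∈ connectedComponentIn (P ∩ O) x

section Pseudo

variable [PseudoMetricSpace X]

lemma PropertyS.exists_isLinkedNet [CompactSpace X] {P : Set X} (hP : PropertyS P)
    {𝒪 : Finset (Set X)} {e : ℝ} (h𝒪 : IsColoring 𝒪 e) {ρ : ℝ} (hρ : 0 < ρ) :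
    ∃ F, IsLinkedNet P 𝒪 ρ F := by
  obtain ⟨δ, hδ, hδ𝒪⟩ := lebesgue_number_lemma_of_metric_sUnion (c := (𝒪 : Set (Set X)))
    isCompact_univ h𝒪.isOpen fun x _ => h𝒪.exists_mem x
  obtain ⟨𝓔, hf, hcov, h𝓔⟩ := hP (min ρ (δ / 2)) (lt_min hρ (half_pos hδ))
  have : Finite {E ∈ 𝓔 | E.Nonempty} := hf.subset (sep_subset _ _)
  refine ⟨range fun E : {E ∈ 𝓔 | E.Nonempty} => E.2.2.some, finite_range _, ?_, fun x hx => ?_⟩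
  · rintro _ ⟨E, rfl⟩
    exact (h𝓔 E E.2.1).2.1 E.2.2.some_mem
  · obtain ⟨E, hE, hxE⟩ := hcov hx
    obtain ⟨hEc, hEP, hEδ⟩ := h𝓔 E hE
    obtain ⟨O, hO, hxO⟩ := hδ𝒪 x (mem_univ x)
    have hne : E.Nonempty := ⟨x, hxE⟩
    have hEO : E ⊆ O := fun y hy =>
      hxO (mem_ball.2 (by linarith [(hEδ y hy x hxE).trans (min_le_right _ _)]))
    exact ⟨hne.some, mem_range_self (⟨E, hE, hne⟩ : {E ∈ 𝓔 | E.Nonempty}),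
      (hEδ x hxE _ hne.some_mem).trans (min_le_left _ _), O, hO,
      hEc.subset_connectedComponentIn hxE (subset_inter hEP hEO) hne.some_mem⟩

lemma propertyS_of_forall_exists_isCompact [LocallyConnectedSpace X] {R : Set X} (hR : IsOpen R)
    (h : ∀ δ > 0, ∃ K, IsCompact K ∧ K ⊆ R ∧
      ∀ x ∈ R, ∃ H, IsPreconnected H ∧ H ⊆ R ∧ DiamLE H δ ∧ x ∈ H ∧ (H ∩ K).Nonempty) :
    PropertyS R := by
  intro δ hδ
  have hδ4 : 0 < δ / 4 := by positivity
  obtain ⟨K, hKc, hKR, hK⟩ := h (δ / 4) hδ4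
  choose! N hNo hNc hzN hNR hNδ using fun z (hz : z ∈ K) =>
    exists_isOpen_isConnected_diamLE (hR.mem_nhds (hKR hz)) hδ4
  obtain ⟨t, htK, hKt⟩ := hKc.elim_nhds_subcover N fun z hz => (hNo z hz).mem_nhds (hzN z hz)
  -- The star of `N z` consists of `N z` and all the small preconnected sets which meet it.
  let 𝓗 : X → Set (Set X) := fun z =>
    {H | IsPreconnected H ∧ H ⊆ R ∧ DiamLE H (δ / 4) ∧ (H ∩ N z).Nonempty}
  refine ⟨(fun z => ⋃ H : 𝓗 z, N z ∪ H) '' t, t.finite_toSet.image _, fun x hx => ?_, ?_⟩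
  · obtain ⟨H, hHc, hHR, hHδ, hxH, y, hyH, hyK⟩ := hK x hx
    obtain ⟨z, hzt, hyz⟩ := mem_iUnion₂.1 (hKt hyK)
    exact ⟨_, mem_image_of_mem _ hzt,
      mem_iUnion.2 ⟨⟨H, hHc, hHR, hHδ, y, hyH, hyz⟩, Or.inr hxH⟩⟩
  · rintro _ ⟨z, hzt, rfl⟩
    have hz := htK z hzt
    refine ⟨isPreconnected_of_forall z fun x hx => ?_, iUnion_subset fun H =>
      union_subset (subset_closure.trans (hNR z hz)) H.2.2.1, ?_⟩
    · obtain ⟨⟨H, hH⟩, hxH⟩ := mem_iUnion.1 hx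
      exact ⟨N z ∪ H, subset_iUnion (fun H : 𝓗 z => N z ∪ H) ⟨H, hH⟩, Or.inl (hzN z hz), hxH,
        (hNc z hz).isPreconnected.union' (by simpa only [inter_comm] using hH.2.2.2) hH.1⟩
    · have hxz : ∀ x ∈ ⋃ H : 𝓗 z, N z ∪ H, dist x z ≤ δ / 4 + δ / 4 := by
        intro x hx
        obtain ⟨⟨H, hH⟩, hxH⟩ := mem_iUnion.1 hx
        obtain ⟨y, hyH, hyN⟩ := hH.2.2.2
        exact (hNδ z hz).union hH.2.2.1 hyN hyH x hxH z (Or.inl (hzN z hz))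
      intro x hx y hy
      linarith [hxz x hx, hxz y hy, dist_triangle_right x y z]

lemma IsSeedFamily.exists_grow [CompactSpace X] [LocallyConnectedSpace X] {J : Type*} [Finite J]
    {P F F' : Set X} {A : J → Set X} {𝒪 : Finset (Set X)} {e ρ δ : ℝ} (hA : IsSeedFamily P A)
    (hP : IsOpen P) (h𝒪 : IsColoring 𝒪 e) (hF : IsLinkedNet P 𝒪 ρ F) (hFA : F ⊆ ⋃ j, A j)
    (hF' : F'.Finite) (hF'P : F' ⊆ P) (hδ : 𝒪.card * e < δ) :
    ∃ A' : J → Set X, IsSeedFamily P A' ∧ (∀ j, AttachedWithin δ (A j) (A' j)) ∧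
      (∀ j, closure (A j) ⊆ A' j) ∧ F' ⊆ ⋃ j, A' j := by
  obtain ⟨A', hA', hAA', hF'A'⟩ :=
    hA.exists_reach_colors hP hF' h𝒪.nonneg 𝒪 h𝒪.isOpen h𝒪.diamLE
  obtain ⟨A'', hA'', hAA'', hcl⟩ := hA'.exists_thickening hP (sub_pos.2 hδ)
  refine ⟨A'', hA'', fun j => ?_, fun j => (closure_mono (hAA' j).1).trans (hcl j), ?_⟩
  · simpa using (hAA' j).trans (hAA'' j)
  · intro y hy
    obtain ⟨z, hzF, -, O, hO, hz⟩ := hF.exists_link y (hF'P hy)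
    exact iUnion_mono (fun j => (hAA'' j).1) (hF'A' O hO y hy ⟨z, hz, hFA hzF⟩)

end Pseudo

end PropertyS

section Decomposition

variable {X : Type*}

/-- The pieces into which the space is cut at each stage. -/
structure IsCell [PseudoMetricSpace X] (P : Set X) : Prop where
  isOpen : IsOpen P
  isConnected : IsConnected P
  propertyS : PropertyS P

/-- A finite family of pairwise disjoint cells which fill `P` up to a set without interior. -/
structure IsCellDecomposition [PseudoMetricSpace X] (P : Set X) (𝒬 : Set (Set X)) : Prop where
  finite : 𝒬.Finite
  isCell : ∀ Q ∈ 𝒬, IsCell Q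
  subset : ∀ Q ∈ 𝒬, Q ⊆ P
  disjoint : 𝒬.PairwiseDisjoint id
  subset_closure : P ⊆ closure (⋃₀ 𝒬)

/-- A growing sequence of seed families, whose growth in the step `s` is at most `ε / 2 ^ s`. -/
structure IsSeedGrowth [PseudoMetricSpace X] {J : Type*} (P : Set X) (ε : ℝ)
    (A : ℕ → J → Set X) : Prop where
  isSeedFamily : ∀ s, IsSeedFamily P (A s)
  attached : ∀ s j, AttachedWithin (ε / 2 ^ s) (A s j) (A (s + 1) j)
  closure_subset_succ : ∀ s j, closure (A s j) ⊆ A (s + 1) j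

namespace IsSeedGrowth

variable [PseudoMetricSpace X] {J : Type*} {P : Set X} {ε : ℝ} {A : ℕ → J → Set X}

lemma monotone (h : IsSeedGrowth P ε A) (j : J) : Monotone fun s => A s j :=
  monotone_nat_of_le_succ fun s => (h.attached s j).1

lemma attachedWithin_add (h : IsSeedGrowth P ε A) (hε : 0 ≤ ε) (j : J) (k : ℕ) :
    ∀ s, AttachedWithin (2 * (ε / 2 ^ s)) (A s j) (A (s + k) j) := by
  induction k with
  | zero => exact fun s => .refl _ (by positivity)
  | succ k ih =>
    intro s
    rw [← add_assoc, add_right_comm]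
    refine ((h.attached s j).trans (ih (s + 1))).mono (le_of_eq ?_)
    rw [pow_succ]
    ring

lemma attachedWithin_iUnion (h : IsSeedGrowth P ε A) (hε : 0 ≤ ε) (j : J) (s : ℕ) :
    AttachedWithin (2 * (ε / 2 ^ s)) (A s j) (⋃ k, A k j) := by
  refine ⟨subset_iUnion (fun k => A k j) s, fun x hx => ?_⟩
  obtain ⟨k, hk⟩ := mem_iUnion.1 hx
  obtain ⟨H, hHc, hHA, hH⟩ :=
    (h.attachedWithin_add hε j k s).2 x (h.monotone j (Nat.le_add_left k s) hk)
  exact ⟨H, hHc, hHA.trans (subset_iUnion (fun k => A k j) (s + k)), hH⟩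

lemma isOpen_iUnion (h : IsSeedGrowth P ε A) (j : J) : IsOpen (⋃ s, A s j) :=
  _root_.isOpen_iUnion fun s => (h.isSeedFamily s).isOpen j

lemma propertyS_iUnion [CompactSpace X] [LocallyConnectedSpace X] (h : IsSeedGrowth P ε A)
    (hε : 0 < ε) (j : J) : PropertyS (⋃ s, A s j) := by
  refine propertyS_of_forall_exists_isCompact (h.isOpen_iUnion j) fun δ hδ => ?_
  obtain ⟨s, hs⟩ : ∃ s : ℕ, 2 * (ε / 2 ^ s) < δ := by
    obtain ⟨s, hs⟩ := pow_unbounded_of_one_lt (2 * ε / δ) (one_lt_two (α := ℝ))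
    exact ⟨s, by rwa [← mul_div_assoc, div_lt_comm₀ (by positivity) hδ]⟩
  refine ⟨closure (A s j), isClosed_closure.isCompact,
    (h.closure_subset_succ s j).trans (subset_iUnion (fun k => A k j) (s + 1)), fun x hx => ?_⟩
  obtain ⟨H, hHc, hHR, hH, hxH, hm⟩ :=
    ((h.attachedWithin_iUnion hε.le j s).mono hs.le).2 x hx
  exact ⟨H, hHc, hHR, hH, hxH, hm.mono (inter_subset_inter_right _ subset_closure)⟩

lemma isCell_iUnion [CompactSpace X] [LocallyConnectedSpace X] (h : IsSeedGrowth P ε A)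
    (hε : 0 < ε) (j : J) : IsCell (⋃ s, A s j) := by
  obtain ⟨a, ha⟩ := ((h.isSeedFamily 0).isConnected j).nonempty
  refine ⟨h.isOpen_iUnion j, ⟨⟨a, mem_iUnion.2 ⟨0, ha⟩⟩, ?_⟩, h.propertyS_iUnion hε j⟩
  exact isPreconnected_iUnion ⟨a, mem_iInter.2 fun s => h.monotone j (Nat.zero_le s) ha⟩
    fun s => ((h.isSeedFamily s).isConnected j).isPreconnected

lemma disjoint_iUnion (h : IsSeedGrowth P ε A) {i j : J} (hij : i ≠ j) :
    Disjoint (⋃ s, A s i) (⋃ s, A s j) := by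
  refine disjoint_iUnion_left.2 fun s => disjoint_iUnion_right.2 fun k => ?_
  exact ((h.isSeedFamily (max s k)).disjoint hij).mono
    ((h.monotone i (le_max_left s k)).trans subset_closure)
    ((h.monotone j (le_max_right s k)).trans subset_closure)

lemma isCellDecomposition [CompactSpace X] [LocallyConnectedSpace X] [Finite J]
    (h : IsSeedGrowth P ε A) (hε : 0 < ε) (hd : P ⊆ closure (⋃ s, ⋃ j, A s j)) :
    IsCellDecomposition P (range fun j => ⋃ s, A s j) where
  finite := finite_range _
  isCell := forall_mem_range.2 (h.isCell_iUnion hε)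
  subset := forall_mem_range.2 fun j =>
    iUnion_subset fun s => subset_closure.trans ((h.isSeedFamily s).closure_subset j)
  disjoint := pairwiseDisjoint_range_iff.2 fun i j hij =>
    h.disjoint_iUnion fun heq => hij (by rw [heq])
  subset_closure := by rwa [sUnion_range, iUnion_comm]

end IsSeedGrowth

variable [MetricSpace X] [LocallyConnectedSpace X] {P : Set X} {ε : ℝ}

lemma exists_isSeedFamily_of_finite (hP : IsOpen P) {F : Set X} (hF : F.Finite) (hFP : F ⊆ P)
    (hε : 0 < ε) :
    ∃ A : F → Set X, IsSeedFamily P A ∧ ∀ y : F, ↑y ∈ A y ∧ DiamLE (A y) ε := by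
  obtain ⟨U, hU, hUd⟩ := hF.t2_separation
  choose A hAo hAc hyA hAU hAε using fun y : F => exists_isOpen_isConnected_diamLE
    ((hP.inter (hU y).2).mem_nhds ⟨hFP y.2, (hU y).1⟩) hε
  refine ⟨A, ⟨hAo, hAc, fun y => (hAU y).trans inter_subset_left, fun y z hyz => ?_⟩,
    fun y => ⟨hyA y, hAε y⟩⟩
  exact (hUd y.2 z.2 (Subtype.coe_ne_coe.2 hyz)).mono ((hAU y).trans inter_subset_right)
    ((hAU z).trans inter_subset_right)

lemma PropertyS.exists_isSeedGrowth [CompactSpace X] (hX : ThinlyColored X) (hPo : IsOpen P)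
    (hP : PropertyS P) (hε : 0 < ε) :
    ∃ (F : Set X) (A : ℕ → F → Set X), F.Finite ∧ IsSeedGrowth P ε A ∧
      (∀ j, DiamLE (A 0 j) ε) ∧ P ⊆ closure (⋃ s, ⋃ j, A s j) := by
  choose 𝒪 e h𝒪 h𝒪e using fun s : ℕ => hX (ε / 2 ^ s / 2) (by positivity)
  choose F hF using fun s => hP.exists_isLinkedNet (h𝒪 s) (Nat.one_div_pos_of_nat (n := s))
  obtain ⟨A₀, hA₀, hFA₀⟩ := exists_isSeedFamily_of_finite hPo (hF 0).finite (hF 0).subset hε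
  have : Finite (F 0) := (hF 0).finite
  have hstep : ∀ (s : ℕ) (A : {A : F 0 → Set X // IsSeedFamily P A ∧ F s ⊆ ⋃ j, A j}),
      ∃ A' : {A : F 0 → Set X // IsSeedFamily P A ∧ F (s + 1) ⊆ ⋃ j, A j},
        (∀ j, AttachedWithin (ε / 2 ^ s) (A.1 j) (A'.1 j)) ∧ ∀ j, closure (A.1 j) ⊆ A'.1 j := by
    rintro s ⟨A, hA, hFA⟩
    have hlt := (h𝒪e s).trans_lt (half_lt_self (a := ε / 2 ^ s) (by positivity))
    obtain ⟨A', hA', hatt, hcl, hFA'⟩ :=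
      hA.exists_grow hPo (h𝒪 s) (hF s) hFA (hF (s + 1)).finite (hF (s + 1)).subset hlt
    exact ⟨⟨A', hA', hFA'⟩, hatt, hcl⟩
  choose next hatt hcl using hstep
  let A : ∀ s, {A : F 0 → Set X // IsSeedFamily P A ∧ F s ⊆ ⋃ j, A j} := fun s =>
    Nat.rec ⟨A₀, hA₀, fun y hy => mem_iUnion.2 ⟨⟨y, hy⟩, (hFA₀ ⟨y, hy⟩).1⟩⟩ next s
  refine ⟨F 0, fun s => (A s).1, (hF 0).finite,
    ⟨fun s => (A s).2.1, fun s => hatt s (A s), fun s => hcl s (A s)⟩, fun j => (hFA₀ j).2, ?_⟩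
  intro x hx
  refine Metric.mem_closure_iff.2 fun δ hδ => ?_
  obtain ⟨s, hs⟩ := exists_nat_one_div_lt hδ
  obtain ⟨y, hy, hxy, -⟩ := (hF s).exists_link x hx
  exact ⟨y, mem_iUnion.2 ⟨s, (A s).2.2 hy⟩, hxy.trans_lt hs⟩

theorem PropertyS.exists_isCellDecomposition [CompactSpace X] (hX : ThinlyColored X)
    (hPo : IsOpen P) (hP : PropertyS P) (hε : 0 < ε) :
    ∃ 𝒬, IsCellDecomposition P 𝒬 ∧ ∀ Q ∈ 𝒬, DiamLE Q ε := by
  have hε5 : 0 < ε / 5 := by positivity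
  obtain ⟨F, A, hF, hA, hA₀, hd⟩ := hP.exists_isSeedGrowth hX hPo hε5
  have : Finite F := hF
  refine ⟨_, hA.isCellDecomposition hε5 hd, forall_mem_range.2 fun j => ?_⟩
  exact ((hA.attachedWithin_iUnion hε5.le j 0).diamLE (hA₀ j)).mono_right (by linarith)

end Decomposition

section Components

variable {X : Type*} [PseudoMetricSpace X] {R A : Set X}

lemma PropertyS.sUnion {𝒜 : Set (Set X)} (hf : 𝒜.Finite) (h : ∀ A ∈ 𝒜, PropertyS A) :
    PropertyS (⋃₀ 𝒜) := by
  intro δ hδ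
  choose! 𝓔 hfin hcov h𝓔 using fun A hA => h A hA δ hδ
  refine ⟨⋃ A ∈ 𝒜, 𝓔 A, hf.biUnion hfin, sUnion_subset fun A hA => (hcov A hA).trans
    (sUnion_subset_sUnion (subset_biUnion_of_mem hA)), fun E hE => ?_⟩
  obtain ⟨A, hA, hE⟩ := mem_iUnion₂.1 hE
  obtain ⟨hEc, hEA, hEδ⟩ := h𝓔 A hA E hE
  exact ⟨hEc, hEA.trans (subset_sUnion_of_mem hA), hEδ⟩

lemma PropertyS.of_subset_closure (hA : PropertyS A) (hAR : A ⊆ R) (hRA : R ⊆ closure A) :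
    PropertyS R := by
  intro δ hδ
  obtain ⟨𝓔, hf, hcov, h𝓔⟩ := hA δ hδ
  refine ⟨(fun E => R ∩ closure E) '' 𝓔, hf.image _, fun x hx => ?_, ?_⟩
  · obtain ⟨E, hE, hxE⟩ := (mem_closure_sUnion_iff hf).1 (closure_mono hcov (hRA hx))
    exact ⟨_, mem_image_of_mem _ hE, hx, hxE⟩
  · rintro _ ⟨E, hE, rfl⟩
    obtain ⟨hEc, hEA, hEδ⟩ := h𝓔 E hE
    exact ⟨hEc.subset_closure (subset_inter (hEA.trans hAR) subset_closure) inter_subset_right,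
      inter_subset_left, hEδ.closure.mono inter_subset_right⟩

lemma PropertyS.connectedComponentIn (hR : PropertyS R) (x : X) :
    PropertyS (connectedComponentIn R x) := by
  intro δ hδ
  obtain ⟨𝓔, hf, hcov, h𝓔⟩ := hR δ hδ
  refine ⟨{E ∈ 𝓔 | E ⊆ _root_.connectedComponentIn R x}, hf.subset (sep_subset _ _),
    fun y hy => ?_, fun E hE => ⟨(h𝓔 E hE.1).1, hE.2, (h𝓔 E hE.1).2.2⟩⟩
  obtain ⟨E, hE, hyE⟩ := hcov (connectedComponentIn_subset _ _ hy)
  refine ⟨E, ⟨hE, ?_⟩, hyE⟩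
  rw [connectedComponentIn_eq hy]
  exact (h𝓔 E hE).1.subset_connectedComponentIn hyE (h𝓔 E hE).2.1

lemma PropertyS.finite_components (hR : PropertyS R) :
    (_root_.connectedComponentIn R '' R).Finite := by
  obtain ⟨𝓔, hf, hcov, h𝓔⟩ := hR 1 one_pos
  refine (hf.biUnion (t := fun E => _root_.connectedComponentIn R '' E) fun E hE =>
    Subsingleton.finite ?_).subset ?_
  · rintro _ ⟨x, hx, rfl⟩ _ ⟨y, hy, rfl⟩
    exact connectedComponentIn_eq
      ((h𝓔 E hE).1.subset_connectedComponentIn hx (h𝓔 E hE).2.1 hy)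
  · rintro _ ⟨x, hx, rfl⟩
    obtain ⟨E, hE, hxE⟩ := hcov hx
    exact mem_biUnion hE (mem_image_of_mem _ hxE)

end Components

section Continua

variable {X : Type*} [TopologicalSpace X]

lemma pairwiseDisjoint_components (R : Set X) :
    (connectedComponentIn R '' R).PairwiseDisjoint id := by
  rintro _ ⟨x, -, rfl⟩ _ ⟨y, -, rfl⟩ hxy
  exact disjoint_left.2 fun z hzx hzy =>
    hxy ((connectedComponentIn_eq hzx).trans (connectedComponentIn_eq hzy).symm)

lemma closure_connectedComponentIn_diff_inter_nonempty [LocallyConnectedSpace X] {Q C : Set X}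
    {x : X} (hQo : IsOpen Q) (hQ : IsPreconnected Q) (hC : IsClosed C) (hQC : (Q ∩ C).Nonempty)
    (hx : x ∈ Q \ C) : (closure (connectedComponentIn (Q \ C) x) ∩ C).Nonempty := by
  by_contra hBC
  have hQB : Q ⊆ connectedComponentIn (Q \ C) x := by
    refine hQ.subset_of_closure_inter_subset (hQo.sdiff hC).connectedComponentIn
      ⟨x, hx.1, mem_connectedComponentIn hx⟩ fun y hy => ?_
    exact closure_connectedComponentIn_inter_subset _ _
      ⟨hy.1, hy.2, fun hyC => hBC ⟨y, hy.1, hyC⟩⟩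
  exact hQC.elim fun y hy => (connectedComponentIn_subset _ _ (hQB hy.1)).2 hy.2

lemma isPreconnected_biUnion_of_inter_nonempty {ι : Type*} {I : Set ι} {A : ι → Set X}
    {K : Set X} (hK : IsPreconnected K) (hKA : K ⊆ ⋃ i ∈ I, A i)
    (hA : ∀ i ∈ I, IsPreconnected (A i)) (hAK : ∀ i ∈ I, (A i ∩ K).Nonempty) :
    IsPreconnected (⋃ i ∈ I, A i) := by
  refine isPreconnected_of_forall_pair fun x hx y hy => ?_
  obtain ⟨i, hi, hxi⟩ := mem_iUnion₂.1 hx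
  obtain ⟨j, hj, hyj⟩ := mem_iUnion₂.1 hy
  refine ⟨A i ∪ K ∪ A j, union_subset (union_subset (subset_biUnion_of_mem hi) hKA)
    (subset_biUnion_of_mem hj), Or.inl (Or.inl hxi), Or.inr hyj, ?_⟩
  obtain ⟨z, hzj, hzK⟩ := hAK j hj
  exact ((hA i hi).union' (hAK i hi) hK).union z (Or.inr hzK) hzj (hA j hj)

lemma exists_isClosed_isPreconnected_subset [RegularSpace X] [LocallyConnectedSpace X]
    {P F : Set X} (hPo : IsOpen P) (hPc : IsConnected P) (hF : F.Finite) (hFP : F ⊆ P) :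
    ∃ K, IsClosed K ∧ IsPreconnected K ∧ F ⊆ K ∧ K ⊆ P := by
  obtain ⟨p, hp⟩ := hPc.nonempty
  obtain ⟨N, -, hNc, hpN, hNP⟩ := exists_isOpen_isConnected_closure_subset (hPo.mem_nhds hp)
  -- Join the points of `F` to `N` by fingers.
  choose! j Φ hΦ using fun y (hy : y ∈ F) =>
    exists_isFinger (A := fun _ : Unit => N) (fun i j hij => absurd rfl hij) hPo
      hPc.isPreconnected ⟨p, hp, mem_iUnion.2 ⟨(), hpN⟩⟩ (hFP hy)
  refine ⟨closure N ∪ ⋃ y ∈ F, closure (Φ y),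
    isClosed_closure.union (hF.isClosed_biUnion fun _ _ => isClosed_closure), ?_,
    fun y hy => Or.inr (mem_biUnion hy (subset_closure (hΦ y hy).mem)),
    union_subset hNP (iUnion₂_subset fun y hy => (hΦ y hy).closure_subset)⟩
  refine isPreconnected_of_forall p fun x hx => ?_
  rcases hx with hx | hx
  · exact ⟨closure N, subset_union_left, subset_closure hpN, hx, hNc.isPreconnected.closure⟩
  · obtain ⟨y, hy, hxy⟩ := mem_iUnion₂.1 hx
    have hm : (closure N ∩ closure (Φ y)).Nonempty := (hΦ y hy).inter_nonempty.mono fun z hz =>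
      ⟨subset_closure hz.2, subset_closure hz.1⟩
    exact ⟨closure N ∪ closure (Φ y), union_subset_union_right _
      (subset_biUnion_of_mem (u := fun y => closure (Φ y)) hy), Or.inl (subset_closure hpN),
      Or.inr hxy, hNc.isPreconnected.closure.union' hm (hΦ y hy).isConnected.isPreconnected.closure⟩

end Continua

section CoreRefinement

variable {X : Type*}

section Pseudo

variable [PseudoMetricSpace X] {P Q : Set X} {𝒬 𝓕 𝒞 : Set (Set X)}

lemma IsCellDecomposition.subset_biUnion_closure (h : IsCellDecomposition P 𝒬) :
    closure P ⊆ ⋃ Q ∈ 𝒬, closure Q := by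
  intro x hx
  simpa using (mem_closure_sUnion_iff h.finite).1
    (closure_minimal h.subset_closure isClosed_closure hx)

lemma IsCellDecomposition.biUnion (h : IsCellDecomposition P 𝒬) {𝓡 : Set X → Set (Set X)}
    (h𝓡 : ∀ Q ∈ 𝒬, IsCellDecomposition Q (𝓡 Q)) : IsCellDecomposition P (⋃ Q ∈ 𝒬, 𝓡 Q) where
  finite := h.finite.biUnion fun Q hQ => (h𝓡 Q hQ).finite
  isCell B hB := by
    obtain ⟨Q, hQ, hB⟩ := mem_iUnion₂.1 hB
    exact (h𝓡 Q hQ).isCell B hB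
  subset B hB := by
    obtain ⟨Q, hQ, hB⟩ := mem_iUnion₂.1 hB
    exact ((h𝓡 Q hQ).subset B hB).trans (h.subset Q hQ)
  disjoint B hB B' hB' hne := by
    obtain ⟨Q, hQ, hB⟩ := mem_iUnion₂.1 hB
    obtain ⟨Q', hQ', hB'⟩ := mem_iUnion₂.1 hB'
    obtain rfl | hQQ' := eq_or_ne Q Q'
    · exact (h𝓡 Q hQ).disjoint hB hB' hne
    · exact (h.disjoint hQ hQ' hQQ').mono ((h𝓡 Q hQ).subset B hB) ((h𝓡 Q' hQ').subset B' hB')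
  subset_closure := h.subset_closure.trans <| closure_minimal (sUnion_subset fun Q hQ =>
    (h𝓡 Q hQ).subset_closure.trans (closure_mono (sUnion_subset_sUnion
      (subset_biUnion_of_mem hQ)))) isClosed_closure

lemma IsCellDecomposition.propertyS_diff (h : IsCellDecomposition Q 𝓕) (h𝒞 : 𝒞 ⊆ 𝓕) :
    PropertyS (Q \ ⋃ q ∈ 𝒞, closure q) := by
  refine (PropertyS.sUnion (h.finite.subset sdiff_subset) fun q hq =>
    (h.isCell q hq.1).propertyS).of_subset_closure (A := ⋃₀ (𝓕 \ 𝒞)) ?_ ?_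
  · refine sUnion_subset fun q hq x hx => ⟨h.subset q hq.1 hx, fun hx' => ?_⟩
    obtain ⟨q', hq', hxq'⟩ := mem_iUnion₂.1 hx'
    have hd : Disjoint q q' := h.disjoint hq.1 (h𝒞 hq') fun hqq => hq.2 (hqq ▸ hq')
    exact disjoint_left.1 (hd.closure_right (h.isCell q hq.1).isOpen) hx hxq'
  · rintro x ⟨hxQ, hx⟩
    obtain ⟨q, hq, hxq⟩ := (mem_closure_sUnion_iff h.finite).1 (h.subset_closure hxQ)
    exact (mem_closure_sUnion_iff (h.finite.subset sdiff_subset)).2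
      ⟨q, ⟨hq, fun hq𝒞 => hx (mem_biUnion hq𝒞 hxq)⟩, hxq⟩

lemma IsCellDecomposition.union_components [LocallyConnectedSpace X] (hQ : IsOpen Q)
    (h : IsCellDecomposition Q 𝓕) (h𝒞 : 𝒞 ⊆ 𝓕) :
    IsCellDecomposition Q (𝒞 ∪ connectedComponentIn (Q \ ⋃ q ∈ 𝒞, closure q) ''
      (Q \ ⋃ q ∈ 𝒞, closure q)) := by
  have hf : 𝒞.Finite := h.finite.subset h𝒞
  have hR := h.propertyS_diff h𝒞
  have hRo := hQ.sdiff (hf.isClosed_biUnion fun q _ => isClosed_closure (s := q))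
  have hfin := hf.union hR.finite_components
  refine ⟨hfin, ?_, ?_, ?_, fun x hx => (mem_closure_sUnion_iff hfin).2 ?_⟩
  · rintro B (hB | ⟨x, hx, rfl⟩)
    · exact h.isCell B (h𝒞 hB)
    · exact ⟨hRo.connectedComponentIn, isConnected_connectedComponentIn_iff.2 hx,
        hR.connectedComponentIn x⟩
  · rintro B (hB | ⟨x, -, rfl⟩)
    · exact h.subset B (h𝒞 hB)
    · exact (connectedComponentIn_subset _ _).trans sdiff_subset
  · refine pairwiseDisjoint_union.2 ⟨h.disjoint.subset h𝒞, pairwiseDisjoint_components _, ?_⟩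
    rintro q hq _ ⟨x, -, rfl⟩ -
    exact disjoint_left.2 fun y hyq hy =>
      (connectedComponentIn_subset _ _ hy).2 (mem_biUnion hq (_root_.subset_closure hyq))
  · by_cases hxC : x ∈ ⋃ q ∈ 𝒞, closure q
    · obtain ⟨q, hq, hxq⟩ := mem_iUnion₂.1 hxC
      exact ⟨q, Or.inl hq, hxq⟩
    · exact ⟨_, Or.inr (mem_image_of_mem _ ⟨hx, hxC⟩),
        _root_.subset_closure (mem_connectedComponentIn ⟨hx, hxC⟩)⟩

/-- The refinement of a cell `P` into core cells `𝒞`, whose closures lie inside `P` and have a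
connected union, and border cells `ℬ`, each of which touches a core cell. -/
structure IsCoreRefinement (P : Set X) (𝒞 ℬ : Set (Set X)) : Prop where
  isCellDecomposition : IsCellDecomposition P (𝒞 ∪ ℬ)
  closure_core_subset : ∀ q ∈ 𝒞, closure q ⊆ P
  isPreconnected_core : IsPreconnected (⋃ q ∈ 𝒞, closure q)
  border_meets_core : ∀ B ∈ ℬ, ∃ q ∈ 𝒞, (closure B ∩ closure q).Nonempty

end Pseudo

variable [MetricSpace X] [CompactSpace X] [LocallyConnectedSpace X] {P Q K : Set X} {μ ε : ℝ}

lemma IsCell.exists_core_border (hX : ThinlyColored X) (hQ : IsCell Q) (hK : (K ∩ Q).Nonempty)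
    (hμ : 0 < μ) :
    ∃ 𝒞 ℬ, IsCellDecomposition Q (𝒞 ∪ ℬ) ∧
      (∀ q ∈ 𝒞, (closure q ∩ K).Nonempty ∧ DiamLE q μ) ∧
      K ∩ closure Q ⊆ ⋃ q ∈ 𝒞, closure q ∧ ∀ B ∈ ℬ, ∃ q ∈ 𝒞, (closure B ∩ closure q).Nonempty := by
  obtain ⟨𝓕, h𝓕, h𝓕μ⟩ := hQ.propertyS.exists_isCellDecomposition hX hQ.isOpen hμ
  have hK𝒞 : K ∩ closure Q ⊆ ⋃ q ∈ {q ∈ 𝓕 | (closure q ∩ K).Nonempty}, closure q := by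
    rintro x ⟨hxK, hxQ⟩
    obtain ⟨q, hq, hxq⟩ := mem_iUnion₂.1 (h𝓕.subset_biUnion_closure hxQ)
    exact mem_biUnion ⟨hq, x, hxq, hxK⟩ hxq
  refine ⟨_, _, h𝓕.union_components hQ.isOpen (sep_subset 𝓕 _),
    fun q hq => ⟨hq.2, h𝓕μ q hq.1⟩, hK𝒞, ?_⟩
  rintro _ ⟨x, hx, rfl⟩
  have hC := (h𝓕.finite.subset (sep_subset 𝓕 fun q => (closure q ∩ K).Nonempty)).isClosed_biUnion
    fun q _ => isClosed_closure (s := q)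
  obtain ⟨y, hyB, hy⟩ := closure_connectedComponentIn_diff_inter_nonempty hQ.isOpen
    hQ.isConnected.isPreconnected hC
    (hK.mono fun y hy => ⟨hy.2, hK𝒞 ⟨hy.1, subset_closure hy.2⟩⟩) hx
  obtain ⟨q, hq, hyq⟩ := mem_iUnion₂.1 hy
  exact ⟨q, hq, y, hyB, hyq⟩

theorem IsCell.exists_isCoreRefinement (hX : ThinlyColored X) (hP : IsCell P) (hε : 0 < ε) :
    ∃ 𝒞 ℬ, IsCoreRefinement P 𝒞 ℬ ∧ ∀ Q ∈ 𝒞 ∪ ℬ, DiamLE Q ε := by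
  obtain ⟨𝒬, h𝒬, h𝒬ε⟩ := hP.propertyS.exists_isCellDecomposition hX hP.isOpen hε
  have : Nonempty X := ⟨hP.isConnected.nonempty.some⟩
  choose! c hc using fun Q hQ => (h𝒬.isCell Q hQ).isConnected.nonempty
  -- The core cells are those close to a continuum `K ⊆ P` which visits all members of `𝒬`.
  obtain ⟨K, hKcl, hKc, hcK, hKP⟩ := exists_isClosed_isPreconnected_subset hP.isOpen
    hP.isConnected (h𝒬.finite.image c) (image_subset_iff.2 fun Q hQ => h𝒬.subset Q hQ (hc Q hQ))
  obtain ⟨μ, hμ, hμP⟩ := hKcl.isCompact.exists_cthickening_subset_open hP.isOpen hKP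
  choose! 𝒞 ℬ hdec hcore hcov hborder using fun Q (hQ : Q ∈ 𝒬) =>
    (h𝒬.isCell Q hQ).exists_core_border hX (K := K)
      ⟨c Q, hcK (mem_image_of_mem c hQ), hc Q hQ⟩ hμ
  have hunion : (⋃ Q ∈ 𝒬, 𝒞 Q) ∪ (⋃ Q ∈ 𝒬, ℬ Q) = ⋃ Q ∈ 𝒬, (𝒞 Q ∪ ℬ Q) := by
    simp only [iUnion_union_distrib]
  refine ⟨⋃ Q ∈ 𝒬, 𝒞 Q, ⋃ Q ∈ 𝒬, ℬ Q, ⟨hunion ▸ h𝒬.biUnion hdec, ?_, ?_, ?_⟩, ?_⟩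
  · intro q hq x hx
    obtain ⟨Q, hQ, hq⟩ := mem_iUnion₂.1 hq
    obtain ⟨⟨z, hzq, hzK⟩, hqμ⟩ := hcore Q hQ q hq
    exact hμP (mem_cthickening_of_dist_le x z μ K hzK (hqμ.closure x hx z hzq))
  · refine isPreconnected_biUnion_of_inter_nonempty hKc (fun x hx => ?_) (fun q hq => ?_)
      fun q hq => ?_
    · obtain ⟨Q, hQ, hxQ⟩ := mem_iUnion₂.1 (h𝒬.subset_biUnion_closure (subset_closure (hKP hx)))
      obtain ⟨q, hq, hxq⟩ := mem_iUnion₂.1 (hcov Q hQ ⟨hx, hxQ⟩)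
      exact mem_biUnion (mem_biUnion hQ hq) hxq
    · obtain ⟨Q, hQ, hq⟩ := mem_iUnion₂.1 hq
      exact ((hdec Q hQ).isCell q (Or.inl hq)).isConnected.isPreconnected.closure
    · obtain ⟨Q, hQ, hq⟩ := mem_iUnion₂.1 hq
      exact (hcore Q hQ q hq).1
  · intro B hB
    obtain ⟨Q, hQ, hB⟩ := mem_iUnion₂.1 hB
    obtain ⟨q, hq, hqB⟩ := hborder Q hQ B hB
    exact ⟨q, mem_biUnion hQ hq, hqB⟩
  · rw [hunion]
    intro B hB
    obtain ⟨Q, hQ, hB⟩ := mem_iUnion₂.1 hB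
    exact (h𝒬ε Q hQ).mono ((hdec Q hQ).subset B hB)

end CoreRefinement

section Chains

/-- `CellChain 𝒮 w x y c`: the points `x` and `y` are joined by a chain of closures of cells
from `𝒮` whose total weight is `c`. -/
inductive CellChain {X : Type*} [TopologicalSpace X] (𝒮 : Set (Set X)) (w : Set X → ℝ) :
    X → X → ℝ → Prop
  | single {P : Set X} {x y : X} (hP : P ∈ 𝒮) (hx : x ∈ closure P) (hy : y ∈ closure P) :
      CellChain 𝒮 w x y (w P)
  | cons {P : Set X} {x z y : X} {c : ℝ} (hP : P ∈ 𝒮) (hx : x ∈ closure P) (hz : z ∈ closure P)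
      (h : CellChain 𝒮 w z y c) : CellChain 𝒮 w x y (w P + c)

/-- Any two points of `s` are joined by a chain of total weight at most `r`. -/
def ChainDiamLE {X : Type*} [TopologicalSpace X] (𝒮 : Set (Set X)) (w : Set X → ℝ) (s : Set X)
    (r : ℝ) : Prop :=
  ∀ x ∈ s, ∀ y ∈ s, ∃ c ≤ r, CellChain 𝒮 w x y c

variable {X : Type*} [TopologicalSpace X] {𝒮 𝒮' 𝒞 : Set (Set X)} {w w' : Set X → ℝ} {x y z : X}
  {c c' r : ℝ}

namespace CellChain

lemma trans (h : CellChain 𝒮 w x y c) (h' : CellChain 𝒮 w y z c') :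
    CellChain 𝒮 w x z (c + c') := by
  induction h with
  | single hP hx hy => exact cons hP hx hy h'
  | cons hP hx hz _ ih => rw [add_assoc]; exact cons hP hx hz (ih h')

lemma symm (h : CellChain 𝒮 w x y c) : CellChain 𝒮 w y x c := by
  induction h with
  | single hP hx hy => exact single hP hy hx
  | cons hP hx hz _ ih => rw [add_comm]; exact ih.trans (single hP hz hx)

lemma nonneg (h : CellChain 𝒮 w x y c) (hw : ∀ P ∈ 𝒮, 0 ≤ w P) : 0 ≤ c := by
  induction h with
  | single hP _ _ => exact hw _ hP
  | cons hP _ _ _ ih => exact add_nonneg (hw _ hP) ih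

lemma abs_sub_le (h : CellChain 𝒮 w x y c) {f : X → ℝ} (hfc : Continuous f)
    (hf : ∀ P ∈ 𝒮, OscLE f P (w P)) : |f x - f y| ≤ c := by
  induction h with
  | single hP hx hy => exact (hf _ hP).closure hfc _ hx _ hy
  | cons hP hx hz _ ih =>
    exact (_root_.abs_sub_le _ _ _).trans (add_le_add ((hf _ hP).closure hfc _ hx _ hz) ih)

lemma exists_refine (h : CellChain 𝒮 w x y c)
    (hr : ∀ P ∈ 𝒮, ChainDiamLE 𝒮' w' (closure P) (w P)) : ∃ c' ≤ c, CellChain 𝒮' w' x y c' := by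
  induction h with
  | single hP hx hy => exact hr _ hP _ hx _ hy
  | cons hP hx hz _ ih =>
    obtain ⟨c₁, hc₁, h₁⟩ := hr _ hP _ hx _ hz
    obtain ⟨c₂, hc₂, h₂⟩ := ih
    exact ⟨c₁ + c₂, add_le_add hc₁ hc₂, h₁.trans h₂⟩

lemma const_mul (h : CellChain 𝒮 (fun _ => 1) x y c) {θ : ℝ} (hsub : 𝒮 ⊆ 𝒮')
    (hθ : ∀ P ∈ 𝒮, w' P = θ) : CellChain 𝒮' w' x y (θ * c) := by
  induction h with
  | single hP hx hy => simpa [hθ _ hP] using single (w := w') (hsub hP) hx hy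
  | cons hP hx hz _ ih => simpa [hθ _ hP, mul_add] using cons (hsub hP) hx hz ih

end CellChain

lemma exists_cellChain (hf : 𝒞.Finite) (hc : IsPreconnected (⋃ q ∈ 𝒞, closure q))
    (hx : x ∈ ⋃ q ∈ 𝒞, closure q) (hy : y ∈ ⋃ q ∈ 𝒞, closure q) : ∃ c, CellChain 𝒞 w x y c := by
  obtain ⟨q, hq, hxq⟩ := mem_iUnion₂.1 hx
  obtain ⟨q', hq', hyq'⟩ := mem_iUnion₂.1 hy
  let S : Set (Set X) := {p ∈ 𝒞 | ∃ z ∈ closure p, ∃ c, CellChain 𝒞 w x z c}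
  have hS : ∀ p ∈ S, ∀ z ∈ closure p, ∃ c, CellChain 𝒞 w x z c := by
    rintro p ⟨hp, u, hu, c, huc⟩ z hz
    exact ⟨_, huc.trans (.single hp hu hz)⟩
  by_contra hxy
  have hq'S : q' ∈ 𝒞 \ S := ⟨hq', fun h => hxy (hS q' h y hyq')⟩
  have hcl : ∀ T ⊆ 𝒞, IsClosed (⋃ p ∈ T, closure p) := fun T hT =>
    (hf.subset hT).isClosed_biUnion fun _ _ => isClosed_closure
  obtain ⟨z, -, hzS, hz⟩ := isPreconnected_closed_iff.1 hc _ _ (hcl S (sep_subset _ _))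
    (hcl (𝒞 \ S) sdiff_subset)
    (by rw [← biUnion_union, union_sdiff_cancel (sep_subset _ _)])
    ⟨x, hx, mem_biUnion ⟨hq, x, hxq, _, .single hq hxq hxq⟩ hxq⟩ ⟨y, hy, mem_biUnion hq'S hyq'⟩
  obtain ⟨p, hp, hzp⟩ := mem_iUnion₂.1 hzS
  obtain ⟨p', ⟨hp', hp'S⟩, hzp'⟩ := mem_iUnion₂.1 hz
  exact hp'S ⟨hp', z, hzp', hS p hp z hzp⟩

lemma exists_chainDiamLE (hf : 𝒞.Finite) (hc : IsPreconnected (⋃ q ∈ 𝒞, closure q)) :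
    ∃ N, ChainDiamLE 𝒞 w (⋃ q ∈ 𝒞, closure q) N := by
  obtain h | ⟨x₀, hx₀⟩ := (⋃ q ∈ 𝒞, closure q).eq_empty_or_nonempty
  · exact ⟨0, by simp [h, ChainDiamLE]⟩
  have hq : ∀ q ∈ 𝒞, ∃ N, ∀ x ∈ closure q, ∃ c ≤ N, CellChain 𝒞 w x₀ x c := by
    intro q hq
    obtain h | ⟨y, hy⟩ := (closure q).eq_empty_or_nonempty
    · exact ⟨0, by simp [h]⟩
    · obtain ⟨c, hc⟩ := exists_cellChain (w := w) hf hc hx₀ (mem_biUnion hq hy)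
      exact ⟨c + w q, fun x hx => ⟨_, le_rfl, hc.trans (.single hq hy hx)⟩⟩
  choose! N hN using hq
  obtain ⟨M, hM⟩ := (hf.image N).bddAbove
  refine ⟨M + M, fun x hx y hy => ?_⟩
  obtain ⟨q, hq, hxq⟩ := mem_iUnion₂.1 hx
  obtain ⟨q', hq', hyq'⟩ := mem_iUnion₂.1 hy
  obtain ⟨c, hc, hxc⟩ := hN q hq x hxq
  obtain ⟨c', hc', hyc'⟩ := hN q' hq' y hyq'
  exact ⟨c + c', add_le_add (hc.trans (hM (mem_image_of_mem N hq)))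
    (hc'.trans (hM (mem_image_of_mem N hq'))), hxc.symm.trans hyc'⟩

end Chains

section Flattening

variable {X : Type*}

lemma exists_forall_abs_sub_le_half [TopologicalSpace X] {s : Set X} (hs : IsCompact s) {f : X → ℝ}
    (hf : ContinuousOn f s) : ∃ g, ∀ v, OscLE f s v → ∀ x ∈ s, |f x - g| ≤ v / 2 := by
  obtain rfl | hne := s.eq_empty_or_nonempty
  · simp
  obtain ⟨a, ha, hmax⟩ := hs.exists_isMaxOn hne hf
  obtain ⟨b, hb, hmin⟩ := hs.exists_isMinOn hne hf
  refine ⟨(f a + f b) / 2, fun v hv x hx => abs_le.2 ?_⟩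
  have hab := (le_abs_self _).trans (hv a ha b hb)
  have hxa := isMaxOn_iff.1 hmax x hx
  have hxb := isMinOn_iff.1 hmin x hx
  constructor <;> linarith

lemma exists_pos_forall_diamLE_oscLE [PseudoMetricSpace X] [CompactSpace X] {H : Set C(X, ℝ)}
    (hH : H.Finite) {τ : ℝ} (hτ : 0 < τ) :
    ∃ δ > 0, ∀ h ∈ H, ∀ s : Set X, DiamLE s δ → OscLE h s τ := by
  choose δ hδ hδτ using fun h : C(X, ℝ) => Metric.uniformContinuous_iff.1
    (CompactSpace.uniformContinuous_of_continuous h.continuous) τ hτ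
  obtain ⟨ε, hε, hεδ⟩ := exists_pos_forall_le_of_finite hH fun h _ => hδ h
  refine ⟨ε / 2, half_pos hε, fun h hh s hs x hx y hy => ?_⟩
  exact (hδτ h ((hs x hx y hy).trans_lt (by linarith [hεδ h hh]))).le

variable [PseudoMetricSpace X] {R : Set X} {𝒮 : Set (Set X)}

lemma IsCellDecomposition.exists_interpolate (h𝒮 : IsCellDecomposition R 𝒮) {T : Set X → Set X}
    (hT : ∀ P ∈ 𝒮, IsClosed (T P) ∧ T P ⊆ P) (f : C(X, ℝ)) (g : Set X → ℝ) :
    ∃ f' : C(X, ℝ), ∀ P ∈ 𝒮, ∃ s : X → ℝ, (∀ x, s x ∈ Icc 0 1) ∧ (∀ x ∈ T P, s x = 1) ∧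
      ∀ x ∈ P, f' x = f x + s x * (g P - f x) := by
  choose! s hs0 hs1 hs using fun P (hP : P ∈ 𝒮) => exists_continuous_zero_one_of_isClosed
    (h𝒮.isCell P hP).isOpen.isClosed_compl (hT P hP).1
    (disjoint_compl_left_iff_subset.2 (hT P hP).2)
  refine ⟨f + ∑ P ∈ h𝒮.finite.toFinset, s P * (ContinuousMap.const X (g P) - f), fun P hP =>
    ⟨s P, hs P hP, hs1 P hP, fun x hx => ?_⟩⟩
  rw [ContinuousMap.add_apply, ContinuousMap.sum_apply,
    Finset.sum_eq_single_of_mem P (h𝒮.finite.mem_toFinset.2 hP)]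
  · simp
  · intro P' hP' hne
    rw [h𝒮.finite.mem_toFinset] at hP'
    have hxP' : x ∉ P' := disjoint_right.1 (h𝒮.disjoint hP' hP hne) hx
    simp [hs0 P' hP' hxP']

lemma IsCellDecomposition.exists_flatten [CompactSpace X] (h𝒮 : IsCellDecomposition R 𝒮)
    {T : Set X → Set X} (hT : ∀ P ∈ 𝒮, IsClosed (T P) ∧ T P ⊆ P) (f : C(X, ℝ)) :
    ∃ f' : C(X, ℝ), ∀ P ∈ 𝒮, OscLE f' (T P) 0 ∧ ∀ v, OscLE f P v →
      (∀ x ∈ P, |f' x - f x| ≤ v / 2) ∧ ∀ Q ⊆ P, ∀ τ, OscLE f Q τ → OscLE f' Q (v / 2 + τ) := by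
  choose g hg using fun P : Set X =>
    exists_forall_abs_sub_le_half (s := closure P) isClosed_closure.isCompact
      f.continuous.continuousOn
  obtain ⟨f', hf'⟩ := h𝒮.exists_interpolate hT f g
  refine ⟨f', fun P hP => ?_⟩
  obtain ⟨s, hs, hs1, hf's⟩ := hf' P hP
  refine ⟨fun x hx y hy => ?_, fun v hv => ?_⟩
  · simp [hf's x ((hT P hP).2 hx), hf's y ((hT P hP).2 hy), hs1 x hx, hs1 y hy]
  have hgv : ∀ x ∈ P, |f x - g P| ≤ v / 2 := fun x hx =>
    hg P v (hv.closure f.continuous) x (_root_.subset_closure hx)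
  refine ⟨fun x hx => ?_, fun Q hQP τ hτ x hx y hy => ?_⟩
  · rw [hf's x hx, add_sub_cancel_left, abs_mul, abs_of_nonneg (hs x).1, abs_sub_comm]
    exact (mul_le_of_le_one_left (abs_nonneg _) (hs x).2).trans (hgv x hx)
  · have hdiff : f' x - f' y = (s y - s x) * (f y - g P) + (1 - s x) * (f x - f y) := by
      rw [hf's x (hQP hx), hf's y (hQP hy)]
      ring
    have hsxy : |s y - s x| ≤ 1 := abs_le.2
      ⟨by linarith [(hs x).2, (hs y).1], by linarith [(hs x).1, (hs y).2]⟩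
    have hsx : |1 - s x| ≤ 1 := abs_le.2 ⟨by linarith [(hs x).2], by linarith [(hs x).1]⟩
    rw [hdiff]
    refine (abs_add_le _ _).trans (add_le_add ?_ ?_)
    · rw [abs_mul]
      exact (mul_le_of_le_one_left (abs_nonneg _) hsxy).trans (hgv y (hQP hy))
    · rw [abs_mul]
      exact (mul_le_of_le_one_left (abs_nonneg _) hsx).trans (hτ x hx y hy)

end Flattening

section RefinedWeights

lemma exists_pos_forall_mul_le_of_finite {ι : Type*} {s : Set ι} (hs : s.Finite) {b : ι → ℝ}
    (hb : ∀ i ∈ s, 0 < b i) (N : ι → ℝ) : ∃ θ > 0, ∀ i ∈ s, θ * N i ≤ b i ∧ θ ≤ b i := by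
  obtain ⟨θ, hθ, hθb⟩ := exists_pos_forall_le_of_finite hs (f := fun i => b i / (|N i| + 1))
    fun i hi => div_pos (hb i hi) (by positivity)
  refine ⟨θ, hθ, fun i hi => ?_⟩
  have hmul : θ * (|N i| + 1) ≤ b i := (le_div_iff₀ (by positivity)).1 (hθb i hi)
  constructor
  · exact (mul_le_mul_of_nonneg_left (by linarith [le_abs_self (N i)]) hθ.le).trans hmul
  · exact (le_mul_of_one_le_right hθ.le (by linarith [abs_nonneg (N i)])).trans hmul

variable {X : Type*}

lemma exists_parent {𝒮 : Set (Set X)} (h𝒮 : 𝒮.PairwiseDisjoint id) {𝓡 : Set X → Set (Set X)}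
    (h𝓡 : ∀ P ∈ 𝒮, ∀ Q ∈ 𝓡 P, Q.Nonempty ∧ Q ⊆ P) :
    ∃ parent : Set X → Set X, ∀ P ∈ 𝒮, ∀ Q ∈ 𝓡 P, parent Q = P := by
  choose! parent hpar hQ using fun Q (hQ : ∃ P ∈ 𝒮, Q ∈ 𝓡 P) => hQ
  refine ⟨parent, fun P hP Q hQP => ?_⟩
  obtain ⟨x, hx⟩ := (h𝓡 P hP Q hQP).1
  exact h𝒮.elim_set (hpar Q ⟨P, hP, hQP⟩) hP x
    ((h𝓡 _ (hpar Q ⟨P, hP, hQP⟩) Q (hQ Q ⟨P, hP, hQP⟩)).2 hx) ((h𝓡 P hP Q hQP).2 hx)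

variable [PseudoMetricSpace X] {P R : Set X} {𝒮 : Set (Set X)} {w : Set X → ℝ}

lemma IsCoreRefinement.chainDiamLE_closure {𝒞 ℬ : Set (Set X)} (h : IsCoreRefinement P 𝒞 ℬ)
    (hsub : 𝒞 ∪ ℬ ⊆ 𝒮) {θ b N : ℝ} (hθ : 0 ≤ θ) (hcore : ∀ q ∈ 𝒞, w q = θ)
    (hb : ∀ Q ∈ 𝒞 ∪ ℬ, w Q ≤ b)
    (hN : ChainDiamLE 𝒞 (fun _ => 1) (⋃ q ∈ 𝒞, closure q) N) :
    ChainDiamLE 𝒮 w (closure P) (b + θ * N + b) := by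
  have htocore : ∀ x ∈ closure P, ∃ y ∈ ⋃ q ∈ 𝒞, closure q, ∃ c ≤ b, CellChain 𝒮 w x y c := by
    intro x hx
    obtain ⟨Q, hQ, hxQ⟩ := mem_iUnion₂.1 (h.isCellDecomposition.subset_biUnion_closure hx)
    rcases id hQ with hQ𝒞 | hQℬ
    · exact ⟨x, mem_biUnion hQ𝒞 hxQ, _, hb Q hQ, .single (hsub hQ) hxQ hxQ⟩
    · obtain ⟨q, hq, y, hyQ, hyq⟩ := h.border_meets_core Q hQℬ
      exact ⟨y, mem_biUnion hq hyq, _, hb Q hQ, .single (hsub hQ) hxQ hyQ⟩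
  intro x hx y hy
  obtain ⟨x', hx', c, hc, hxx'⟩ := htocore x hx
  obtain ⟨y', hy', c', hc', hyy'⟩ := htocore y hy
  obtain ⟨n, hn, hx'y'⟩ := hN x' hx' y' hy'
  refine ⟨c + θ * n + c', by gcongr, (hxx'.trans ?_).trans hyy'.symm⟩
  exact hx'y'.const_mul (subset_union_left.trans hsub) hcore

/-- Chains which cross a cell pay for at most two border cells, whose weights add up to a bit less
than the weight of the cell, and for core cells, which are as cheap as necessary. -/
lemma IsCellDecomposition.exists_refined_weight (h𝒮 : IsCellDecomposition R 𝒮)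
    {𝒞 ℬ : Set X → Set (Set X)} (hR : ∀ P ∈ 𝒮, IsCoreRefinement P (𝒞 P) (ℬ P))
    (hw : ∀ P ∈ 𝒮, 0 < w P) {κ : ℝ} (hκ : 0 < κ) (hκ1 : κ < 1) :
    ∃ w' : Set X → ℝ, ∀ P ∈ 𝒮,
      ChainDiamLE (⋃ P ∈ 𝒮, (𝒞 P ∪ ℬ P)) w' (closure P) (w P) ∧
      ∀ Q ∈ 𝒞 P ∪ ℬ P, 0 < w' Q ∧ w' Q ≤ w P / 2 ∧ (Q ∈ 𝒞 P ∨ w' Q = (1 - κ) * w P / 2) := by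
  classical
  obtain ⟨parent, hparent⟩ := exists_parent h𝒮.disjoint fun P hP Q hQ =>
    ⟨((hR P hP).isCellDecomposition.isCell Q hQ).isConnected.nonempty,
      (hR P hP).isCellDecomposition.subset Q hQ⟩
  choose! N hN using fun P (hP : P ∈ 𝒮) => exists_chainDiamLE (w := fun _ => 1)
    ((hR P hP).isCellDecomposition.finite.subset subset_union_left) (hR P hP).isPreconnected_core
  have hb : ∀ P ∈ 𝒮, 0 < (1 - κ) * w P / 2 := fun P hP =>
    half_pos (mul_pos (sub_pos.2 hκ1) (hw P hP))
  obtain ⟨θ, hθ, hθw⟩ := exists_pos_forall_mul_le_of_finite h𝒮.finite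
    (fun P hP => lt_min (mul_pos hκ (hw P hP)) (hb P hP)) N
  have hθN : ∀ P ∈ 𝒮, θ * N P ≤ κ * w P := fun P hP => (hθw P hP).1.trans (min_le_left _ _)
  have hθb : ∀ P ∈ 𝒮, θ ≤ (1 - κ) * w P / 2 := fun P hP => (hθw P hP).2.trans (min_le_right _ _)
  let w' : Set X → ℝ := fun Q =>
    if Q ∈ 𝒞 (parent Q) then θ else (1 - κ) * w (parent Q) / 2
  have hcore : ∀ P ∈ 𝒮, ∀ q ∈ 𝒞 P, w' q = θ := fun P hP q hq =>
    if_pos ((hparent P hP q (Or.inl hq)).symm ▸ hq)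
  have hborder : ∀ P ∈ 𝒮, ∀ Q ∈ 𝒞 P ∪ ℬ P, Q ∉ 𝒞 P → w' Q = (1 - κ) * w P / 2 := by
    intro P hP Q hQ hQ𝒞
    simp only [w', hparent P hP Q hQ, if_neg hQ𝒞]
  have hle : ∀ P ∈ 𝒮, ∀ Q ∈ 𝒞 P ∪ ℬ P, 0 < w' Q ∧ w' Q ≤ (1 - κ) * w P / 2 := by
    intro P hP Q hQ
    by_cases hQ𝒞 : Q ∈ 𝒞 P
    · rw [hcore P hP Q hQ𝒞]
      exact ⟨hθ, hθb P hP⟩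
    · rw [hborder P hP Q hQ hQ𝒞]
      exact ⟨hb P hP, le_rfl⟩
  refine ⟨w', fun P hP => ⟨fun x hx y hy => ?_, fun Q hQ => ⟨(hle P hP Q hQ).1, ?_, ?_⟩⟩⟩
  · obtain ⟨c, hc, hxy⟩ := (hR P hP).chainDiamLE_closure
      (subset_biUnion_of_mem (u := fun P => 𝒞 P ∪ ℬ P) hP) hθ.le (hcore P hP)
      (fun Q hQ => (hle P hP Q hQ).2) (hN P hP) x hx y hy
    exact ⟨c, by linarith [hθN P hP], hxy⟩
  · linarith [(hle P hP Q hQ).2, mul_pos hκ (hw P hP)]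
  · exact or_iff_not_imp_left.2 (hborder P hP Q hQ)

end RefinedWeights

section Stages

lemma forall_mem_biUnion {ι α : Type*} {s : Set ι} {t : ι → Set α} {p : α → Prop} :
    (∀ x ∈ ⋃ i ∈ s, t i, p x) ↔ ∀ i ∈ s, ∀ x ∈ t i, p x := by
  simp only [mem_iUnion₂]
  exact ⟨fun h i hi x hx => h x ⟨i, hi, hx⟩, fun h x ⟨i, hi, hx⟩ => h i hi x hx⟩

/-- The state of the inductive construction: weighted cells together with finitely many probes,
continuous functions whose oscillation on a cell is less than its weight and which therefore bound
the costs of chains from below. The second component of a probe bounds its oscillation on all cells,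
and the slack is the margin which is available for later modifications of the probes. -/
structure CellStage (X : Type*) [PseudoMetricSpace X] where
  cells : Set (Set X)
  weight : Set X → ℝ
  probes : Set (C(X, ℝ) × ℝ)
  slack : ℝ
  isCellDecomposition : IsCellDecomposition univ cells
  weight_pos : ∀ P ∈ cells, 0 < weight P
  slack_mem : slack ∈ Ioc 0 1
  probes_finite : probes.Finite
  probe_pos : ∀ p ∈ probes, 0 < p.2
  oscLE_probe : ∀ p ∈ probes, ∀ P ∈ cells, OscLE p.1 P p.2
  oscLE_weight : ∀ p ∈ probes, ∀ P ∈ cells, OscLE p.1 P ((1 - slack) * weight P)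

namespace CellStage

variable {X : Type*}

/-- `S'` refines `S` without increasing the costs of chains, and replaces each probe of `S` by a
close function which oscillates less. -/
structure Refines [PseudoMetricSpace X] (S S' : CellStage X) : Prop where
  weight_le : ∀ Q ∈ S'.cells, ∃ P ∈ S.cells, S'.weight Q ≤ S.weight P / 2
  chainDiamLE : ∀ P ∈ S.cells, ChainDiamLE S'.cells S'.weight (closure P) (S.weight P)
  exists_moved_probe : ∀ p ∈ S.probes, ∃ h : C(X, ℝ),
    (h, 3 / 4 * p.2) ∈ S'.probes ∧ ∀ x, |h x - p.1 x| ≤ p.2 / 2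

lemma abs_sub_le_of_cellChain [PseudoMetricSpace X] {S : ℕ → CellStage X}
    (hS : ∀ n, (S n).Refines (S (n + 1))) {n : ℕ} {p : C(X, ℝ) × ℝ} (hp : p ∈ (S n).probes) (k : ℕ)
    {x y : X} {c : ℝ} (hc : CellChain (S (n + k)).cells (S (n + k)).weight x y c) :
    |p.1 x - p.1 y| ≤ c + 4 * p.2 := by
  induction k generalizing n p with
  | zero =>
    have hosc : ∀ P ∈ (S n).cells, OscLE p.1 P ((S n).weight P) := fun P hP =>
      ((S n).oscLE_weight p hp P hP).mono_right
        (mul_le_of_le_one_left ((S n).weight_pos P hP).le (by linarith [(S n).slack_mem.1]))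
    linarith [hc.abs_sub_le p.1.continuous hosc, (S n).probe_pos p hp]
  | succ k ih =>
    obtain ⟨h, hh, hhp⟩ := (hS n).exists_moved_probe p hp
    have hhxy : |h x - h y| ≤ c + 4 * (3 / 4 * p.2) := ih hh (by rwa [add_assoc, add_comm 1 k])
    have hx := abs_le.1 (hhp x)
    have hy := abs_le.1 (hhp y)
    have hxy := abs_le.1 hhxy
    exact abs_le.2 ⟨by linarith, by linarith⟩

variable [PseudoMetricSpace X] (S : CellStage X)

lemma exists_moved_probe [CompactSpace X] {𝒞 ℬ : Set X → Set (Set X)}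
    (hR : ∀ P ∈ S.cells, IsCoreRefinement P (𝒞 P) (ℬ P)) {w : Set X → ℝ}
    (hw : ∀ P ∈ S.cells, ∀ Q ∈ 𝒞 P ∪ ℬ P,
      0 < w Q ∧ (Q ∈ 𝒞 P ∨ w Q = (1 - S.slack / 4) * S.weight P / 2))
    {p : C(X, ℝ) × ℝ} (hp : p ∈ S.probes) {τ : ℝ} (hpτ : τ ≤ p.2 / 4)
    (hSτ : ∀ P ∈ S.cells, τ ≤ S.slack * S.weight P / 4)
    (hτ : ∀ P ∈ S.cells, ∀ Q ∈ 𝒞 P ∪ ℬ P, OscLE p.1 Q τ) :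
    ∃ h : C(X, ℝ), (∀ x, |h x - p.1 x| ≤ p.2 / 2) ∧ ∀ P ∈ S.cells, ∀ Q ∈ 𝒞 P ∪ ℬ P,
      OscLE h Q (3 / 4 * p.2) ∧ OscLE h Q ((1 - S.slack / 4) * w Q) := by
  have hs1 : S.slack ≤ 1 := S.slack_mem.2
  obtain ⟨h, hh⟩ := S.isCellDecomposition.exists_flatten (T := fun P => ⋃ q ∈ 𝒞 P, closure q)
    (fun P hP => ⟨((hR P hP).isCellDecomposition.finite.subset
      subset_union_left).isClosed_biUnion fun _ _ => isClosed_closure,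
      iUnion₂_subset (hR P hP).closure_core_subset⟩) p.1
  have hosc : ∀ P ∈ S.cells, ∀ Q ∈ 𝒞 P ∪ ℬ P, ∀ v, OscLE p.1 P v → OscLE h Q (v / 2 + τ) :=
    fun P hP Q hQ v hv => ((hh P hP).2 v hv).2 Q
      ((hR P hP).isCellDecomposition.subset Q hQ) τ (hτ P hP Q hQ)
  refine ⟨h, fun x => ?_, fun P hP Q hQ => ⟨?_, ?_⟩⟩
  · have hcl : IsClosed {x | |h x - p.1 x| ≤ p.2 / 2} := isClosed_le (by fun_prop) (by fun_prop)
    refine closure_minimal ?_ hcl (S.isCellDecomposition.subset_closure (mem_univ x))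
    rintro z ⟨P, hP, hz⟩
    exact ((hh P hP).2 p.2 (S.oscLE_probe p hp P hP)).1 z hz
  · exact (hosc P hP Q hQ p.2 (S.oscLE_probe p hp P hP)).mono_right (by linarith)
  · obtain ⟨hwQ, hQ𝒞 | hwQ'⟩ := hw P hP Q hQ
    · have hcore : OscLE h Q 0 := fun x hx y hy => (hh P hP).1
        x (mem_biUnion hQ𝒞 (subset_closure hx)) y (mem_biUnion hQ𝒞 (subset_closure hy))
      exact hcore.mono_right (mul_nonneg (by linarith) hwQ.le)
    · refine (hosc P hP Q hQ _ (S.oscLE_weight p hp P hP)).mono_right ?_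
      rw [hwQ']
      nlinarith [hSτ P hP, mul_nonneg (sq_nonneg S.slack) (S.weight_pos P hP).le]

lemma exists_pos_margin : ∃ τ > 0, (∀ p ∈ S.probes, τ ≤ p.2 / 4) ∧
    ∀ P ∈ S.cells, τ ≤ S.slack * S.weight P / 4 := by
  obtain ⟨τ₁, h₁, hτ₁⟩ := exists_pos_forall_le_of_finite S.probes_finite S.probe_pos
  obtain ⟨τ₂, h₂, hτ₂⟩ := exists_pos_forall_le_of_finite S.isCellDecomposition.finite
    fun P hP => mul_pos S.slack_mem.1 (S.weight_pos P hP)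
  refine ⟨min τ₁ τ₂ / 4, by positivity, fun p hp => ?_, fun P hP => ?_⟩
  · linarith [hτ₁ p hp, min_le_left τ₁ τ₂]
  · linarith [hτ₂ P hP, min_le_right τ₁ τ₂]

lemma exists_refines {X : Type*} [MetricSpace X] [CompactSpace X] [LocallyConnectedSpace X]
    (hX : ThinlyColored X) (S : CellStage X) {ρ : ℝ} (hρ : 0 < ρ) :
    ∃ S', S.Refines S' ∧ S'.slack ≤ 1 / 2 ∧ ∀ Q ∈ S'.cells, DiamLE Q ρ := by
  obtain ⟨hs0, hs1⟩ := S.slack_mem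
  obtain ⟨τ, hτ, hpτ, hSτ⟩ := S.exists_pos_margin
  obtain ⟨δ, hδ, hosc⟩ := exists_pos_forall_diamLE_oscLE (S.probes_finite.image Prod.fst) hτ
  choose! 𝒞 ℬ hR hmesh using fun P (hP : P ∈ S.cells) =>
    (S.isCellDecomposition.isCell P hP).exists_isCoreRefinement hX (lt_min hρ hδ)
  obtain ⟨w, hw⟩ := S.isCellDecomposition.exists_refined_weight hR S.weight_pos
    (κ := S.slack / 4) (by linarith) (by linarith)
  choose! move hmove hmoveosc using fun p (hp : p ∈ S.probes) => S.exists_moved_probe hR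
    (fun P hP Q hQ => ⟨((hw P hP).2 Q hQ).1, ((hw P hP).2 Q hQ).2.2⟩) hp (hpτ p hp) hSτ
    fun P hP Q hQ => hosc p.1 (mem_image_of_mem _ hp) Q
      ((hmesh P hP Q hQ).mono_right (min_le_right _ _))
  refine ⟨{
      cells := ⋃ P ∈ S.cells, (𝒞 P ∪ ℬ P)
      weight := w
      probes := (fun p => (move p, 3 / 4 * p.2)) '' S.probes
      slack := S.slack / 4
      isCellDecomposition :=
        S.isCellDecomposition.biUnion fun P hP => (hR P hP).isCellDecomposition
      weight_pos := forall_mem_biUnion.2 fun P hP Q hQ => ((hw P hP).2 Q hQ).1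
      slack_mem := ⟨by linarith, by linarith⟩
      probes_finite := S.probes_finite.image _
      probe_pos := forall_mem_image.2 fun p hp => mul_pos (by norm_num) (S.probe_pos p hp)
      oscLE_probe := forall_mem_image.2 fun p hp => forall_mem_biUnion.2 fun P hP Q hQ =>
        (hmoveosc p hp P hP Q hQ).1
      oscLE_weight := forall_mem_image.2 fun p hp => forall_mem_biUnion.2 fun P hP Q hQ =>
        (hmoveosc p hp P hP Q hQ).2 },
    ⟨forall_mem_biUnion.2 fun P hP Q hQ => ⟨P, hP, ((hw P hP).2 Q hQ).2.1⟩, fun P hP => (hw P hP).1,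
      fun p hp => ⟨move p, mem_image_of_mem _ hp, hmove p hp⟩⟩,
    by linarith, forall_mem_biUnion.2 fun P hP Q hQ =>
      (hmesh P hP Q hQ).mono_right (min_le_left _ _)⟩

/-- The stage `S` with one more probe. -/
def insertProbe (S : CellStage X) (p : C(X, ℝ) × ℝ) (hp₀ : 0 < p.2)
    (hp : ∀ P ∈ S.cells, OscLE p.1 P p.2 ∧ OscLE p.1 P ((1 - S.slack) * S.weight P)) :
    CellStage X where
  cells := S.cells
  weight := S.weight
  probes := insert p S.probes
  slack := S.slack
  isCellDecomposition := S.isCellDecomposition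
  weight_pos := S.weight_pos
  slack_mem := S.slack_mem
  probes_finite := S.probes_finite.insert p
  probe_pos := forall_mem_insert.2 ⟨hp₀, S.probe_pos⟩
  oscLE_probe := forall_mem_insert.2 ⟨fun P hP => (hp P hP).1, S.oscLE_probe⟩
  oscLE_weight := forall_mem_insert.2 ⟨fun P hP => (hp P hP).2, S.oscLE_weight⟩

lemma exists_pos_oscLE_smul {f : X → ℝ} (hf : LipschitzWith 1 f) {𝒬 : Set (Set X)}
    (h𝒬 : 𝒬.Finite) {w : Set X → ℝ} (hw : ∀ Q ∈ 𝒬, 0 < w Q) {ρ : ℝ} (hρ : 0 < ρ)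
    (hmesh : ∀ Q ∈ 𝒬, DiamLE Q ρ) :
    ∃ a > 0, ∀ Q ∈ 𝒬, OscLE (a • f) Q (a * ρ) ∧ a * ρ ≤ w Q / 2 := by
  obtain ⟨m, hm, hmw⟩ := exists_pos_forall_le_of_finite h𝒬 hw
  refine ⟨m / (2 * ρ), by positivity, fun Q hQ => ⟨fun x hx y hy => ?_, ?_⟩⟩
  · have hfxy : |f x - f y| ≤ ρ := by
      have := hf.dist_le_mul x y
      rw [Real.dist_eq, NNReal.coe_one, one_mul] at this
      exact this.trans (hmesh Q hQ x hx y hy)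
    rw [Pi.smul_apply, Pi.smul_apply, ← smul_sub, smul_eq_mul, abs_mul,
      abs_of_pos (by positivity)]
    gcongr
  · calc m / (2 * ρ) * ρ = m / 2 := by field_simp
      _ ≤ w Q / 2 := by linarith [hmw Q hQ]

lemma exists_refines_mem_probes {X : Type*} [MetricSpace X] [CompactSpace X]
    [LocallyConnectedSpace X] (hX : ThinlyColored X) (S : CellStage X) {f : C(X, ℝ)}
    (hf : LipschitzWith 1 f) {ρ : ℝ} (hρ : 0 < ρ) :
    ∃ S', S.Refines S' ∧ ∃ a > 0, (a • f, a * ρ) ∈ S'.probes := by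
  obtain ⟨S', hSS', hslack, hmesh⟩ := S.exists_refines hX hρ
  obtain ⟨a, ha, hosc⟩ := exists_pos_oscLE_smul hf S'.isCellDecomposition.finite S'.weight_pos hρ
    hmesh
  refine ⟨S'.insertProbe (a • f, a * ρ) (mul_pos ha hρ) fun Q hQ => ⟨(hosc Q hQ).1,
    (hosc Q hQ).1.mono_right ?_⟩, ⟨hSS'.weight_le, hSS'.chainDiamLE, fun p hp => ?_⟩,
    a, ha, mem_insert _ _⟩
  · nlinarith [(hosc Q hQ).2, S'.weight_pos Q hQ]
  · obtain ⟨h, hh, hhp⟩ := hSS'.exists_moved_probe p hp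
    exact ⟨h, mem_insert_of_mem _ hh, hhp⟩

end CellStage

lemma propertyS_univ {X : Type*} [PseudoMetricSpace X] [CompactSpace X] [LocallyConnectedSpace X] :
    PropertyS (univ : Set X) := by
  intro δ hδ
  choose N hNo hNc hzN _ hNδ using fun z : X => exists_isOpen_isConnected_diamLE
    (Filter.univ_mem (f := nhds z)) hδ
  obtain ⟨t, -, ht⟩ := isCompact_univ.elim_nhds_subcover N fun z _ => (hNo z).mem_nhds (hzN z)
  refine ⟨N '' t, t.finite_toSet.image _, by rwa [sUnion_image], ?_⟩
  rintro _ ⟨z, -, rfl⟩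
  exact ⟨(hNc z).isPreconnected, subset_univ _, hNδ z⟩

end Stages

section Resolution

/-- Weighted families of cells, each refining the previous one without increasing the costs of
chains, such that the infimum of the costs of chains joining two points is a metric. -/
structure IsChainResolution {X : Type*} [TopologicalSpace X] (𝒮 : ℕ → Set (Set X))
    (w : ℕ → Set X → ℝ) : Prop where
  finite : ∀ n, (𝒮 n).Finite
  cover : ∀ n x, ∃ P ∈ 𝒮 n, x ∈ closure P
  weight_pos : ∀ n, ∀ P ∈ 𝒮 n, 0 < w n P
  weight_le : ∀ n, ∀ P ∈ 𝒮 n, w n P ≤ (1 / 2) ^ n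
  chainDiamLE : ∀ n, ∀ P ∈ 𝒮 n, ChainDiamLE (𝒮 (n + 1)) (w (n + 1)) (closure P) (w n P)
  exists_chain : ∀ x y, ∃ c, CellChain (𝒮 0) (w 0) x y c
  exists_le : ∀ x y, x ≠ y → ∃ r > 0, ∀ n c, CellChain (𝒮 n) (w n) x y c → r ≤ c

lemma exists_cellChain_of_le {X : Type*} [TopologicalSpace X] {𝒮 : ℕ → Set (Set X)}
    {w : ℕ → Set X → ℝ}
    (h : ∀ n, ∀ P ∈ 𝒮 n, ChainDiamLE (𝒮 (n + 1)) (w (n + 1)) (closure P) (w n P))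
    {m n : ℕ} (hmn : m ≤ n) {x y : X} {c : ℝ} (hc : CellChain (𝒮 m) (w m) x y c) :
    ∃ c' ≤ c, CellChain (𝒮 n) (w n) x y c' := by
  induction n, hmn using Nat.le_induction with
  | base => exact ⟨c, le_rfl, hc⟩
  | succ n _ ih =>
    obtain ⟨c', hc'c, hc'⟩ := ih
    obtain ⟨c'', hc''c', hc''⟩ := hc'.exists_refine (h n)
    exact ⟨c'', hc''c'.trans hc'c, hc''⟩

lemma CellStage.le_cost_of_cellChain {X : Type*} [PseudoMetricSpace X] {S : ℕ → CellStage X}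
    (hS : ∀ n, (S n).Refines (S (n + 1))) {f : C(X, ℝ)} {z : X} (hf : ∀ x, f x = dist z x)
    {a ρ : ℝ} (ha : 0 < a) {N : ℕ} (hp : (a • f, a * ρ) ∈ (S N).probes) {x y : X}
    (hxz : dist x z ≤ dist x y / 8) (hρ : ρ ≤ dist x y / 16) {n : ℕ} {c : ℝ}
    (hc : CellChain (S n).cells (S n).weight x y c) :
    a * (dist x y / 2) ≤ c := by
  obtain ⟨c', hc'c, hc'⟩ := exists_cellChain_of_le (𝒮 := fun n => (S n).cells)
    (w := fun n => (S n).weight) (fun n => (hS n).chainDiamLE) (Nat.le_add_left n N) hc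
  have hprobe := (abs_le.1 (abs_sub_le_of_cellChain hS hp n hc')).1
  simp only [ContinuousMap.smul_apply, hf, smul_eq_mul] at hprobe
  calc a * (dist x y / 2) ≤ a * (dist z y - dist z x - 4 * ρ) := by
        gcongr
        linarith [dist_triangle x z y, dist_comm x z]
    _ ≤ c := by linarith

variable {X : Type*} [MetricSpace X] [CompactSpace X] [LocallyConnectedSpace X]

lemma CellStage.exists_seq_refines [ConnectedSpace X] (hX : ThinlyColored X) {f : ℕ → C(X, ℝ)}
    (hf : ∀ n, LipschitzWith 1 (f n)) {ρ : ℕ → ℝ} (hρ : ∀ n, 0 < ρ n) :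
    ∃ S : ℕ → CellStage X, ((S 0).cells = {univ} ∧ ∀ P, (S 0).weight P = 1) ∧
      ∀ n, (S n).Refines (S (n + 1)) ∧ ∃ a > 0, (a • f n, a * ρ n) ∈ (S (n + 1)).probes := by
  choose next hnext using fun n (S : CellStage X) => S.exists_refines_mem_probes hX (hf n) (hρ n)
  let S₀ : CellStage X :=
    { cells := {univ}
      weight := fun _ => 1
      probes := ∅
      slack := 1
      isCellDecomposition :=
        { finite := finite_singleton _
          isCell := by
            rintro _ rfl
            exact ⟨isOpen_univ, isConnected_univ, propertyS_univ⟩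
          subset := fun _ _ => subset_univ _
          disjoint := pairwiseDisjoint_singleton _ _
          subset_closure := by simp }
      weight_pos := fun _ _ => one_pos
      slack_mem := ⟨one_pos, le_rfl⟩
      probes_finite := finite_empty
      probe_pos := by simp
      oscLE_probe := by simp
      oscLE_weight := by simp }
  exact ⟨fun n => Nat.rec S₀ next n, ⟨rfl, fun _ => rfl⟩, fun n => hnext n _⟩

theorem exists_isChainResolution [ConnectedSpace X] (hX : ThinlyColored X) :
    ∃ (𝒮 : ℕ → Set (Set X)) (w : ℕ → Set X → ℝ), IsChainResolution 𝒮 w := by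
  let u := TopologicalSpace.denseSeq X
  obtain ⟨S, ⟨hcells, hweight⟩, hS⟩ := CellStage.exists_seq_refines hX
    (f := fun n => ⟨dist (u n.unpair.1), by fun_prop⟩)
    (fun n => LipschitzWith.dist_right (u n.unpair.1)) (ρ := fun n => (1 / 2) ^ n.unpair.2)
    fun n => by positivity
  refine ⟨fun n => (S n).cells, fun n => (S n).weight,
    { finite := fun n => (S n).isCellDecomposition.finite
      cover := fun n x => ?_
      weight_pos := fun n => (S n).weight_pos
      weight_le := fun n => ?_
      chainDiamLE := fun n => (hS n).1.chainDiamLE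
      exists_chain := fun x y => ?_
      exists_le := fun x y hxy => ?_ }⟩
  · simpa using (S n).isCellDecomposition.subset_biUnion_closure (subset_closure (mem_univ x))
  · induction n with
    | zero => simp [hweight]
    | succ n ih =>
      intro Q hQ
      obtain ⟨P, hP, hPQ⟩ := (hS n).1.weight_le Q hQ
      rw [pow_succ]
      linarith [ih P hP]
  · exact ⟨_, CellChain.single (P := univ) (by simp [hcells]) (by simp) (by simp)⟩
  · have hd : 0 < dist x y := dist_pos.2 hxy
    obtain ⟨i, hi⟩ := (TopologicalSpace.denseRange_denseSeq X).exists_dist_lt x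
      (show 0 < dist x y / 8 by positivity)
    obtain ⟨j, hj⟩ := exists_pow_lt_of_lt_one (show 0 < dist x y / 16 by positivity)
      (show (1 / 2 : ℝ) < 1 by norm_num)
    obtain ⟨a, ha, hp⟩ := (hS (Nat.pair i j)).2
    exact ⟨a * (dist x y / 2), by positivity, fun n c hc =>
      CellStage.le_cost_of_cellChain (fun n => (hS n).1) (z := u i) (by simp) ha hp hi.le
        (by simpa using hj.le) hc⟩

end Resolution

section LengthSpace

open Filter Topology
open scoped NNReal ENNReal

variable {Y : Type} [MetricSpace Y] {x y : Y}

lemma edist_le_pathLength (γ : Path x y) : edist x y ≤ pathLength γ := by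
  simpa [pathLength] using eVariationOn.edist_le γ (mem_univ (0 : unitInterval)) (mem_univ 1)

lemma eVariationOn_coe_unitInterval : eVariationOn ((↑) : unitInterval → ℝ) univ = 1 := by
  have h := MonotoneOn.eVariationOn_eq (f := ((↑) : unitInterval → ℝ)) (s := univ)
    (fun _ _ _ _ hab => hab) (mem_univ 0) (mem_univ 1)
  have hIcc : Icc (0 : unitInterval) 1 = univ := eq_univ_of_forall fun t => ⟨t.2.1, t.2.2⟩
  simpa [hIcc] using h

lemma pathLength_le_of_lipschitzWith {K : ℝ≥0} {γ : Path x y} (hγ : LipschitzWith K γ) :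
    pathLength γ ≤ K := by
  have hext : LipschitzOnWith K γ.extend univ :=
    ((hγ.comp (LipschitzWith.projIcc zero_le_one)).weaken (mul_one K).le).lipschitzOnWith
  calc pathLength γ = eVariationOn (γ.extend ∘ ((↑) : unitInterval → ℝ)) univ := by
        have hcomp : γ.extend ∘ ((↑) : unitInterval → ℝ) = γ := funext γ.extend_extends'
        rw [hcomp, pathLength]
    _ ≤ K * eVariationOn ((↑) : unitInterval → ℝ) univ :=
        hext.comp_eVariationOn_le (mapsTo_univ _ _)
    _ = K := by rw [eVariationOn_coe_unitInterval, mul_one]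

lemma exists_lipschitzWith_of_approx {T Y : Type*} [PseudoMetricSpace T] [MetricSpace Y]
    [CompactSpace Y] {K : ℝ≥0} {G : ℕ → T → Y} {ε : ℕ → ℝ} (hε : Tendsto ε atTop (𝓝 0))
    (hG : ∀ n s t, dist (G n s) (G n t) ≤ K * dist s t + ε n) :
    ∃ γ : T → Y, LipschitzWith K γ ∧ ∀ t y, (∀ n, G n t = y) → γ t = y := by
  let U : Ultrafilter ℕ := hyperfilter ℕ
  have hUle : (U : Filter ℕ) ≤ atTop := Nat.cofinite_eq_atTop ▸ hyperfilter_le_cofinite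
  have hlim : ∀ t, ∃ z, Tendsto (fun n => G n t) U (𝓝 z) := fun t =>
    ⟨_, (U.map fun n => G n t).le_nhds_lim⟩
  choose γ hγ using hlim
  refine ⟨γ, LipschitzWith.of_dist_le_mul fun s t => ?_, fun t y hy => ?_⟩
  · refine le_of_tendsto_of_tendsto ((hγ s).dist (hγ t)) ?_
      (Eventually.of_forall fun n => hG n s t)
    simpa using (hε.mono_left hUle).const_add (K * dist s t)
  · exact tendsto_nhds_unique (hγ t) (by simp only [hy]; exact tendsto_const_nhds)

/-- A possibly discontinuous map on `[0, c]` from `x` to `y` which is `1`-Lipschitz up to an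
additive error `ε`. Approximating paths need not be continuous: their limit is. -/
structure IsAlmostPath {Y : Type*} [PseudoMetricSpace Y] (g : ℝ → Y) (x y : Y) (c ε : ℝ) :
    Prop where
  nonneg : 0 ≤ c
  map_zero : g 0 = x
  map_end : g c = y
  dist_le : ∀ s t, 0 ≤ s → s ≤ t → t ≤ c → dist (g s) (g t) ≤ t - s + ε

lemma IsAlmostPath.dist_comp_mul_le {Y : Type*} [PseudoMetricSpace Y] {g : ℝ → Y} {x y : Y}
    {c ε : ℝ} (h : IsAlmostPath g x y c ε) (s t : unitInterval) :
    dist (g (s * c)) (g (t * c)) ≤ c * dist s t + ε := by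
  wlog hst : s ≤ t generalizing s t
  · rw [dist_comm, dist_comm s]
    exact this t s (le_of_not_ge hst)
  have hst' : (s : ℝ) ≤ t := hst
  have hdist : c * dist s t = t * c - s * c := by
    rw [Subtype.dist_eq, Real.dist_eq, abs_sub_comm, abs_of_nonneg (sub_nonneg.2 hst')]
    ring
  rw [hdist]
  exact h.dist_le _ _ (mul_nonneg s.2.1 h.nonneg) (mul_le_mul_of_nonneg_right hst' h.nonneg)
    (mul_le_of_le_one_left h.nonneg t.2.2)

theorem isLengthSpace_of_almostPath [CompactSpace Y]
    (h : ∀ (x y : Y) (ε : ℝ), 0 < ε → ∃ c ≤ dist x y + ε, ∃ g, IsAlmostPath g x y c ε) :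
    IsLengthSpace Y := by
  intro x y
  refine le_antisymm (le_iInf edist_le_pathLength) ?_
  choose c hc g hg using fun n : ℕ => h x y (1 / ((n : ℝ) + 1)) Nat.one_div_pos_of_nat
  have hG : ∀ n (s t : unitInterval), dist (g n (s * c n)) (g n (t * c n)) ≤
      nndist x y * dist s t + 2 * (1 / ((n : ℝ) + 1)) := fun n s t => by
    have hst : dist s t ≤ 1 := Real.dist_le_of_mem_Icc_01 s.2 t.2
    have hε : (0 : ℝ) < 1 / ((n : ℝ) + 1) := Nat.one_div_pos_of_nat
    rw [coe_nndist]
    nlinarith [(hg n).dist_comp_mul_le s t, hc n, dist_nonneg (x := s) (y := t)]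
  obtain ⟨γ, hγ, hγG⟩ := exists_lipschitzWith_of_approx
    (by simpa using tendsto_one_div_add_atTop_nhds_zero_nat.const_mul (2 : ℝ)) hG
  let γ' : Path x y := ⟨⟨γ, hγ.continuous⟩, hγG 0 x fun n => by simpa using (hg n).map_zero,
    hγG 1 y fun n => by simpa using (hg n).map_end⟩
  rw [edist_nndist]
  exact (iInf_le _ γ').trans (pathLength_le_of_lipschitzWith hγ)

end LengthSpace

section ChainMetric

lemma CellChain.exists_isAlmostPath {X Y : Type*} [TopologicalSpace X] [PseudoMetricSpace Y]
    {𝒮 : Set (Set X)} {w : Set X → ℝ} {x y : X} {c : ℝ} (h : CellChain 𝒮 w x y c) {φ : X → Y}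
    (hφ : ∀ P ∈ 𝒮, DiamLE (φ '' closure P) (w P)) {W : ℝ} (hw : ∀ P ∈ 𝒮, 0 < w P ∧ w P ≤ W) :
    ∃ g, IsAlmostPath g (φ x) (φ y) c W := by
  induction h with
  | @single P x y hP hx hy =>
    obtain ⟨hwP, hW⟩ := hw P hP
    have hxy := hφ P hP _ (mem_image_of_mem φ hx) _ (mem_image_of_mem φ hy)
    refine ⟨fun t => if t ≤ 0 then φ x else φ y, hwP.le, by simp, by simp [hwP], ?_⟩
    intro s t _ hst _
    split_ifs
    · rw [dist_self]
      linarith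
    · linarith
    · linarith
    · rw [dist_self]
      linarith
  | @cons P x z y c hP hx hz _ ih =>
    obtain ⟨hwP, hW⟩ := hw P hP
    have hxz := hφ P hP _ (mem_image_of_mem φ hx) _ (mem_image_of_mem φ hz)
    obtain ⟨g, hg⟩ := ih
    have hc := hg.nonneg
    refine ⟨fun t => if t ≤ 0 then φ x else g (max (t - w P) 0), add_nonneg hwP.le hc, by simp,
      by simp [hc, (add_pos_of_pos_of_nonneg hwP hc).not_ge, hg.map_end], fun s t _ hst ht => ?_⟩
    split_ifs with hs0 ht0 ht0
    · rw [dist_self]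
      linarith
    · rcases le_total t (w P) with htw | htw
      · rw [max_eq_right (sub_nonpos.2 htw), hg.map_zero]
        linarith
      · rw [max_eq_left (sub_nonneg.2 htw)]
        have hzt := hg.dist_le 0 (t - w P) le_rfl (sub_nonneg.2 htw) (by linarith)
        rw [hg.map_zero] at hzt
        linarith [dist_triangle (φ x) (φ z) (g (t - w P))]
    · linarith
    · have hmax : max (t - w P) 0 ≤ t - s + max (s - w P) 0 :=
        max_le (by linarith [le_max_left (s - w P) 0]) (by linarith [le_max_right (s - w P) 0])
      linarith [hg.dist_le _ _ (le_max_right (s - w P) 0) (max_le_max_right 0 (by linarith))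
        (max_le (by linarith) hc : max (t - w P) 0 ≤ c)]

/-- The infimum of the costs of chains joining two points. -/
noncomputable def chainDist {X : Type*} [TopologicalSpace X] (𝒮 : ℕ → Set (Set X))
    (w : ℕ → Set X → ℝ) (x y : X) : ℝ :=
  sInf {c | ∃ n, CellChain (𝒮 n) (w n) x y c}

namespace IsChainResolution

section

variable {X : Type*} [TopologicalSpace X] {𝒮 : ℕ → Set (Set X)} {w : ℕ → Set X → ℝ}

lemma chainDist_le (h : IsChainResolution 𝒮 w) {x y : X} {n : ℕ} {c : ℝ}
    (hc : CellChain (𝒮 n) (w n) x y c) : chainDist 𝒮 w x y ≤ c :=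
  csInf_le ⟨0, fun _ ⟨n, hn⟩ => hn.nonneg fun P hP => (h.weight_pos n P hP).le⟩ ⟨n, hc⟩

lemma le_chainDist (h : IsChainResolution 𝒮 w) {x y : X} {r : ℝ}
    (hr : ∀ n c, CellChain (𝒮 n) (w n) x y c → r ≤ c) : r ≤ chainDist 𝒮 w x y := by
  obtain ⟨c, hc⟩ := h.exists_chain x y
  exact le_csInf ⟨c, 0, hc⟩ fun c ⟨n, hn⟩ => hr n c hn

lemma exists_cellChain_lt (h : IsChainResolution 𝒮 w) (x y : X) {ε : ℝ} (hε : 0 < ε) (m : ℕ) :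
    ∃ n ≥ m, ∃ c < chainDist 𝒮 w x y + ε, CellChain (𝒮 n) (w n) x y c := by
  obtain ⟨c₀, hc₀⟩ := h.exists_chain x y
  obtain ⟨c, ⟨n, hc⟩, hlt⟩ := exists_lt_of_csInf_lt
    (s := {c | ∃ n, CellChain (𝒮 n) (w n) x y c}) ⟨c₀, 0, hc₀⟩ (lt_add_of_pos_right _ hε)
  obtain ⟨c', hc'c, hc'⟩ := exists_cellChain_of_le h.chainDiamLE (le_max_left n m) hc
  exact ⟨max n m, le_max_right _ _, c', hc'c.trans_lt hlt, hc'⟩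

lemma exists_weight_lt (h : IsChainResolution 𝒮 w) {ε : ℝ} (hε : 0 < ε) :
    ∃ m, ∀ n ≥ m, ∀ P ∈ 𝒮 n, w n P < ε := by
  obtain ⟨m, hm⟩ := exists_pow_lt_of_lt_one hε (show (1 / 2 : ℝ) < 1 by norm_num)
  exact ⟨m, fun n hmn P hP => (h.weight_le n P hP).trans_lt
    ((pow_le_pow_of_le_one (by norm_num) (by norm_num) hmn).trans_lt hm)⟩

lemma chainDist_self (h : IsChainResolution 𝒮 w) (x : X) : chainDist 𝒮 w x x = 0 := by
  refine le_antisymm (le_of_forall_pos_le_add fun ε hε => ?_)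
    (h.le_chainDist fun n c hc => hc.nonneg fun P hP => (h.weight_pos n P hP).le)
  obtain ⟨n, hn⟩ := h.exists_weight_lt hε
  obtain ⟨P, hP, hx⟩ := h.cover n x
  linarith [h.chainDist_le (.single hP hx hx), hn n le_rfl P hP]

lemma chainDist_comm (h : IsChainResolution 𝒮 w) (x y : X) :
    chainDist 𝒮 w x y = chainDist 𝒮 w y x :=
  le_antisymm (h.le_chainDist fun _ _ hc => h.chainDist_le hc.symm)
    (h.le_chainDist fun _ _ hc => h.chainDist_le hc.symm)

lemma chainDist_triangle (h : IsChainResolution 𝒮 w) (x y z : X) :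
    chainDist 𝒮 w x z ≤ chainDist 𝒮 w x y + chainDist 𝒮 w y z := by
  refine le_of_forall_pos_le_add fun ε hε => ?_
  obtain ⟨n, -, c, hc, hxy⟩ := h.exists_cellChain_lt x y (half_pos hε) 0
  obtain ⟨m, hm, c', hc', hyz⟩ := h.exists_cellChain_lt y z (half_pos hε) n
  obtain ⟨c'', hc''c, hxy'⟩ := exists_cellChain_of_le h.chainDiamLE hm hxy
  linarith [h.chainDist_le (hxy'.trans hyz)]

lemma eq_of_chainDist_eq_zero (h : IsChainResolution 𝒮 w) {x y : X}
    (hxy : chainDist 𝒮 w x y = 0) : x = y := by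
  by_contra hne
  obtain ⟨r, hr, hle⟩ := h.exists_le x y hne
  linarith [h.le_chainDist hle]

open Topology in
lemma eventually_chainDist_lt (h : IsChainResolution 𝒮 w) (x : X) {ε : ℝ} (hε : 0 < ε) :
    ∀ᶠ y in 𝓝 x, chainDist 𝒮 w y x < ε := by
  obtain ⟨n, hn⟩ := h.exists_weight_lt hε
  have hfar : IsClosed (⋃ P ∈ {P ∈ 𝒮 n | x ∉ closure P}, closure P) :=
    ((h.finite n).subset (sep_subset _ _)).isClosed_biUnion fun _ _ => isClosed_closure
  filter_upwards [hfar.isOpen_compl.mem_nhds (by simp)] with y hy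
  obtain ⟨P, hP, hyP⟩ := h.cover n y
  have hxP : x ∈ closure P := by
    by_contra hxP
    exact hy (mem_biUnion (mem_sep hP hxP) hyP)
  exact (h.chainDist_le (.single hP hyP hxP)).trans_lt (hn n le_rfl P hP)

/-- The underlying set of a space with a chain resolution, as a type to carry the chain metric. -/
def ChainSpace (_ : IsChainResolution 𝒮 w) : Type _ := X

/-- The identity, as a map to the same points with the chain metric. -/
def toChainSpace (h : IsChainResolution 𝒮 w) : X ≃ h.ChainSpace := Equiv.refl X

noncomputable instance (h : IsChainResolution 𝒮 w) : MetricSpace h.ChainSpace where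
  dist x y := chainDist 𝒮 w (h.toChainSpace.symm x) (h.toChainSpace.symm y)
  dist_self _ := h.chainDist_self _
  dist_comm _ _ := h.chainDist_comm _ _
  dist_triangle _ _ _ := h.chainDist_triangle _ _ _
  eq_of_dist_eq_zero hxy := h.toChainSpace.symm.injective (h.eq_of_chainDist_eq_zero hxy)

lemma continuous_toChainSpace (h : IsChainResolution 𝒮 w) : Continuous h.toChainSpace :=
  continuous_iff_continuousAt.2 fun x => Metric.tendsto_nhds.2 fun _ hε =>
    h.eventually_chainDist_lt x hε

/-- The chain metric induces the original topology. -/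
noncomputable def homeomorphChainSpace [CompactSpace X] (h : IsChainResolution 𝒮 w) :
    X ≃ₜ h.ChainSpace :=
  h.continuous_toChainSpace.homeoOfEquivCompactToT2

instance [CompactSpace X] (h : IsChainResolution 𝒮 w) : CompactSpace h.ChainSpace :=
  h.homeomorphChainSpace.compactSpace

end

theorem isLengthSpace_chainSpace {X : Type} [TopologicalSpace X] [CompactSpace X]
    {𝒮 : ℕ → Set (Set X)} {w : ℕ → Set X → ℝ} (h : IsChainResolution 𝒮 w) :
    IsLengthSpace h.ChainSpace := by
  refine isLengthSpace_of_almostPath fun x y ε hε => ?_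
  obtain ⟨m, hm⟩ := h.exists_weight_lt hε
  obtain ⟨n, hmn, c, hc, hxy⟩ := h.exists_cellChain_lt (h.toChainSpace.symm x)
    (h.toChainSpace.symm y) hε m
  refine ⟨c, hc.le, hxy.exists_isAlmostPath (φ := h.toChainSpace) (fun P hP => ?_)
    fun P hP => ⟨h.weight_pos n P hP, (hm n hmn P hP).le⟩⟩
  rintro _ ⟨a, ha, rfl⟩ _ ⟨b, hb, rfl⟩
  exact h.chainDist_le (.single hP ha hb)

end IsChainResolution

end ChainMetric

section Lacunary

open TopologicalSpace
open scoped BoundedContinuousFunction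

lemma abs_sub_le_one_of_disjoint_range_intCast {H : Set ℝ} (hH : IsPreconnected H)
    (hd : Disjoint H (range ((↑) : ℤ → ℝ))) {x y : ℝ} (hx : x ∈ H) (hy : y ∈ H) :
    |x - y| ≤ 1 := by
  wlog hxy : x ≤ y generalizing x y
  · rw [abs_sub_comm]
    exact this hy hx (le_of_not_ge hxy)
  rw [abs_sub_comm, abs_of_nonneg (sub_nonneg.2 hxy)]
  by_contra! hlt
  have hceil : (⌈x⌉ : ℝ) ∈ Icc x y := ⟨Int.le_ceil x, by linarith [Int.ceil_lt_add_one x]⟩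
  exact hd.notMem_of_mem_left (hH.Icc_subset hx hy hceil) (mem_range_self _)

lemma exists_add_half_notMem_range_intCast (t : ℝ) :
    ∃ b : Fin 2, t + (b : ℕ) / 2 ∉ range ((↑) : ℤ → ℝ) := by
  by_contra! h
  obtain ⟨m, hm⟩ := h 0
  obtain ⟨n, hn⟩ := h 1
  have hmn : 2 * n = 2 * m + 1 := by
    have : 2 * (n : ℝ) = 2 * m + 1 := by
      rw [hm, hn]
      simp
      ring
    exact_mod_cast this
  omega

/-- The bounded sequences whose first `k` terms avoid the lattices `r (ℤ - c n / 2)`. A preconnected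
set in one color varies by at most `r` in each of these coordinates. -/
def latticeColor (r : ℝ) {k : ℕ} (c : Fin k → Fin 2) : Set (ℕ →ᵇ ℝ) :=
  {z | ∀ n : Fin k, z n / r + (c n : ℕ) / 2 ∉ range ((↑) : ℤ → ℝ)}

variable {r : ℝ} {k : ℕ}

lemma continuous_coordinate (r b : ℝ) (n : ℕ) : Continuous fun z : ℕ →ᵇ ℝ => z n / r + b :=
  ((continuous_eval_const n).div_const r).add_const b

lemma isOpen_latticeColor (r : ℝ) (c : Fin k → Fin 2) : IsOpen (latticeColor r c) := by
  simp only [latticeColor, ofPred_forall]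
  exact isOpen_iInter_of_finite fun n =>
    Int.isClosedEmbedding_coe_real.isClosed_range.isOpen_compl.preimage
      (continuous_coordinate r _ n)

lemma exists_mem_latticeColor (r : ℝ) (k : ℕ) (z : ℕ →ᵇ ℝ) :
    ∃ c : Fin k → Fin 2, z ∈ latticeColor r c := by
  choose c hc using fun n : Fin k => exists_add_half_notMem_range_intCast (z n / r)
  exact ⟨c, hc⟩

lemma diamLE_of_subset_latticeColor (hr : 0 < r) {c : Fin k → Fin 2} {H : Set (ℕ →ᵇ ℝ)}
    (hH : IsPreconnected H) (hHc : H ⊆ latticeColor r c)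
    (htail : ∀ z ∈ H, ∀ n ≥ k, z n ∈ Icc 0 r) : DiamLE H r := by
  intro x hx y hy
  refine (BoundedContinuousFunction.dist_le hr.le).2 fun n => ?_
  rw [Real.dist_eq]
  rcases lt_or_ge n k with hn | hn
  · have hcoord := abs_sub_le_one_of_disjoint_range_intCast
      (hH.image _ (continuous_coordinate r ((c ⟨n, hn⟩ : ℕ) / 2) n).continuousOn)
      (disjoint_left.2 <| forall_mem_image.2 fun z hz => hHc hz ⟨n, hn⟩)
      (mem_image_of_mem _ hx) (mem_image_of_mem _ hy)
    rwa [add_sub_add_right_eq_sub, ← sub_div, abs_div, abs_of_pos hr, div_le_one hr] at hcoord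
  · obtain ⟨hx₀, hxr⟩ := htail x hx n hn
    obtain ⟨hy₀, hyr⟩ := htail y hy n hn
    exact abs_sub_le_iff.2 ⟨by linarith, by linarith⟩

lemma exists_isColoring_of_tail {Z : Set (ℕ →ᵇ ℝ)} (hr : 0 < r)
    (htail : ∀ z ∈ Z, ∀ n ≥ k, z n ∈ Icc 0 r) :
    ∃ 𝒪 : Finset (Set Z), 𝒪.card ≤ 2 ^ k ∧ IsColoring 𝒪 r := by
  classical
  refine ⟨Finset.univ.image fun c : Fin k → Fin 2 => ((↑) : Z → ℕ →ᵇ ℝ) ⁻¹' latticeColor r c,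
    Finset.card_image_le.trans (by simp), hr.le, ?_, fun z => ?_, ?_⟩
  · simp only [Finset.forall_mem_image]
    exact fun c _ => (isOpen_latticeColor r c).preimage continuous_subtype_val
  · obtain ⟨c, hc⟩ := exists_mem_latticeColor r k z
    exact ⟨_, Finset.mem_image_of_mem _ (Finset.mem_univ c), hc⟩
  · simp only [Finset.forall_mem_image]
    intro c _ H hHc hH x hx y hy
    exact diamLE_of_subset_latticeColor hr (hH.image _ continuous_subtype_val.continuousOn)
      (image_subset_iff.2 hHc) (forall_mem_image.2 fun z _ => htail z z.2) _
      (mem_image_of_mem _ hx) _ (mem_image_of_mem _ hy)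

lemma thinlyColored_of_lacunary {Z : Set (ℕ →ᵇ ℝ)}
    (hZ : ∀ z ∈ Z, ∀ n, z n ∈ Icc (0 : ℝ) ((1 / 16) ^ n)) : ThinlyColored Z := by
  intro η hη
  obtain ⟨k, hk⟩ := exists_pow_lt_of_lt_one hη (show (1 / 8 : ℝ) < 1 by norm_num)
  obtain ⟨𝒪, hcard, h𝒪⟩ := exists_isColoring_of_tail (Z := Z) (k := k)
    (r := (1 / 16) ^ k) (by positivity) fun z hz n hn => Icc_subset_Icc_right
      (pow_le_pow_of_le_one (by norm_num) (by norm_num) hn) (hZ z hz n)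
  refine ⟨𝒪, _, h𝒪, ?_⟩
  calc (𝒪.card : ℝ) * (1 / 16) ^ k ≤ 2 ^ k * (1 / 16) ^ k := by
        gcongr
        exact_mod_cast hcard
    _ = (1 / 8) ^ k := by
        rw [← mul_pow]
        norm_num
    _ ≤ η := hk.le

variable {X : Type*} [PseudoMetricSpace X]

/-- The coordinates `16⁻ⁿ min(1, d(x, uₙ))` of a point `x` with respect to a sequence `u`. -/
noncomputable def lacunaryEmbedding (u : ℕ → X) (x : X) : ℕ →ᵇ ℝ :=
  BoundedContinuousFunction.ofNormedAddCommGroupDiscrete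
    (fun n => (1 / 16) ^ n * min 1 (dist x (u n))) 1 fun n => by
      rw [Real.norm_of_nonneg (by positivity)]
      exact mul_le_one₀ (pow_le_one₀ (by norm_num) (by norm_num)) (by positivity) (min_le_left _ _)

lemma lacunaryEmbedding_apply (u : ℕ → X) (x : X) (n : ℕ) :
    lacunaryEmbedding u x n = (1 / 16) ^ n * min 1 (dist x (u n)) := rfl

lemma lacunaryEmbedding_apply_mem_Icc (u : ℕ → X) (x : X) (n : ℕ) :
    lacunaryEmbedding u x n ∈ Icc (0 : ℝ) ((1 / 16) ^ n) := by
  rw [lacunaryEmbedding_apply]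
  exact ⟨by positivity, mul_le_of_le_one_right (by positivity) (min_le_left _ _)⟩

lemma continuous_lacunaryEmbedding (u : ℕ → X) : Continuous (lacunaryEmbedding u) := by
  refine (LipschitzWith.of_dist_le_mul (K := 1) fun x y => ?_).continuous
  refine (BoundedContinuousFunction.dist_le (by positivity)).2 fun n => ?_
  have hpow : (1 / 16 : ℝ) ^ n ≤ 1 := pow_le_one₀ (by norm_num) (by norm_num)
  have hmin : |min 1 (dist x (u n)) - min 1 (dist y (u n))| ≤ dist x y := by
    refine (abs_min_sub_min_le_max _ _ _ _).trans (max_le ?_ (abs_dist_sub_le x y (u n)))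
    rw [sub_self, abs_zero]
    exact dist_nonneg
  rw [lacunaryEmbedding_apply, lacunaryEmbedding_apply, Real.dist_eq, ← mul_sub, abs_mul,
    abs_of_nonneg (by positivity), NNReal.coe_one]
  exact mul_le_mul hpow hmin (abs_nonneg _) zero_le_one

lemma injective_lacunaryEmbedding {X : Type*} [MetricSpace X] {u : ℕ → X} (hu : DenseRange u) :
    Function.Injective (lacunaryEmbedding u) := by
  intro x y hxy
  have hcoord : ∀ n, min 1 (dist x (u n)) = min 1 (dist y (u n)) := fun n =>
    mul_left_cancel₀ (by positivity : ((1 / 16 : ℝ) ^ n) ≠ 0) (DFunLike.congr_fun hxy n)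
  have hmin : (fun z => min 1 (dist x z)) = fun z => min 1 (dist y z) :=
    hu.equalizer (by fun_prop) (by fun_prop) (funext hcoord)
  have hy := congrFun hmin y
  simp only [dist_self, zero_le_one, inf_of_le_right] at hy
  exact dist_le_zero.1 ((min_le_iff.1 hy.le).resolve_left (by norm_num))

lemma exists_homeomorph_thinlyColored (X : Type*) [MetricSpace X] [Nonempty X] [CompactSpace X] :
    ∃ Z : Set (ℕ →ᵇ ℝ), ThinlyColored Z ∧ Nonempty (X ≃ₜ Z) := by
  have hemb := (continuous_lacunaryEmbedding (denseSeq X)).isClosedEmbedding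
    (injective_lacunaryEmbedding (denseRange_denseSeq X))
  exact ⟨range (lacunaryEmbedding (denseSeq X)), thinlyColored_of_lacunary
    (forall_mem_range.2 (lacunaryEmbedding_apply_mem_Icc _)), ⟨hemb.isEmbedding.toHomeomorph⟩⟩

end Lacunary

/-- Every Peano space (nonempty compact, connected, locally connected metric space)
is homeomorphic to a compact length space. -/
theorem peano_homeomorphic_compact_length_space
    (X : Type) [MetricSpace X] [Nonempty X] [CompactSpace X] [ConnectedSpace X]
    [LocallyConnectedSpace X] :
    ∃ (Y : Type) (m : MetricSpace Y), letI := m;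
      CompactSpace Y ∧ IsLengthSpace Y ∧ Nonempty (X ≃ₜ Y) := by
  obtain ⟨Z, hZ, ⟨e⟩⟩ := exists_homeomorph_thinlyColored X
  have : CompactSpace Z := e.compactSpace
  have : ConnectedSpace Z := e.surjective.connectedSpace e.continuous
  have : LocallyConnectedSpace Z := e.symm.locallyConnectedSpace
  obtain ⟨𝒮, w, h⟩ := exists_isChainResolution hZ
  exact ⟨h.ChainSpace, inferInstance, inferInstance, h.isLengthSpace_chainSpace,
    ⟨e.trans h.homeomorphChainSpace⟩⟩
end

section
/- If X is a Peano space and (T_n) is a sequence of pairwise distinct maximal cyclic subsets of X, then diam(T_n) → 0. -/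
open Metric Set Filter

/-- A Jordan curve: a subset homeomorphic to the circle. -/
def IsJordanCurve {X : Type} [TopologicalSpace X] (J : Set X) : Prop :=
  Nonempty (AddCircle (1 : ℝ) ≃ₜ J)

/-- A set is cyclicly connected if every pair of its points lies on a Jordan curve in it. -/
def CyclicallyConnected {X : Type} [TopologicalSpace X] (C : Set X) : Prop :=
  ∀ x ∈ C, ∀ y ∈ C, ∃ J : Set X, J ⊆ C ∧ IsJordanCurve J ∧ x ∈ J ∧ y ∈ J

/-- A maximal cyclic subset: non-degenerate, cyclicly connected, and not a proper subset
of any cyclicly connected subset. -/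
def MaximalCyclic {X : Type} [TopologicalSpace X] (T : Set X) : Prop :=
  ¬ T.Subsingleton ∧ CyclicallyConnected T ∧
    ∀ C : Set X, CyclicallyConnected C → T ⊆ C → C = T

/-!
If infinitely many of the sets had diameter greater than `ε`, compactness would give two of them,
`S` and `T`, with points `a, b ∈ S` and `a', b' ∈ T` such that `a, b` are more than `ε` apart while
`a` is close to `a'` and `b` to `b'`. A compact locally connected metric space is uniformly locally
arcwise connected, so there are disjoint arcs from `a` to `a'` and from `b` to `b'`. Cut short where
they first meet a Jordan curve in `T` through `a'` and `b'`, and joined by an arc of this curve,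
they give an arc from `a` to `b` with two points in `T`. A maximal cyclic set contains every arc
with end points in it and every cyclicly connected set having two points in common with it: attach
chords. So `S` contains this arc, has two points in common with `T`, and equals `T`.

Small arcs come from small paths. A path is the limit of functions with smaller and smaller jumps,
each obtained by refining the previous one inside small connected sets. An arc in the image of a
path `f` is found by cutting out loops: on a minimal closed set `K` of remaining times, `f` only
identifies the two ends of each gap of `K`. To reparametrize by a real interval, measure the
compact sets `f '' (K ∩ [0, t])` by a continuous strictly increasing function on the hyperspace.
-/

/-! ### Arcs -/

/-- `A` is an arc from `a` to `b`, given by a parametrization over a compact interval of real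
numbers. The one-point arc is allowed, when `a = b`. -/
def IsArcBetween {X : Type*} [TopologicalSpace X] (A : Set X) (a b : X) : Prop :=
  ∃ (u v : ℝ) (f : ℝ → X), u ≤ v ∧ ContinuousOn f (Icc u v) ∧ InjOn f (Icc u v) ∧
    f u = a ∧ f v = b ∧ f '' Icc u v = A

section Arcs

variable {X : Type*} [TopologicalSpace X] {A B F : Set X} {a b c x : X}

theorem exists_eqOn_Iic_Ici {α β : Type*} [LinearOrder α] {f g : α → β} {v : α}
    (hfg : f v = g v) : ∃ h : α → β, EqOn h f (Iic v) ∧ EqOn h g (Ici v) := by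
  refine ⟨fun t => if t ≤ v then f t else g t, fun t ht => if_pos ht, fun t ht => ?_⟩
  rcases (mem_Ici.1 ht).eq_or_lt with rfl | hlt
  · exact (if_pos le_rfl).trans hfg
  · exact if_neg hlt.not_ge

theorem exists_continuousOn_concat {u v w : ℝ} (huv : u ≤ v) (hvw : v ≤ w) {f g : ℝ → X}
    (hf : ContinuousOn f (Icc u v)) (hg : ContinuousOn g (Icc v w)) (hfg : f v = g v) :
    ∃ h : ℝ → X, ContinuousOn h (Icc u w) ∧ EqOn h f (Icc u v) ∧ EqOn h g (Icc v w) := by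
  obtain ⟨h, h_left, h_right⟩ := exists_eqOn_Iic_Ici hfg
  replace h_left : EqOn h f (Icc u v) := h_left.mono Icc_subset_Iic_self
  replace h_right : EqOn h g (Icc v w) := h_right.mono Icc_subset_Ici_self
  refine ⟨h, ?_, h_left, h_right⟩
  rw [← Icc_union_Icc_eq_Icc huv hvw]
  exact (hf.congr h_left).union_of_isClosed (hg.congr h_right) isClosed_Icc isClosed_Icc

namespace IsArcBetween

theorem left_mem (h : IsArcBetween A a b) : a ∈ A := by
  obtain ⟨u, v, f, huv, -, -, rfl, -, rfl⟩ := h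
  exact mem_image_of_mem f (left_mem_Icc.2 huv)

theorem right_mem (h : IsArcBetween A a b) : b ∈ A := by
  obtain ⟨u, v, f, huv, -, -, -, rfl, rfl⟩ := h
  exact mem_image_of_mem f (right_mem_Icc.2 huv)

theorem isCompact (h : IsArcBetween A a b) : IsCompact A := by
  obtain ⟨u, v, f, -, hf, -, -, -, rfl⟩ := h
  exact isCompact_Icc.image_of_continuousOn hf

theorem exists_param (h : IsArcBetween A a b) (u : ℝ) :
    ∃ (v : ℝ) (f : ℝ → X), u ≤ v ∧ ContinuousOn f (Icc u v) ∧ InjOn f (Icc u v) ∧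
      f u = a ∧ f v = b ∧ f '' Icc u v = A := by
  obtain ⟨s, t, f, hst, hf, hinj, rfl, rfl, rfl⟩ := h
  have himg : (fun r => r + (s - u)) '' Icc u (u + (t - s)) = Icc s t := by
    rw [image_add_const_Icc, add_sub_cancel, add_assoc, sub_add_sub_cancel, add_sub_cancel]
  have hmaps : MapsTo (fun r => r + (s - u)) (Icc u (u + (t - s))) (Icc s t) := by
    rw [← himg]
    exact mapsTo_image _ _
  refine ⟨u + (t - s), f ∘ fun r => r + (s - u), by linarith, hf.comp (by fun_prop) hmaps,
    hinj.comp (add_left_injective _).injOn hmaps, by simp, ?_, by rw [image_comp, himg]⟩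
  exact congrArg f (by ring)

protected theorem symm (h : IsArcBetween A a b) : IsArcBetween A b a := by
  obtain ⟨s, t, f, hst, hf, hinj, rfl, rfl, rfl⟩ := h
  have himg : Neg.neg '' Icc (-t) (-s) = Icc s t := by simp
  have hmaps : MapsTo Neg.neg (Icc (-t) (-s)) (Icc s t) := by
    rw [← himg]
    exact mapsTo_image _ _
  exact ⟨-t, -s, f ∘ Neg.neg, neg_le_neg hst, hf.comp (by fun_prop) hmaps,
    hinj.comp neg_injective.injOn hmaps, by simp, by simp, by rw [image_comp, himg]⟩

protected theorem trans (hA : IsArcBetween A a b) (hB : IsArcBetween B b c)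
    (hAB : A ∩ B ⊆ {b}) : IsArcBetween (A ∪ B) a c := by
  obtain ⟨u, v, f, huv, hf, hfi, rfl, rfl, rfl⟩ := hA
  obtain ⟨w, g, hvw, hg, hgi, hgv, rfl, rfl⟩ := hB.exists_param v
  obtain ⟨h, hh, h_left, h_right⟩ := exists_continuousOn_concat huv hvw hf hg hgv.symm
  have hsub : Ioc v w ⊆ Icc v w := Ioc_subset_Icc_self
  have hne : ∀ s ∈ Icc u v, ∀ t ∈ Ioc v w, h s ≠ h t := by
    intro s hs t ht hst
    rw [h_left hs, h_right (hsub ht)] at hst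
    have hmeet : g t = f v := hAB ⟨hst ▸ mem_image_of_mem f hs, mem_image_of_mem g (hsub ht)⟩
    exact ht.1.ne (hgi (left_mem_Icc.2 hvw) (hsub ht) (hgv.trans hmeet.symm))
  refine ⟨u, w, h, huv.trans hvw, hh, ?_, h_left (left_mem_Icc.2 huv),
    h_right (right_mem_Icc.2 hvw), ?_⟩
  · rw [← Icc_union_Ioc_eq_Icc huv hvw, injOn_union (disjoint_left.2 fun t hs ht =>
      hs.2.not_gt ht.1)]
    exact ⟨hfi.congr h_left.symm, (hgi.congr h_right.symm).mono hsub, hne⟩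
  · rw [← Icc_union_Icc_eq_Icc huv hvw, image_union, h_left.image_eq, h_right.image_eq]

theorem exists_split (h : IsArcBetween A a b) (hx : x ∈ A) :
    ∃ P Q, IsArcBetween P a x ∧ IsArcBetween Q x b ∧ P ∪ Q = A ∧ P ∩ Q = {x} := by
  obtain ⟨u, v, f, -, hf, hfi, rfl, rfl, rfl⟩ := h
  obtain ⟨t, ht, rfl⟩ := hx
  have hleft : Icc u t ⊆ Icc u v := Icc_subset_Icc_right ht.2
  have hright : Icc t v ⊆ Icc u v := Icc_subset_Icc_left ht.1
  refine ⟨f '' Icc u t, f '' Icc t v,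
    ⟨u, t, f, ht.1, hf.mono hleft, hfi.mono hleft, rfl, rfl, rfl⟩,
    ⟨t, v, f, ht.2, hf.mono hright, hfi.mono hright, rfl, rfl, rfl⟩, ?_, ?_⟩
  · rw [← image_union, Icc_union_Icc_eq_Icc ht.1 ht.2]
  · rw [← hfi.image_inter hleft hright, Icc_inter_Icc_eq_singleton ht.1 ht.2, image_singleton]

theorem exists_first_hit (h : IsArcBetween A a b) (hF : IsClosed F) (hAF : (A ∩ F).Nonempty) :
    ∃ P q, IsArcBetween P a q ∧ P ⊆ A ∧ P ∩ F = {q} := by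
  obtain ⟨u, v, f, -, hf, hfi, rfl, rfl, rfl⟩ := h
  have hcompact : IsCompact (Icc u v ∩ f ⁻¹' F) :=
    isCompact_Icc.of_isClosed_subset (hf.preimage_isClosed_of_isClosed isClosed_Icc hF)
      inter_subset_left
  obtain ⟨_, ⟨s, hs, rfl⟩, hsF⟩ := hAF
  obtain ⟨t, ⟨ht, htF⟩, hmin⟩ := hcompact.exists_isLeast ⟨s, hs, hsF⟩
  have hsub : Icc u t ⊆ Icc u v := Icc_subset_Icc_right ht.2
  refine ⟨f '' Icc u t, f t, ⟨u, t, f, ht.1, hf.mono hsub, hfi.mono hsub, rfl, rfl, rfl⟩,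
    image_mono hsub, Subset.antisymm ?_ ?_⟩
  · rintro _ ⟨⟨r, hr, rfl⟩, hrF⟩
    exact congrArg f (hr.2.antisymm (hmin ⟨hsub hr, hrF⟩))
  · rintro _ rfl
    exact ⟨mem_image_of_mem f (right_mem_Icc.2 ht.1), htF⟩

theorem exists_chord (h : IsArcBetween A a b) (hF : IsClosed F) (ha : a ∈ F) (hb : b ∈ F)
    (hxA : x ∈ A) (hxF : x ∉ F) :
    ∃ D p q, IsArcBetween D p q ∧ p ≠ q ∧ D ⊆ A ∧ x ∈ D ∧ D ∩ F = {p, q} := by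
  obtain ⟨P, Q, hP, hQ, rfl, hPQ⟩ := h.exists_split hxA
  obtain ⟨P', p, hP', hP'P, hp⟩ := hP.symm.exists_first_hit hF ⟨a, hP.left_mem, ha⟩
  obtain ⟨Q', q, hQ', hQ'Q, hq⟩ := hQ.exists_first_hit hF ⟨b, hQ.right_mem, hb⟩
  have hinter : P' ∩ Q' ⊆ {x} := (inter_subset_inter hP'P hQ'Q).trans hPQ.subset
  refine ⟨P' ∪ Q', p, q, hP'.symm.trans hQ' hinter, ?_, union_subset_union hP'P hQ'Q,
    .inl hP'.left_mem, by rw [union_inter_distrib_right, hp, hq, singleton_union]⟩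
  rintro rfl
  obtain rfl := hinter ⟨hP'.right_mem, hQ'.right_mem⟩
  exact hxF (hp.ge rfl).2

end IsArcBetween

end Arcs

/-! ### Jordan curves -/

section JordanCurves

variable {X : Type} [TopologicalSpace X] {A B J : Set X} {a b x y z : X}

theorem IsJordanCurve.isCompact (h : IsJordanCurve J) : IsCompact J := by
  obtain ⟨φ⟩ := h
  rw [isCompact_iff_compactSpace]
  exact φ.compactSpace

theorem IsJordanCurve.cyclicallyConnected (h : IsJordanCurve J) : CyclicallyConnected J :=
  fun _ hx _ hy => ⟨J, Subset.rfl, h, hx, hy⟩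

theorem IsJordanCurve.exists_loop (h : IsJordanCurve J) (ha : a ∈ J) :
    ∃ f : ℝ → X, Continuous f ∧ f 0 = a ∧ f 1 = a ∧ InjOn f (Ico 0 1) ∧ InjOn f (Ioc 0 1) ∧
      f '' Icc 0 1 = J := by
  obtain ⟨φ⟩ := h
  let f : ℝ → X := fun t => φ ((t : AddCircle (1 : ℝ)) + φ.symm ⟨a, ha⟩)
  have hf : Continuous f := by
    have : Continuous fun t : ℝ => (t : AddCircle (1 : ℝ)) := AddCircle.continuous_mk' 1
    fun_prop
  have heq : ∀ {s t : ℝ}, f s = f t ↔ (s : AddCircle (1 : ℝ)) = t := by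
    simp [f, Subtype.coe_inj]
  have h0 : f 0 = a := by simp [f]
  refine ⟨f, hf, h0, ?_, ?_, ?_, ?_⟩
  · rw [← h0, heq, AddCircle.coe_period, AddCircle.coe_zero]
  · exact fun s hs t ht hst => (AddCircle.coe_eq_coe_iff_of_mem_Ico (a := 0)
      (by simpa using hs) (by simpa using ht)).1 (heq.1 hst)
  · exact fun s hs t ht hst => (AddCircle.coe_eq_coe_iff_of_mem_Ioc (a := 0)
      (by simpa using hs) (by simpa using ht)).1 (heq.1 hst)
  · refine Subset.antisymm (image_subset_iff.2 fun s _ => Subtype.coe_prop _) fun z hz => ?_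
    obtain ⟨t, ht, hte⟩ := AddCircle.eq_coe_Ico (φ.symm ⟨z, hz⟩ - φ.symm ⟨a, ha⟩)
    exact ⟨t, Ico_subset_Icc_self ht, by simp [f, hte]⟩

theorem IsJordanCurve.exists_arcs (h : IsJordanCurve J) (ha : a ∈ J) (hb : b ∈ J) (hab : a ≠ b) :
    ∃ P Q, IsArcBetween P a b ∧ IsArcBetween Q a b ∧ P ∪ Q = J ∧ P ∩ Q = {a, b} := by
  obtain ⟨f, hf, h0, h1, hIco, hIoc, rfl⟩ := h.exists_loop ha
  obtain ⟨t, ht, rfl⟩ := hb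
  have ht0 : 0 < t := ht.1.lt_of_ne (by rintro rfl; exact hab h0.symm)
  have ht1 : t < 1 := ht.2.lt_of_ne (by rintro rfl; exact hab h1.symm)
  have hP : IsArcBetween (f '' Icc 0 t) a (f t) :=
    ⟨0, t, f, ht.1, hf.continuousOn, hIco.mono (Icc_subset_Ico_right ht1), h0, rfl, rfl⟩
  have hQ : IsArcBetween (f '' Icc t 1) (f t) a :=
    ⟨t, 1, f, ht.2, hf.continuousOn, hIoc.mono (Icc_subset_Ioc_left ht0), rfl, h1, rfl⟩
  refine ⟨_, _, hP, hQ.symm, by rw [← image_union, Icc_union_Icc_eq_Icc ht.1 ht.2],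
    Subset.antisymm ?_ (pair_subset ⟨hP.left_mem, hQ.right_mem⟩ ⟨hP.right_mem, hQ.left_mem⟩)⟩
  rintro _ ⟨⟨s, hs, rfl⟩, r, hr, hrs⟩
  rcases hr.2.eq_or_lt with rfl | hr1
  · exact .inl (hrs.symm.trans h1)
  · obtain rfl : r = s := hIco ⟨ht.1.trans hr.1, hr1⟩ ⟨hs.1, hs.2.trans_lt ht1⟩ hrs
    exact .inr (congrArg f (hs.2.antisymm hr.1))

theorem IsJordanCurve.exists_arc_mem (h : IsJordanCurve J) (hx : x ∈ J) (hy : y ∈ J) (hz : z ∈ J)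
    (hxy : x ≠ y) : ∃ A, IsArcBetween A x y ∧ A ⊆ J ∧ z ∈ A := by
  obtain ⟨P, Q, hP, hQ, rfl, -⟩ := h.exists_arcs hx hy hxy
  exact hz.elim (fun hz => ⟨P, hP, subset_union_left, hz⟩)
    fun hz => ⟨Q, hQ, subset_union_right, hz⟩

theorem isJordanCurve_image_Icc [T2Space X] {f : ℝ → X} {w : ℝ} (hw : 0 < w)
    (hf : ContinuousOn f (Icc 0 w)) (h0w : f 0 = f w) (hinj : InjOn f (Ico 0 w)) :
    IsJordanCurve (f '' Icc 0 w) := by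
  have : Fact (0 < w) := ⟨hw⟩
  have hcont : Continuous (AddCircle.liftIco w 0 f) := AddCircle.liftIco_zero_continuous h0w hf
  have hinjective : Function.Injective (AddCircle.liftIco w 0 f) := by
    rw [← zero_add w] at hinj
    exact hinj.injective.comp (AddCircle.equivIco w 0).injective
  have hrange : range (AddCircle.liftIco w 0 f) = f '' Icc 0 w := by
    rw [AddCircle.liftIco, range_comp, (AddCircle.equivIco w 0).surjective.range_eq, image_univ,
      range_domRestrict, zero_add, ← Ico_union_right hw.le, image_union, image_singleton, ← h0w]
    exact (union_eq_left.2 (singleton_subset_iff.2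
      (mem_image_of_mem f (left_mem_Ico.2 hw)))).symm
  rw [← hrange]
  exact ⟨(AddCircle.homeomorphAddCircle 1 w one_ne_zero hw.ne').trans
    (hcont.isClosedEmbedding hinjective).isEmbedding.toHomeomorph⟩

theorem IsArcBetween.isJordanCurve_union [T2Space X] (hA : IsArcBetween A a b)
    (hB : IsArcBetween B a b) (hab : a ≠ b) (hAB : A ∩ B ⊆ {a, b}) :
    IsJordanCurve (A ∪ B) := by
  obtain ⟨v, f, huv, hf, hfi, rfl, rfl, rfl⟩ := hA.exists_param 0
  obtain ⟨w, g, hvw, hg, hgi, hgv, hgw, rfl⟩ := hB.symm.exists_param v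
  obtain ⟨h, hh, h_left, h_right⟩ := exists_continuousOn_concat huv hvw hf hg hgv.symm
  have hv : 0 < v := huv.lt_of_ne (by rintro rfl; exact hab rfl)
  have hvw' : v < w := hvw.lt_of_ne (by rintro rfl; exact hab (hgw.symm.trans hgv))
  have hsub : Ioo v w ⊆ Icc v w := Ioo_subset_Icc_self
  have hne : ∀ s ∈ Icc 0 v, ∀ t ∈ Ioo v w, h s ≠ h t := by
    intro s hs t ht hst
    rw [h_left hs, h_right (hsub ht)] at hst
    rcases hAB ⟨hst ▸ mem_image_of_mem f hs, mem_image_of_mem g (hsub ht)⟩ with hmeet | hmeet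
    · exact ht.2.ne (hgi (hsub ht) (right_mem_Icc.2 hvw) (hmeet.trans hgw.symm))
    · exact ht.1.ne (hgi (left_mem_Icc.2 hvw) (hsub ht) (hgv.trans hmeet.symm))
  have hinj : InjOn h (Ico 0 w) := by
    rw [← Icc_union_Ioo_eq_Ico huv hvw', injOn_union (disjoint_left.2 fun t hs ht =>
      hs.2.not_gt ht.1)]
    exact ⟨hfi.congr h_left.symm, (hgi.congr h_right.symm).mono hsub, hne⟩
  rw [← h_left.image_eq, ← h_right.image_eq, ← image_union, Icc_union_Icc_eq_Icc huv hvw]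
  exact isJordanCurve_image_Icc (hv.trans hvw') hh
    (by rw [h_left (left_mem_Icc.2 huv), h_right (right_mem_Icc.2 hvw), hgw]) hinj

end JordanCurves

/-! ### Cyclicly connected sets -/

section CyclicallyConnected

variable {X : Type} [TopologicalSpace X] {A B C C₁ C₂ E F S T : Set X}
  {a b a' b' p q x y : X}

namespace CyclicallyConnected

theorem exists_arc_avoiding (hC : CyclicallyConnected C) (hx : x ∈ C) (hy : y ∈ C)
    (hxy : x ≠ y) (hpx : p ≠ x) (hpy : p ≠ y) : ∃ A, IsArcBetween A x y ∧ A ⊆ C ∧ p ∉ A := by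
  obtain ⟨J, hJC, hJ, hxJ, hyJ⟩ := hC x hx y hy
  obtain ⟨P, Q, hP, hQ, rfl, hPQ⟩ := hJ.exists_arcs hxJ hyJ hxy
  obtain ⟨hPC, hQC⟩ := union_subset_iff.1 hJC
  by_cases hpP : p ∈ P
  · exact ⟨Q, hQ, hQC, fun hpQ => (hPQ.le ⟨hpP, hpQ⟩).elim hpx hpy⟩
  · exact ⟨P, hP, hPC, hpP⟩

variable [T2Space X]

theorem exists_arc_mem (hC : CyclicallyConnected C) (hp : p ∈ C) (hq : q ∈ C) (hpq : p ≠ q)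
    (hy : y ∈ C) : ∃ A, IsArcBetween A p q ∧ A ⊆ C ∧ y ∈ A := by
  by_cases hy_eq : y = p ∨ y = q
  · obtain ⟨J, hJC, hJ, hpJ, hqJ⟩ := hC p hp q hq
    have hyJ : y ∈ J := by rcases hy_eq with rfl | rfl <;> assumption
    obtain ⟨A, hA, hAJ, hyA⟩ := hJ.exists_arc_mem hpJ hqJ hyJ hpq
    exact ⟨A, hA, hAJ.trans hJC, hyA⟩
  · obtain ⟨hyp, hyq⟩ := not_or.1 hy_eq
    obtain ⟨J, hJC, hJ, hyJ, hpJ⟩ := hC y hy p hp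
    obtain ⟨R, hR, hRC, hpR⟩ := hC.exists_arc_avoiding hq hy (Ne.symm hyq) hpq (Ne.symm hyp)
    obtain ⟨R', z, hR', hR'R, hz⟩ :=
      hR.exists_first_hit hJ.isCompact.isClosed ⟨y, hR.right_mem, hyJ⟩
    have hpz : p ≠ z := by
      rintro rfl
      exact hpR (hR'R hR'.right_mem)
    obtain ⟨A, hA, hAJ, hyA⟩ := hJ.exists_arc_mem hpJ (hz.ge rfl).2 hyJ hpz
    exact ⟨A ∪ R', hA.trans hR'.symm fun w hw => hz.le ⟨hw.2, hAJ hw.1⟩,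
      union_subset (hAJ.trans hJC) (hR'R.trans hRC), .inl hyA⟩

theorem union_arc (hC : CyclicallyConnected C) (hE : IsArcBetween E a b) (hab : a ≠ b)
    (hEC : E ∩ C = {a, b}) : CyclicallyConnected (C ∪ E) := by
  obtain ⟨⟨-, ha⟩, -, hb⟩ := pair_subset_iff.1 hEC.ge
  have exists_curve : ∀ x ∈ C, ∃ J ⊆ C ∪ E, IsJordanCurve J ∧ x ∈ J ∧ E ⊆ J := by
    intro x hx
    obtain ⟨D, hD, hDC, hxD⟩ := hC.exists_arc_mem ha hb hab hx
    exact ⟨D ∪ E, union_subset_union_left E hDC,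
      hD.isJordanCurve_union hE hab fun w hw => hEC.le ⟨hw.2, hDC hw.1⟩, .inl hxD,
      subset_union_right⟩
  rintro x (hx | hx) y (hy | hy)
  · obtain ⟨J, hJC, hJ⟩ := hC x hx y hy
    exact ⟨J, hJC.trans subset_union_left, hJ⟩
  · obtain ⟨J, hJC, hJ, hxJ, hEJ⟩ := exists_curve x hx
    exact ⟨J, hJC, hJ, hxJ, hEJ hy⟩
  · obtain ⟨J, hJC, hJ, hyJ, hEJ⟩ := exists_curve y hy
    exact ⟨J, hJC, hJ, hEJ hx, hyJ⟩
  · obtain ⟨J, hJC, hJ, -, hEJ⟩ := exists_curve a ha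
    exact ⟨J, hJC, hJ, hEJ hx, hEJ hy⟩

theorem exists_isClosed_superset (hF : CyclicallyConnected F) (hF_closed : IsClosed F)
    (hE : IsArcBetween E a b) (ha : a ∈ F) (hb : b ∈ F) (hx : x ∈ E) :
    ∃ F', IsClosed F' ∧ CyclicallyConnected F' ∧ F ⊆ F' ∧ F' ⊆ F ∪ E ∧ x ∈ F' := by
  by_cases hxF : x ∈ F
  · exact ⟨F, hF_closed, hF, Subset.rfl, subset_union_left, hxF⟩
  · obtain ⟨D, p, q, hD, hpq, hDE, hxD, hDF⟩ := hE.exists_chord hF_closed ha hb hx hxF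
    exact ⟨F ∪ D, hF_closed.union hD.isCompact.isClosed, hF.union_arc hD hpq hDF,
      subset_union_left, union_subset_union_right F hDE, .inr hxD⟩

theorem exists_isJordanCurve_union (h₁ : CyclicallyConnected C₁) (h₂ : CyclicallyConnected C₂)
    (hp : p ∈ C₁ ∩ C₂) (hq : q ∈ C₁ ∩ C₂) (hpq : p ≠ q) (hx : x ∈ C₁) (hy : y ∈ C₂) :
    ∃ J ⊆ C₁ ∪ C₂, IsJordanCurve J ∧ x ∈ J ∧ y ∈ J := by
  obtain ⟨J, hJC, hJ, hpJ, hqJ⟩ := h₁ p hp.1 q hq.1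
  obtain ⟨E₁, hE₁, hE₁C, hxE₁⟩ := h₁.exists_arc_mem hp.1 hq.1 hpq hx
  obtain ⟨E₂, hE₂, hE₂C, hyE₂⟩ := h₂.exists_arc_mem hp.2 hq.2 hpq hy
  obtain ⟨F, hF_closed, hF, hJF, hFE₁, hxF⟩ :=
    hJ.cyclicallyConnected.exists_isClosed_superset hJ.isCompact.isClosed hE₁ hpJ hqJ hxE₁
  obtain ⟨F', -, hF', hFF', hF'E₂, hyF'⟩ :=
    hF.exists_isClosed_superset hF_closed hE₂ (hJF hpJ) (hJF hqJ) hyE₂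
  obtain ⟨K, hKF', hK⟩ := hF' x (hFF' hxF) y hyF'
  exact ⟨K, (hKF'.trans hF'E₂).trans
    (union_subset_union (hFE₁.trans (union_subset hJC hE₁C)) hE₂C), hK⟩

theorem union (h₁ : CyclicallyConnected C₁) (h₂ : CyclicallyConnected C₂)
    (hp : p ∈ C₁ ∩ C₂) (hq : q ∈ C₁ ∩ C₂) (hpq : p ≠ q) : CyclicallyConnected (C₁ ∪ C₂) := by
  rintro x (hx | hx) y (hy | hy)
  · obtain ⟨J, hJC, hJ⟩ := h₁ x hx y hy
    exact ⟨J, hJC.trans subset_union_left, hJ⟩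
  · exact exists_isJordanCurve_union h₁ h₂ hp hq hpq hx hy
  · obtain ⟨J, hJC, hJ, hyJ, hxJ⟩ := exists_isJordanCurve_union h₁ h₂ hp hq hpq hy hx
    exact ⟨J, hJC, hJ, hxJ, hyJ⟩
  · obtain ⟨J, hJC, hJ⟩ := h₂ x hx y hy
    exact ⟨J, hJC.trans subset_union_right, hJ⟩

end CyclicallyConnected

namespace MaximalCyclic

variable [T2Space X]

theorem subset_of_two_common (hS : MaximalCyclic S) (hC : CyclicallyConnected C)
    (hp : p ∈ S ∩ C) (hq : q ∈ S ∩ C) (hpq : p ≠ q) : C ⊆ S :=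
  union_eq_left.1 (hS.2.2 _ (hS.2.1.union hC hp hq hpq) subset_union_left)

theorem eq_of_two_common (hS : MaximalCyclic S) (hT : MaximalCyclic T)
    (hp : p ∈ S ∩ T) (hq : q ∈ S ∩ T) (hpq : p ≠ q) : S = T :=
  hT.2.2 S hS.2.1 (hS.subset_of_two_common hT.2.1 hp hq hpq)

theorem arc_subset (hS : MaximalCyclic S) (hE : IsArcBetween E a b) (hab : a ≠ b)
    (ha : a ∈ S) (hb : b ∈ S) : E ⊆ S := by
  intro x hx
  obtain ⟨J, -, hJ, haJ, hbJ⟩ := hS.2.1 a ha b hb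
  obtain ⟨F, -, hF, hJF, -, hxF⟩ :=
    hJ.cyclicallyConnected.exists_isClosed_superset hJ.isCompact.isClosed hE haJ hbJ hx
  exact hS.subset_of_two_common hF ⟨ha, hJF haJ⟩ ⟨hb, hJF hbJ⟩ hab hxF

theorem eq_of_disjoint_arcs (hS : MaximalCyclic S) (hT : MaximalCyclic T)
    (hA : IsArcBetween A a a') (hB : IsArcBetween B b b') (hAB : Disjoint A B)
    (ha : a ∈ S) (hb : b ∈ S) (ha' : a' ∈ T) (hb' : b' ∈ T) : S = T := by
  obtain ⟨K, hKT, hK, ha'K, hb'K⟩ := hT.2.1 a' ha' b' hb'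
  obtain ⟨P, p, hP, hPA, hPK⟩ :=
    hA.exists_first_hit hK.isCompact.isClosed ⟨a', hA.right_mem, ha'K⟩
  obtain ⟨Q, q, hQ, hQB, hQK⟩ :=
    hB.exists_first_hit hK.isCompact.isClosed ⟨b', hB.right_mem, hb'K⟩
  have hpK : p ∈ K := (hPK.ge rfl).2
  have hqK : q ∈ K := (hQK.ge rfl).2
  have hpq : p ≠ q := hAB.ne_of_mem (hPA hP.right_mem) (hQB hQ.right_mem)
  obtain ⟨D, hD, hDK, -⟩ := hK.exists_arc_mem hpK hqK hpK hpq
  have hPD : P ∩ D ⊆ {p} := fun w hw => hPK.le ⟨hw.1, hDK hw.2⟩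
  have hPDQ : (P ∪ D) ∩ Q ⊆ {q} := by
    rintro w ⟨hwP | hwD, hwQ⟩
    · exact (hAB.ne_of_mem (hPA hwP) (hQB hwQ) rfl).elim
    · exact hQK.le ⟨hwQ, hDK hwD⟩
  have hE : IsArcBetween (P ∪ D ∪ Q) a b := (hP.trans hD hPD).trans hQ.symm hPDQ
  have hES : P ∪ D ∪ Q ⊆ S :=
    hS.arc_subset hE (hAB.ne_of_mem hA.left_mem hB.left_mem) ha hb
  exact hS.eq_of_two_common hT ⟨hES (.inl (.inl hP.right_mem)), hKT hpK⟩
    ⟨hES (.inr hQ.right_mem), hKT hqK⟩ hpq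

end MaximalCyclic

end CyclicallyConnected

/-! ### Every path contains an arc -/

section PathToArc

open TopologicalSpace

theorem exists_continuous_strictMono_nonemptyCompacts (X : Type*) [MetricSpace X]
    [SeparableSpace X] [Nonempty X] :
    ∃ w : NonemptyCompacts X → ℝ, Continuous w ∧ StrictMono w := by
  let w : ℕ → NonemptyCompacts X → ℝ :=
    fun i A => (1 / 2) ^ i * -min 1 (infDist (denseSeq X i) (A : Set X))
  have w_bound : ∀ i A, ‖w i A‖ ≤ (1 / 2) ^ i := fun i A => by
    have h0 : 0 ≤ min 1 (infDist (denseSeq X i) (A : Set X)) := le_min zero_le_one infDist_nonneg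
    rw [norm_mul, norm_neg, Real.norm_of_nonneg h0, Real.norm_of_nonneg (by positivity)]
    exact mul_le_of_le_one_right (by positivity) (min_le_left _ _)
  have w_summable : ∀ A, Summable fun i => w i A := fun A =>
    summable_geometric_two.of_norm_bounded fun i => w_bound i A
  have w_mono : ∀ i, Monotone (w i) := fun i A B hAB =>
    mul_le_mul_of_nonneg_left (neg_le_neg (min_le_min_left 1
      (infDist_le_infDist_of_subset hAB A.nonempty))) (by positivity)
  refine ⟨fun A => ∑' i, w i A, continuous_tsum (fun i => ?_) summable_geometric_two w_bound,
    fun A B hAB => ?_⟩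
  · have := (lipschitz_infDist_set (denseSeq X i)).continuous
    fun_prop
  obtain ⟨x, hxB, hxA⟩ := exists_of_ssubset hAB
  have hρ : 0 < infDist x (A : Set X) :=
    (A.isCompact.isClosed.notMem_iff_infDist_pos A.nonempty).1 hxA
  obtain ⟨i, hi⟩ := (denseRange_denseSeq X).exists_dist_lt x
    (ε := min 1 (infDist x (A : Set X) / 2)) (by positivity)
  have hB : infDist (denseSeq X i) (B : Set X) ≤ dist x (denseSeq X i) :=
    dist_comm x _ ▸ infDist_le_dist_of_mem hxB
  have hA : infDist x (A : Set X) ≤ infDist (denseSeq X i) (A : Set X) + dist x (denseSeq X i) :=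
    infDist_le_infDist_add_dist
  obtain ⟨hi1, hi2⟩ := lt_min_iff.1 hi
  refine (w_summable A).tsum_lt_tsum (i := i) (fun j => w_mono j hAB.le) ?_ (w_summable B)
  refine mul_lt_mul_of_pos_left (neg_lt_neg ?_) (by positivity)
  exact (min_le_right _ _).trans_lt (lt_min (hB.trans_lt hi1) (by linarith))

section CompactOrder

variable {κ X Y : Type*} [LinearOrder κ] [TopologicalSpace κ] [OrderClosedTopology κ]
  [CompactSpace κ] {f : κ → X} {a b : κ}

theorem eventually_uIcc_subset {U : Set κ} (hU : IsOpen U) (ha : a ∈ U) :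
    ∀ᶠ s in nhds a, uIcc s a ⊆ U := by
  have hclosed : IsClosed {z : κ × κ | z.2 ∉ U ∧ min z.1 a ≤ z.2 ∧ z.2 ≤ max z.1 a} :=
    (hU.isClosed_compl.preimage continuous_snd).inter
      ((isClosed_le (by fun_prop) (by fun_prop)).inter (isClosed_le (by fun_prop) (by fun_prop)))
  filter_upwards [(isClosedMap_fst_of_compactSpace _ hclosed).isOpen_compl.mem_nhds <| by
    rintro ⟨⟨s, k⟩, ⟨hkU, hk⟩, rfl⟩
    rw [min_self, max_self] at hk
    exact hkU (hk.1.antisymm hk.2 ▸ ha)] with s hs k hk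
  by_contra hkU
  exact hs ⟨(s, k), ⟨hkU, hk⟩, rfl⟩

theorem range_eq_Icc_of_covBy [LinearOrder Y] [TopologicalSpace Y] [OrderClosedTopology Y]
    {w : κ → Y} (hw : Continuous w) (hmono : Monotone w) (hcov : ∀ s t, s ⋖ t → w s = w t)
    (ha : IsBot a) (hb : IsTop b) : range w = Icc (w a) (w b) := by
  refine Subset.antisymm (range_subset_iff.2 fun t => ⟨hmono (ha t), hmono (hb t)⟩) fun y hy => ?_
  obtain ⟨s, hsy, hs_max⟩ :=
    (isClosed_Iic.preimage hw).isCompact.exists_isGreatest ⟨a, mem_Iic.2 hy.1⟩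
  obtain ⟨u, huy, hu_min⟩ :=
    (isClosed_Ici.preimage hw).isCompact.exists_isLeast ⟨b, mem_Ici.2 hy.2⟩
  refine ⟨s, hsy.antisymm ?_⟩
  rcases le_or_gt u s with hus | hsu
  · exact huy.trans (hmono hus)
  · have hsu_cov : s ⋖ u := ⟨hsu, fun k hsk hku => (le_total (w k) y).elim
      (fun h => (hs_max h).not_gt hsk) fun h => (hu_min h).not_gt hku⟩
    exact huy.trans_eq (hcov s u hsu_cov).symm

variable [TopologicalSpace X]

/-- The image of the initial segment `Iic t` under `f`, as a point of the hyperspace of nonempty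
compact sets; it increases with `t`, and its size there serves to reparametrize `f`. -/
def initialImage (hf : Continuous f) (t : κ) : NonemptyCompacts X :=
  ⟨⟨f '' Iic t, isClosed_Iic.isCompact.image hf⟩, nonempty_Iic.image f⟩

theorem mem_initialImage (hf : Continuous f) {t : κ} {x : X} :
    x ∈ initialImage hf t ↔ ∃ s ≤ t, f s = x :=
  Iff.rfl

theorem monotone_initialImage (hf : Continuous f) : Monotone (initialImage hf) :=
  fun _ _ hst => image_mono (Iic_subset_Iic.2 hst)

theorem continuous_initialImage {X : Type*} [MetricSpace X] {f : κ → X} (hf : Continuous f) :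
    Continuous (initialImage hf) := by
  refine continuous_iff_continuousAt.2 fun t => Metric.tendsto_nhds.2 fun ε hε => ?_
  filter_upwards [eventually_uIcc_subset (isOpen_ball.preimage hf)
    (mem_ball_self (x := f t) (show 0 < ε / 4 by positivity))] with s hs
  have hdist : ∀ k ∈ uIcc s t, dist (f k) (f t) < ε / 4 := hs
  rw [NonemptyCompacts.dist_eq]
  refine (hausdorffDist_le_of_mem_dist (half_pos hε).le ?_ ?_).trans_lt (half_lt_self hε)
  · rintro _ ⟨k, hks, rfl⟩
    rcases le_total k t with hkt | htk
    · exact ⟨f k, ⟨k, hkt, rfl⟩, by rw [dist_self]; positivity⟩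
    · exact ⟨f t, ⟨t, le_rfl, rfl⟩, by linarith [hdist k (mem_uIcc_of_ge htk hks)]⟩
  · rintro _ ⟨k, hkt, rfl⟩
    rcases le_total k s with hks | hsk
    · exact ⟨f k, ⟨k, hks, rfl⟩, by rw [dist_self]; positivity⟩
    · refine ⟨f s, ⟨s, le_rfl, rfl⟩, ?_⟩
      linarith [hdist k (mem_uIcc_of_le hsk hkt), hdist s left_mem_uIcc,
        dist_triangle_right (f k) (f s) (f t)]

theorem initialImage_eq_iff (hf : Continuous f) (hgap : ∀ s t, s < t → (f s = f t ↔ s ⋖ t))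
    {s t : κ} : initialImage hf s = initialImage hf t ↔ f s = f t := by
  wlog hst : s < t generalizing s t
  · rcases (not_lt.1 hst).eq_or_lt with rfl | hts
    · simp only
    · rw [eq_comm, this hts, eq_comm]
  refine ⟨fun h => ?_, fun h => (monotone_initialImage hf hst.le).antisymm ?_⟩
  · obtain ⟨k, hks, hkt⟩ :=
      (mem_initialImage hf).1 (h.ge ((mem_initialImage hf).2 ⟨t, le_rfl, rfl⟩))
    have hk_cov : k ⋖ t := (hgap k t (hks.trans_lt hst)).1 hkt
    rwa [hks.antisymm (not_lt.1 fun hlt => hk_cov.2 hlt hst)] at hkt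
  · rintro _ ⟨k, hkt, rfl⟩
    rcases (mem_Iic.1 hkt).eq_or_lt with rfl | hlt
    · exact ⟨s, le_rfl, h⟩
    · exact ⟨k, ((hgap s t hst).1 h).le_of_lt hlt, rfl⟩

end CompactOrder

theorem exists_continuousOn_factor {κ X Y : Type*} [TopologicalSpace κ] [CompactSpace κ]
    [TopologicalSpace X] [Nonempty X] [TopologicalSpace Y] [T2Space Y] {f : κ → X} {w : κ → Y}
    (hf : Continuous f) (hw : Continuous w) (hfw : ∀ s t, w s = w t ↔ f s = f t) :
    ∃ g : Y → X, ContinuousOn g (range w) ∧ InjOn g (range w) ∧ g ∘ w = f := by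
  let g : Y → X := Function.extend w f fun _ => Classical.arbitrary X
  have hg : ∀ s, g (w s) = f s := Function.FactorsThrough.extend_apply (fun s t => (hfw s t).1) _
  refine ⟨g, ?_, ?_, funext hg⟩
  · have hq : Topology.IsQuotientMap (rangeFactorization w) :=
      (hw.rangeFactorization.isClosedMap).isQuotientMap hw.rangeFactorization
        rangeFactorization_surjective
    rw [continuousOn_iff_continuous_domRestrict, hq.continuous_iff]
    exact hf.congr fun s => (hg s).symm
  · rintro _ ⟨s, rfl⟩ _ ⟨t, rfl⟩ hst
    rwa [hg, hg, ← hfw] at hst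

theorem isArcBetween_range_of_covBy {κ X : Type*} [LinearOrder κ] [TopologicalSpace κ]
    [OrderClosedTopology κ] [CompactSpace κ] [MetricSpace X] [SeparableSpace X] {f : κ → X}
    {a b : κ} (hf : Continuous f) (hgap : ∀ s t, s < t → (f s = f t ↔ s ⋖ t))
    (ha : IsBot a) (hb : IsTop b) : IsArcBetween (range f) (f a) (f b) := by
  have : Nonempty X := ⟨f a⟩
  obtain ⟨w, hw, hw_mono⟩ := exists_continuous_strictMono_nonemptyCompacts X
  have hw' : Continuous (w ∘ initialImage hf) := hw.comp (continuous_initialImage hf)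
  have hw'_mono : Monotone (w ∘ initialImage hf) := hw_mono.monotone.comp (monotone_initialImage hf)
  have hw'_eq : ∀ s t, (w ∘ initialImage hf) s = (w ∘ initialImage hf) t ↔ f s = f t := by
    intro s t
    rw [← initialImage_eq_iff hf hgap]
    refine ⟨fun h => ?_, congrArg w⟩
    rcases le_total s t with hst | hts
    · exact (monotone_initialImage hf hst).eq_of_not_lt fun hlt => (hw_mono hlt).ne h
    · exact ((monotone_initialImage hf hts).eq_of_not_lt fun hlt => (hw_mono hlt).ne' h).symm
  have hrange := range_eq_Icc_of_covBy hw' hw'_mono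
    (fun s t hst => (hw'_eq s t).2 ((hgap s t hst.lt).2 hst)) ha hb
  obtain ⟨g, hg, hg_inj, hgw⟩ := exists_continuousOn_factor hf hw' hw'_eq
  have himg : g '' range (w ∘ initialImage hf) = range f := by rw [← range_comp, hgw]
  rw [hrange] at hg hg_inj himg
  exact ⟨_, _, g, hw'_mono (ha b), hg, hg_inj, congrFun hgw a, congrFun hgw b, himg⟩

section Pruning

variable {α X : Type*} [LinearOrder α] [TopologicalSpace α] {f : α → X} {K : Set α} {s t u : α}

/-- `K` is a closed set of times left over when loops are cut out of the path `f`: it contains the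
end points, and `f` takes the same value at the two ends of each gap of `K`. -/
structure IsPruning [BoundedOrder α] (f : α → X) (K : Set α) : Prop where
  isClosed : IsClosed K
  bot_mem : ⊥ ∈ K
  top_mem : ⊤ ∈ K
  eq_of_gap : ∀ s ∈ K, ∀ u ∈ K, s < u → Disjoint K (Ioo s u) → f s = f u

namespace IsPruning

variable [BoundedOrder α]

theorem univ [DenselyOrdered α] (f : α → X) : IsPruning f Set.univ where
  isClosed := isClosed_univ
  bot_mem := mem_univ _
  top_mem := mem_univ _
  eq_of_gap s _ u _ hsu hgap := by
    rw [univ_disjoint] at hgap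
    exact ((nonempty_Ioo.2 hsu).ne_empty hgap).elim

theorem diff_Ioo [OrderClosedTopology α] (hK : IsPruning f K) (hs : s ∈ K) (hu : u ∈ K)
    (hsu : f s = f u) : IsPruning f (K \ Ioo s u) where
  isClosed := hK.isClosed.sdiff isOpen_Ioo
  bot_mem := ⟨hK.bot_mem, fun h => not_lt_bot h.1⟩
  top_mem := ⟨hK.top_mem, fun h => not_top_lt h.2⟩
  eq_of_gap a ha b hb hab hgap := by
    by_cases hKab : Disjoint K (Ioo a b)
    · exact hK.eq_of_gap a ha.1 b hb.1 hab hKab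
    obtain ⟨k, hkK, hk⟩ := not_disjoint_iff.1 hKab
    have hksu : k ∈ Ioo s u := by
      by_contra hk'
      exact disjoint_left.1 hgap ⟨hkK, hk'⟩ hk
    have has : a ≤ s := not_lt.1 fun h => ha.2 ⟨h, hk.1.trans hksu.2⟩
    have hub : u ≤ b := not_lt.1 fun h => hb.2 ⟨hksu.1.trans hk.2, h⟩
    have hsa : s ≤ a := not_lt.1 fun h =>
      disjoint_left.1 hgap ⟨hs, fun hs' => hs'.1.false⟩ ⟨h, hksu.1.trans hk.2⟩
    have hbu : b ≤ u := not_lt.1 fun h =>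
      disjoint_left.1 hgap ⟨hu, fun hu' => hu'.2.false⟩ ⟨hk.1.trans hksu.2, h⟩
    rwa [has.antisymm hsa, hbu.antisymm hub]

variable [OrderClosedTopology α] [CompactSpace α]

theorem exists_eq_of_mem_Icc (hK : IsPruning f K) (hs : s ∈ K) (hu : u ∈ K) (ht : t ∈ Icc s u) :
    ∃ a ∈ K ∩ Icc s t, ∃ b ∈ K ∩ Icc t u, f a = f b := by
  obtain ⟨a, ha, ha_max⟩ := (hK.isClosed.inter isClosed_Icc).isCompact.exists_isGreatest
    ⟨s, hs, left_mem_Icc.2 ht.1⟩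
  obtain ⟨b, hb, hb_min⟩ := (hK.isClosed.inter isClosed_Icc).isCompact.exists_isLeast
    ⟨u, hu, right_mem_Icc.2 ht.2⟩
  refine ⟨a, ha, b, hb, ?_⟩
  rcases (ha.2.2.trans hb.2.1).eq_or_lt with rfl | hab
  · rfl
  · refine hK.eq_of_gap a ha.1 b hb.1 hab (disjoint_left.2 fun k hk hkab => ?_)
    rcases le_total k t with hkt | htk
    · exact (ha_max ⟨hk, ha.2.1.trans hkab.1.le, hkt⟩).not_gt hkab.1
    · exact (hb_min ⟨hk, htk, hkab.2.le.trans hb.2.2⟩).not_gt hkab.2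

variable [DenselyOrdered α] [TopologicalSpace X] [T2Space X]

theorem sInter {c : Set (Set α)} (hf : Continuous f) (hc : ∀ K ∈ c, IsPruning f K)
    (hchain : IsChain (· ⊆ ·) c) (hne : c.Nonempty) : IsPruning f (⋂₀ c) where
  isClosed := isClosed_sInter fun K hK => (hc K hK).isClosed
  bot_mem K hK := (hc K hK).bot_mem
  top_mem K hK := (hc K hK).top_mem
  eq_of_gap s hs u hu hsu hgap := by
    obtain ⟨t, hst, htu⟩ := exists_between hsu
    let M : c → Set (α × α) := fun K =>
      ((K.1 ∩ Icc s t) ×ˢ (K.1 ∩ Icc t u)) ∩ {z | f z.1 = f z.2}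
    have M_closed : ∀ K, IsClosed (M K) := fun K =>
      (((hc K K.2).isClosed.inter isClosed_Icc).prod
        ((hc K K.2).isClosed.inter isClosed_Icc)).inter (isClosed_eq (by fun_prop) (by fun_prop))
    have M_nonempty : ∀ K, (M K).Nonempty := fun K =>
      let ⟨a, ha, b, hb, hab⟩ := (hc K K.2).exists_eq_of_mem_Icc (hs K K.2) (hu K K.2)
        ⟨hst.le, htu.le⟩
      ⟨(a, b), ⟨ha, hb⟩, hab⟩
    have M_mono : Monotone M := fun K L hKL => inter_subset_inter_left _
      (prod_mono (inter_subset_inter_left _ hKL) (inter_subset_inter_left _ hKL))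
    have M_directed : Directed (· ⊇ ·) M := fun K L => (hchain.total K.2 L.2).elim
      (fun h => ⟨K, Subset.rfl, M_mono h⟩) fun h => ⟨L, M_mono h, Subset.rfl⟩
    have : Nonempty c := hne.to_subtype
    obtain ⟨⟨a, b⟩, hab⟩ := IsCompact.nonempty_iInter_of_directed_nonempty_isCompact_isClosed M
      M_directed M_nonempty (fun K => (M_closed K).isCompact) M_closed
    have hmem : ∀ K (hK : K ∈ c), (a, b) ∈ M ⟨K, hK⟩ := fun K hK => mem_iInter.1 hab ⟨K, hK⟩
    obtain ⟨K, hK⟩ := hne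
    obtain ⟨⟨⟨-, ha⟩, -, hb⟩, hfab⟩ := hmem K hK
    have has : a ≤ s := not_lt.1 fun h => disjoint_left.1 hgap
      (fun K hK => (hmem K hK).1.1.1) ⟨h, ha.2.trans_lt htu⟩
    have hub : u ≤ b := not_lt.1 fun h => disjoint_left.1 hgap
      (fun K hK => (hmem K hK).1.2.1) ⟨hst.trans_le hb.1, h⟩
    rwa [← has.antisymm ha.1, ← hb.2.antisymm hub]

theorem exists_disjoint_of_eq (hf : Continuous f) :
    ∃ K, IsPruning f K ∧ ∀ s ∈ K, ∀ u ∈ K, f s = f u → Disjoint K (Ioo s u) := by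
  obtain ⟨K, -, hK⟩ := zorn_superset_nonempty {K | IsPruning f K}
    (fun c hc hchain hne => ⟨⋂₀ c, sInter hf hc hchain hne, fun K hK => sInter_subset_of_mem hK⟩)
    Set.univ (univ f)
  refine ⟨K, hK.prop, fun s hs u hu hsu => disjoint_left.2 fun k hk => ?_⟩
  exact (hK.le_of_le (hK.prop.diff_Ioo hs hu hsu) sdiff_subset hk).2

end IsPruning

theorem exists_arc_subset_range {α X : Type*} [LinearOrder α] [TopologicalSpace α]
    [OrderClosedTopology α] [BoundedOrder α] [CompactSpace α] [DenselyOrdered α] [MetricSpace X]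
    [SeparableSpace X] {f : α → X} (hf : Continuous f) :
    ∃ A ⊆ range f, IsArcBetween A (f ⊥) (f ⊤) := by
  obtain ⟨K, hK, hK_eq⟩ := IsPruning.exists_disjoint_of_eq hf
  have : CompactSpace K := isCompact_iff_compactSpace.1 hK.isClosed.isCompact
  have hgap : ∀ s t : K, s < t → (f s = f t ↔ s ⋖ t) := fun s t hst =>
    ⟨fun h => ⟨hst, fun k hsk hkt => disjoint_left.1 (hK_eq s s.2 t t.2 h) k.2 ⟨hsk, hkt⟩⟩,
      fun h => hK.eq_of_gap s s.2 t t.2 hst <| disjoint_left.2 fun k hk hkst =>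
        h.2 (c := ⟨k, hk⟩) hkst.1 hkst.2⟩
  exact ⟨range (f ∘ Subtype.val), range_comp_subset_range _ _,
    isArcBetween_range_of_covBy (a := ⟨⊥, hK.bot_mem⟩) (b := ⟨⊤, hK.top_mem⟩)
      (hf.comp continuous_subtype_val) hgap (fun t => bot_le (a := t.1)) fun t => le_top (a := t.1)⟩

end Pruning

end PathToArc

/-! ### Uniform local arcwise connectedness -/

section AlmostContinuous

open Topology

variable {α X : Type*} [TopologicalSpace α] [MetricSpace X] {δ ε : ℝ} {f g : α → X} {s t : Set α}

/-- Continuity of `f` on `s` up to jumps smaller than `δ`; a uniform limit of such functions with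
`δ → 0` is continuous. -/
def AlmostContinuousOn (δ : ℝ) (f : α → X) (s : Set α) : Prop :=
  ∀ a ∈ s, ∀ᶠ b in 𝓝[s] a, dist (f b) (f a) < δ

theorem AlmostContinuousOn.congr (hf : AlmostContinuousOn δ f s) (hgf : EqOn g f s) :
    AlmostContinuousOn δ g s := fun a ha => by
  filter_upwards [hf a ha, self_mem_nhdsWithin] with b hb hbs
  rwa [hgf ha, hgf hbs]

theorem AlmostContinuousOn.union_of_isClosed (hs : AlmostContinuousOn δ f s)
    (ht : AlmostContinuousOn δ f t) (hs_closed : IsClosed s) (ht_closed : IsClosed t) :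
    AlmostContinuousOn δ f (s ∪ t) := by
  have near : ∀ {r}, AlmostContinuousOn δ f r → IsClosed r → ∀ a,
      ∀ᶠ b in 𝓝[r] a, dist (f b) (f a) < δ := by
    intro r hr hr_closed a
    by_cases ha : a ∈ r
    · exact hr a ha
    · rw [notMem_closure_iff_nhdsWithin_eq_bot.1 (hr_closed.closure_eq.symm ▸ ha)]
      exact eventually_bot
  intro a _
  rw [nhdsWithin_union, eventually_sup]
  exact ⟨near hs hs_closed a, near ht ht_closed a⟩

theorem almostContinuousOn_update_const [T1Space α] [DecidableEq α] {p q : X} (hpq : dist p q < δ)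
    (c : α) (s : Set α) : AlmostContinuousOn δ (Function.update (fun _ => p) c q) s := by
  have hδ : 0 < δ := dist_nonneg.trans_lt hpq
  intro a _
  rcases eq_or_ne a c with rfl | hac
  · refine .of_forall fun b => ?_
    rw [Function.update_self, Function.update_apply]
    split_ifs
    exacts [dist_self q ▸ hδ, hpq]
  · filter_upwards [nhdsWithin_le_nhds (isOpen_ne.mem_nhds hac)] with b hb
    rwa [Function.update_of_ne hb, Function.update_of_ne hac, dist_self]

theorem continuous_of_forall_exists_almostContinuousOn
    (h : ∀ ε > 0, ∃ g, AlmostContinuousOn ε g univ ∧ ∀ a, dist (g a) (f a) ≤ ε) :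
    Continuous f := by
  refine continuous_iff_continuousAt.2 fun a => Metric.tendsto_nhds.2 fun ε hε => ?_
  obtain ⟨g, hg, hgf⟩ := h (ε / 3) (by positivity)
  have hnear := hg a (mem_univ a)
  rw [nhdsWithin_univ] at hnear
  filter_upwards [hnear] with b hb
  have htri := dist_triangle4 (f b) (g b) (g a) (f a)
  rw [dist_comm (f b) (g b)] at htri
  linarith [hgf a, hgf b]

theorem exists_continuous_of_dist_le_geometric [CompleteSpace X] {F : ℕ → α → X} {δ : ℕ → ℝ}
    {r : ℝ} (hF : ∀ n, AlmostContinuousOn (δ n) (F n) univ) (hδ : Tendsto δ atTop (𝓝 0))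
    (hdist : ∀ n a, dist (F n a) (F (n + 1) a) ≤ r / 2 / 2 ^ n) :
    ∃ g : α → X, Continuous g ∧ ∀ a, Tendsto (F · a) atTop (𝓝 (g a)) := by
  choose g hg using fun a =>
    cauchySeq_tendsto_of_complete (cauchySeq_of_le_geometric_two (hdist · a))
  refine ⟨g, continuous_of_forall_exists_almostContinuousOn fun ε hε => ?_, hg⟩
  have hr : Tendsto (fun n : ℕ => r / 2 ^ n) atTop (𝓝 0) :=
    tendsto_const_nhds.div_atTop (tendsto_pow_atTop_atTop_of_one_lt one_lt_two)
  obtain ⟨n, hδn, hrn⟩ := ((hδ.eventually_lt_const hε).and (hr.eventually_lt_const hε)).exists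
  exact ⟨F n, fun a ha => (hF n a ha).mono fun b hb => hb.trans hδn, fun a =>
    (dist_le_of_le_geometric_two_of_tendsto (hdist · a) (hg a) n).trans hrn.le⟩

section Interval

variable [LinearOrder α] [OrderClosedTopology α] {u v w : α}

theorem exists_almostContinuousOn_concat (huv : u ≤ v) (hvw : v ≤ w)
    (hf : AlmostContinuousOn δ f (Icc u v)) (hg : AlmostContinuousOn δ g (Icc v w))
    (hfg : f v = g v) :
    ∃ h : α → X, AlmostContinuousOn δ h (Icc u w) ∧ EqOn h f (Icc u v) ∧ EqOn h g (Icc v w) := by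
  obtain ⟨h, h_left, h_right⟩ := exists_eqOn_Iic_Ici hfg
  replace h_left : EqOn h f (Icc u v) := h_left.mono Icc_subset_Iic_self
  replace h_right : EqOn h g (Icc v w) := h_right.mono Icc_subset_Ici_self
  refine ⟨h, ?_, h_left, h_right⟩
  rw [← Icc_union_Icc_eq_Icc huv hvw]
  exact (hf.congr h_left).union_of_isClosed (hg.congr h_right) isClosed_Icc isClosed_Icc

theorem exists_almostContinuousOn_mapsTo_of_dist_lt {C : Set X} {p q : X} (hp : p ∈ C)
    (hq : q ∈ C) (hpq : dist p q < δ) (huv : u < v) :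
    ∃ f : α → X, AlmostContinuousOn δ f (Icc u v) ∧ MapsTo f (Icc u v) C ∧ f u = p ∧ f v = q := by
  classical
  refine ⟨Function.update (fun _ => p) v q, almostContinuousOn_update_const hpq v _, ?_,
    Function.update_of_ne huv.ne .., Function.update_self ..⟩
  intro a _
  rw [Function.update_apply]
  split_ifs <;> assumption

theorem exists_almostContinuousOn_mapsTo [DenselyOrdered α] {C : Set X} (hC : IsPreconnected C)
    (hδ : 0 < δ) {x y : X} (hx : x ∈ C) (hy : y ∈ C) (huv : u < v) :
    ∃ f : α → X, AlmostContinuousOn δ f (Icc u v) ∧ MapsTo f (Icc u v) C ∧ f u = x ∧ f v = y := by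
  refine hC.induction₂' (fun x y => ∀ u v : α, u < v → ∃ f : α → X,
    AlmostContinuousOn δ f (Icc u v) ∧ MapsTo f (Icc u v) C ∧ f u = x ∧ f v = y)
    (fun p hp => ?_) (fun p q r _ _ _ hpq hqr u w huw => ?_) hx hy u v huv
  · filter_upwards [self_mem_nhdsWithin, mem_nhdsWithin_of_mem_nhds (ball_mem_nhds p hδ)]
      with q hq hqp
    exact ⟨fun u v => exists_almostContinuousOn_mapsTo_of_dist_lt hp hq (mem_ball'.1 hqp),
      fun u v => exists_almostContinuousOn_mapsTo_of_dist_lt hq hp hqp⟩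
  · obtain ⟨v, huv, hvw⟩ := exists_between huw
    obtain ⟨f, hf, hfC, hfu, hfv⟩ := hpq u v huv
    obtain ⟨g, hg, hgC, hgv, hgw⟩ := hqr v w hvw
    obtain ⟨h, hh, h_left, h_right⟩ :=
      exists_almostContinuousOn_concat huv.le hvw.le hf hg (hfv.trans hgv.symm)
    refine ⟨h, hh, ?_, (h_left (left_mem_Icc.2 huv.le)).trans hfu,
      (h_right (right_mem_Icc.2 hvw.le)).trans hgw⟩
    rw [← Icc_union_Icc_eq_Icc huv.le hvw.le, mapsTo_union]
    exact ⟨hfC.congr h_left.symm, hgC.congr h_right.symm⟩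

/-- One step in the approximation of a path: `g` is continuous on `[u, v]` up to jumps
smaller than `δ`, stays within `ε` of `f` there, and has the same values as `f` at `u` and `v`. -/
structure IsRefinementOn (δ ε : ℝ) (f g : α → X) (u v : α) : Prop where
  almostContinuousOn : AlmostContinuousOn δ g (Icc u v)
  dist_le : ∀ a ∈ Icc u v, dist (f a) (g a) ≤ ε
  left_eq : g u = f u
  right_eq : g v = f v

theorem IsRefinementOn.exists_concat {g₁ g₂ : α → X} (h₁ : IsRefinementOn δ ε f g₁ u v)
    (h₂ : IsRefinementOn δ ε f g₂ v w) (huv : u ≤ v) (hvw : v ≤ w) :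
    ∃ g, IsRefinementOn δ ε f g u w := by
  obtain ⟨g, hg, h_left, h_right⟩ := exists_almostContinuousOn_concat huv hvw
    h₁.almostContinuousOn h₂.almostContinuousOn (h₁.right_eq.trans h₂.left_eq.symm)
  refine ⟨g, hg, ?_, (h_left (left_mem_Icc.2 huv)).trans h₁.left_eq,
    (h_right (right_mem_Icc.2 hvw)).trans h₂.right_eq⟩
  rw [← Icc_union_Icc_eq_Icc huv hvw]
  rintro a (ha | ha)
  · exact (h_left ha).symm ▸ h₁.dist_le a ha
  · exact (h_right ha).symm ▸ h₂.dist_le a ha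

end Interval

theorem isRefinementOn_self_of_le [LinearOrder α] [OrderClosedTopology α] {u v : α} (hδ : 0 < δ)
    (hε : 0 ≤ ε) (hvu : v ≤ u) (f : α → X) : IsRefinementOn δ ε f f u v where
  almostContinuousOn a ha := by
    filter_upwards [self_mem_nhdsWithin] with b hb
    have hab : b = a := subsingleton_Icc_of_ge hvu hb ha
    rwa [hab, dist_self]
  dist_le a _ := by rwa [dist_self]
  left_eq := rfl
  right_eq := rfl

theorem exists_pos_forall_dist_lt_isPreconnected [CompactSpace X] [LocallyConnectedSpace X]
    (hε : 0 < ε) : ∃ δ > 0, ∀ x y : X, dist x y < δ →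
      ∃ C ⊆ ball x ε, IsPreconnected C ∧ x ∈ C ∧ y ∈ C := by
  have hlocal := fun z : X => locallyConnectedSpace_iff_subsets_isOpen_isConnected.1 ‹_› z
    (ball z (ε / 2)) (ball_mem_nhds z (half_pos hε))
  choose V hV_ball hV_open hzV hV_conn using hlocal
  obtain ⟨δ, hδ, hcover⟩ := lebesgue_number_lemma_of_metric isCompact_univ hV_open
    fun z _ => mem_iUnion.2 ⟨z, hzV z⟩
  refine ⟨δ, hδ, fun x y hxy => ?_⟩
  obtain ⟨z, hz⟩ := hcover x (mem_univ x)
  have hx : x ∈ V z := hz (mem_ball_self hδ)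
  refine ⟨V z, fun w hw => mem_ball.2 ?_, (hV_conn z).isPreconnected, hx, hz (mem_ball'.2 hxy)⟩
  linarith [dist_triangle_right w x z, mem_ball.1 (hV_ball z hw), mem_ball.1 (hV_ball z hx)]

theorem AlmostContinuousOn.exists_partition {f : unitInterval → X}
    (hf : AlmostContinuousOn δ f univ) :
    ∃ t : ℕ → unitInterval, t 0 = 0 ∧ Monotone t ∧ (∃ n, t n = 1) ∧
      ∀ n, ∀ s ∈ Icc (t n) (t (n + 1)), dist (f (t n)) (f s) < 2 * δ := by
  have hcover : univ ⊆ ⋃ a, interior {b | dist (f b) (f a) < δ} := fun a _ => by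
    have hnear := hf a (mem_univ a)
    rw [nhdsWithin_univ] at hnear
    exact mem_iUnion.2 ⟨a, mem_interior_iff_mem_nhds.2 hnear⟩
  obtain ⟨t, ht0, ht_mono, ⟨n, hn⟩, ht⟩ :=
    exists_monotone_Icc_subset_open_cover_unitInterval (fun _ => isOpen_interior) hcover
  refine ⟨t, ht0, ht_mono, ⟨n, hn n le_rfl⟩, fun n s hs => ?_⟩
  obtain ⟨a, ha⟩ := ht n
  have hnear : ∀ b ∈ Icc (t n) (t (n + 1)), dist (f b) (f a) < δ := ha.trans interior_subset
  linarith [dist_triangle_right (f (t n)) (f s) (f a), hnear s hs,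
    hnear (t n) (left_mem_Icc.2 (ht_mono n.le_succ))]

theorem AlmostContinuousOn.exists_isRefinementOn {f : unitInterval → X} {δ' : ℝ}
    (hδ' : 0 < δ') (hε : 0 < ε) (hδε : 2 * δ ≤ ε)
    (hconn : ∀ x y : X, dist x y < 2 * δ → ∃ C ⊆ ball x ε, IsPreconnected C ∧ x ∈ C ∧ y ∈ C)
    (hf : AlmostContinuousOn δ f univ) : ∃ g, IsRefinementOn δ' (2 * ε) f g 0 1 := by
  obtain ⟨t, ht0, ht_mono, ⟨N, htN⟩, ht⟩ := hf.exists_partition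
  suffices ∀ n, ∃ g, IsRefinementOn δ' (2 * ε) f g 0 (t n) from htN ▸ this N
  intro n
  induction n with
  | zero => exact ⟨f, isRefinementOn_self_of_le hδ' (by positivity) ht0.le f⟩
  | succ n ih =>
    obtain ⟨g₁, hg₁⟩ := ih
    have hle : t n ≤ t (n + 1) := ht_mono n.le_succ
    suffices ∃ g, IsRefinementOn δ' (2 * ε) f g (t n) (t (n + 1)) by
      obtain ⟨g₂, hg₂⟩ := this
      exact hg₁.exists_concat hg₂ (ht0 ▸ ht_mono n.zero_le) hle
    rcases hle.eq_or_lt with heq | hlt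
    · exact ⟨f, isRefinementOn_self_of_le hδ' (by positivity) heq.ge f⟩
    obtain ⟨C, hC_ball, hC, hx, hy⟩ := hconn _ _ (ht n _ (right_mem_Icc.2 hle))
    obtain ⟨g, hg, hgC, hgu, hgv⟩ := exists_almostContinuousOn_mapsTo hC hδ' hx hy hlt
    refine ⟨g, hg, fun s hs => ?_, hgu, hgv⟩
    linarith [dist_triangle_left (f s) (g s) (f (t n)), ht n s hs, mem_ball'.1 (hC_ball (hgC hs))]

theorem exists_pos_forall_exists_isRefinementOn (X : Type*) [MetricSpace X] [CompactSpace X]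
    [LocallyConnectedSpace X] (hε : 0 < ε) :
    ∃ δ, 0 < δ ∧ δ ≤ ε ∧ ∀ δ' > 0, ∀ f : unitInterval → X, AlmostContinuousOn δ f univ →
      ∃ g, IsRefinementOn δ' ε f g 0 1 := by
  obtain ⟨δ, hδ, hconn⟩ := exists_pos_forall_dist_lt_isPreconnected (X := X) (half_pos hε)
  refine ⟨min (δ / 2) (ε / 4), by positivity, (min_le_right _ _).trans (by linarith),
    fun δ' hδ' f hf => ?_⟩
  obtain ⟨g, hg⟩ := hf.exists_isRefinementOn hδ' (half_pos hε)
    (by linarith [min_le_right (δ / 2) (ε / 4)])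
    fun x y hxy => hconn x y (hxy.trans_le (by linarith [min_le_left (δ / 2) (ε / 4)]))
  exact ⟨g, by rwa [mul_div_cancel₀ ε two_ne_zero] at hg⟩

theorem exists_pos_forall_exists_continuous_dist_le (X : Type*) [MetricSpace X] [CompactSpace X]
    [LocallyConnectedSpace X] (hε : 0 < ε) :
    ∃ δ, 0 < δ ∧ δ ≤ ε ∧ ∀ f : unitInterval → X, AlmostContinuousOn δ f univ →
      ∃ g, Continuous g ∧ g 0 = f 0 ∧ g 1 = f 1 ∧ ∀ t, dist (f t) (g t) ≤ ε := by
  choose δ hδ hδ_le hrefine using fun n : ℕ =>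
    exists_pos_forall_exists_isRefinementOn X (ε := ε / 2 / 2 ^ n) (by positivity)
  refine ⟨δ 0, hδ 0, (hδ_le 0).trans (by rw [pow_zero]; linarith), fun f hf => ?_⟩
  choose! next hnext using fun n => hrefine n (δ (n + 1)) (hδ (n + 1))
  let F : ℕ → unitInterval → X := fun n => Nat.rec f next n
  have hIcc : Icc (0 : unitInterval) 1 = univ := Icc_bot_top
  have hF : ∀ n, AlmostContinuousOn (δ n) (F n) univ := fun n => by
    induction n with
    | zero => exact hf
    | succ n ih => exact hIcc ▸ (hnext n _ ih).almostContinuousOn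
  have hstep : ∀ n, IsRefinementOn (δ (n + 1)) (ε / 2 / 2 ^ n) (F n) (F (n + 1)) 0 1 :=
    fun n => hnext n _ (hF n)
  have hdist : ∀ n t, dist (F n t) (F (n + 1) t) ≤ ε / 2 / 2 ^ n := fun n t =>
    (hstep n).dist_le t (hIcc.ge (mem_univ t))
  have hδ_lim : Tendsto δ atTop (𝓝 0) := squeeze_zero (fun n => (hδ n).le) hδ_le
    (tendsto_const_nhds.div_atTop (tendsto_pow_atTop_atTop_of_one_lt one_lt_two))
  obtain ⟨g, hg, hlim⟩ := exists_continuous_of_dist_le_geometric hF hδ_lim hdist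
  have hend : ∀ t, (∀ n, F (n + 1) t = F n t) → g t = f t := fun t ht => by
    have hconst : ∀ n, F n t = f t := fun n => by
      induction n with
      | zero => rfl
      | succ n ih => exact (ht n).trans ih
    exact tendsto_nhds_unique (hlim t) (tendsto_const_nhds.congr fun n => (hconst n).symm)
  exact ⟨g, hg, hend 0 fun n => (hstep n).left_eq, hend 1 fun n => (hstep n).right_eq,
    fun t => dist_le_of_le_geometric_two_of_tendsto₀ (hdist · t) (hlim t)⟩

theorem exists_pos_forall_dist_lt_isArcBetween (X : Type*) [MetricSpace X] [CompactSpace X]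
    [LocallyConnectedSpace X] (hε : 0 < ε) :
    ∃ δ > 0, ∀ x y : X, dist x y < δ → ∃ A ⊆ ball x ε, IsArcBetween A x y := by
  classical
  obtain ⟨δ, hδ, hδε, hpath⟩ := exists_pos_forall_exists_continuous_dist_le X
    (ε := ε / 3) (by positivity)
  refine ⟨δ, hδ, fun x y hxy => ?_⟩
  let f : unitInterval → X := Function.update (fun _ => x) 1 y
  obtain ⟨g, hg, hg0, hg1, hfg⟩ := hpath f (almostContinuousOn_update_const hxy 1 univ)
  obtain ⟨A, hAg, hA⟩ := exists_arc_subset_range hg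
  have hball : range g ⊆ ball x ε := by
    rintro _ ⟨t, rfl⟩
    have hxf : dist x (f t) ≤ dist x y := by
      rcases eq_or_ne t 1 with rfl | ht
      · rw [show f 1 = y from Function.update_self ..]
      · rw [show f t = x from Function.update_of_ne ht .., dist_self]
        exact dist_nonneg
    rw [mem_ball']
    linarith [dist_triangle x (f t) (g t), hfg t]
  have hA' : IsArcBetween A (g 0) (g 1) := hA
  rw [hg0, hg1, show f 0 = x from Function.update_of_ne zero_ne_one ..,
    show f 1 = y from Function.update_self ..] at hA'
  exact ⟨A, hAg.trans hball, hA'⟩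

end AlmostContinuous

/-! ### Null sequences of maximal cyclic sets -/

theorem exists_ne_dist_lt {ι X : Type*} [Infinite ι] [PseudoMetricSpace X] [CompactSpace X]
    (z : ι → X) {δ : ℝ} (hδ : 0 < δ) : ∃ i j, i ≠ j ∧ dist (z i) (z j) < δ := by
  obtain ⟨F, -, hF, hcover⟩ := finite_cover_balls_of_compact (isCompact_univ (X := X))
    (half_pos hδ)
  have : Finite F := hF
  have hmem : ∀ i, ∃ c : F, dist (z i) c < δ / 2 := fun i => by
    simpa using hcover (mem_univ (z i))
  choose c hc using hmem
  obtain ⟨i, j, hij, hcij⟩ := Finite.exists_ne_map_eq_of_infinite c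
  refine ⟨i, j, hij, ?_⟩
  linarith [dist_triangle_right (z i) (z j) (c i), hc i, hcij ▸ hc j]

theorem exists_lt_dist_of_lt_diam {X : Type*} [PseudoMetricSpace X] {s : Set X} {r : ℝ}
    (hr : 0 ≤ r) (hs : r < diam s) : ∃ x ∈ s, ∃ y ∈ s, r < dist x y := by
  by_contra! h
  exact hs.not_ge (diam_le_of_forall_dist_le hr h)

theorem diam_maximalCyclic_tendsto_zero_general {X : Type} [MetricSpace X] [CompactSpace X]
    [LocallyConnectedSpace X] {ι : Type*} (T : ι → Set X) (hinj : Function.Injective T)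
    (hmax : ∀ i, MaximalCyclic (T i)) :
    Tendsto (fun i => diam (T i)) cofinite (nhds 0) := by
  suffices ∀ ε > 0, {i | ε < diam (T i)}.Finite by
    refine tendsto_order.2 ⟨fun a ha => .of_forall fun i => ha.trans_le diam_nonneg, fun a ha => ?_⟩
    filter_upwards [(this (a / 2) (half_pos ha)).eventually_cofinite_notMem] with i hi
    exact (le_of_not_gt hi).trans_lt (half_lt_self ha)
  intro ε hε
  by_contra hinf
  have : Infinite {i | ε < diam (T i)} := infinite_coe_iff.2 hinf
  choose x hx y hy hxy using fun i : {i | ε < diam (T i)} => exists_lt_dist_of_lt_diam hε.le i.2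
  obtain ⟨δ, hδ, harc⟩ := exists_pos_forall_dist_lt_isArcBetween X (half_pos hε)
  obtain ⟨i, j, hij, hdist⟩ := exists_ne_dist_lt (fun i => (x i, y i)) hδ
  rw [Prod.dist_eq, max_lt_iff] at hdist
  obtain ⟨A, hA_ball, hA⟩ := harc _ _ hdist.1
  obtain ⟨B, hB_ball, hB⟩ := harc _ _ hdist.2
  have hAB : Disjoint A B :=
    (ball_disjoint_ball (by linarith [hxy i])).mono hA_ball hB_ball
  have hTij : T i = T j :=
    (hmax i).eq_of_disjoint_arcs (hmax j) hA hB hAB (hx i) (hy i) (hx j) (hy j)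
  exact hij (Subtype.ext (hinj hTij))

/-- If `(T n)` is a sequence of pairwise distinct maximal cyclic subsets of a Peano
space `X`, then `diam (T n) → 0`. -/
theorem diam_maximalCyclic_tendsto_zero
    (X : Type) [MetricSpace X] [CompactSpace X] [ConnectedSpace X] [LocallyConnectedSpace X]
    (T : ℕ → Set X) (hinj : Function.Injective T) (hmax : ∀ n, MaximalCyclic (T n)) :
    Tendsto (fun n => Metric.diam (T n)) atTop (nhds 0) := by
  rw [← Nat.cofinite_eq_atTop]
  exact diam_maximalCyclic_tendsto_zero_general T hinj hmax
end
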